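/- arXiv:1504.05405 — 5 statements merged into one kernel-verified Lean document; each statement's English description precedes it below -/
import Mathlib

section
/- Criterion for existence of an open Lipschitz surface: for every d ≥ 1, α ∈ [0,1), η ∈ {−1,0,+1}^d, p ∈ [0,1], every x̄ ∈ ℤ^d and every h ∈ ℕ, one has P_p(F^{α,d}_η(x̄) − ⌊α Σ_{i=1}^d η_i x̄_i⌋ ≥ h) ≤ E_p[|𝓛^{α,d}_η(h−2)|]. In particular, if lim_{h→∞} E_p[|𝓛^{α,d}_η(h)|] = 0, then P_p(LIP^{α,d}_η) = 1. -/
open MeasureTheory Filter ENNReal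

/-- Sites of `ℤ^{d+1}`. -/
abbrev Site (d : ℕ) := Fin (d + 1) → ℤ

/-- Site-percolation configurations on `ℤ^{d+1}`: a site is open iff its value is `true`. -/
abbrev Config (d : ℕ) := Site d → Bool

/-- `P` is the i.i.d. Bernoulli(`p`) product measure on `{0,1}^ι`: it is a probability
measure whose cylinder events have the correct product probabilities. -/
def IsBernoulli {ι : Type*} (p : ℝ) (P : Measure (ι → Bool)) : Prop :=
  IsProbabilityMeasure P ∧
    ∀ (s : Finset ι) (f : ι → Bool),
      P {ω | ∀ x ∈ s, ω x = f x} =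
        ∏ x ∈ s, (if f x then ENNReal.ofReal p else ENNReal.ofReal (1 - p))

/-- A function `F : ℤ^d → ℤ` is Lipschitz: `‖x − y‖₁ = 1 → |F x − F y| ≤ 1`. -/
def IsLipschitzFn {d : ℕ} (F : (Fin d → ℤ) → ℤ) : Prop :=
  ∀ x y : Fin d → ℤ, (∑ i, |x i - y i|) = 1 → |F x - F y| ≤ 1

/-- Height `⌊α ∑ᵢ ηᵢ xᵢ⌋` of the tilted plane `L^{α,d}_η` above `x ∈ ℤ^d`. -/
noncomputable def planeHt (α : ℝ) {d : ℕ} (η x : Fin d → ℤ) : ℤ :=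
  ⌊α * ∑ i, (η i : ℝ) * (x i : ℝ)⌋

/-- `η ∈ {-1,0,1}^d`. -/
def IsSign {d : ℕ} (η : Fin d → ℤ) : Prop := ∀ i, η i = -1 ∨ η i = 0 ∨ η i = 1

/-- The event `LIP^{α,d}_η` that there is an open Lipschitz surface lying (strictly) above
the tilted plane `L^{α,d}_η`. -/
def LIP (α : ℝ) {d : ℕ} (η : Fin d → ℤ) : Set (Config d) :=
  {ω | ∃ F : (Fin d → ℤ) → ℤ, IsLipschitzFn F ∧
    ∀ x : Fin d → ℤ, ω (Fin.snoc x (F x)) = true ∧ planeHt α η x < F x}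

/-- `pc` is the critical probability `p_L(α,d,η)` of Lipschitz percolation above the tilted
plane `L^{α,d}_η`: `pc ∈ (0,1)`, for `p` below it there is `P_p`-a.s. no open Lipschitz
surface above the plane, and for `p` above it there `P_p`-a.s. is one.
(Here `P p` is the Bernoulli(`p`) product measure on `{0,1}^{ℤ^{d+1}}`.) -/
def IsCriticalProb {d : ℕ} (P : ℝ → Measure (Config d)) (α : ℝ) (η : Fin d → ℤ)
    (pc : ℝ) : Prop :=
  pc ∈ Set.Ioo (0 : ℝ) 1 ∧
    (∀ p, 0 ≤ p → p < pc → P p (LIP α η) = 0) ∧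
    (∀ p, pc < p → p ≤ 1 → P p (LIP α η) = 1)

/-- The canonical direction vector `η ∈ {-1,0,1}^d` with `k` entries equal to `1`; the
critical probability `p_L(α,d,η)` depends on `η` only through `k = ‖η‖₁`, and
`p_L(α,d,k)` denotes the common value. -/
def etaK (d k : ℕ) : Fin d → ℤ := fun i => if (i : ℕ) < k then 1 else 0

/-- The standard basis vector `e_i` of `ℤ^{d+1}`. -/
def eVec {d : ℕ} (i : Fin (d + 1)) : Site d := Pi.single i 1

/-- There is an admissible λ-path from `x` to `y` with respect to the configuration `ω`:
a finite sequence of distinct sites starting at `x` and ending at `y` whose steps lie in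
`{e_{d+1}} ∪ {−e_{d+1} ± e_j : j = 1,…,d}`, and such that the target of every
upward step (a step `e_{d+1}`) is a closed site. -/
def AdmissiblePath {d : ℕ} (ω : Config d) (x y : Site d) : Prop :=
  ∃ (n : ℕ) (u : ℕ → Site d), u 0 = x ∧ u n = y ∧
    (∀ i ≤ n, ∀ j ≤ n, i ≠ j → u i ≠ u j) ∧
    ∀ i < n,
      (u (i + 1) - u i = eVec (Fin.last d) ∨
        ∃ j : Fin d, u (i + 1) - u i = eVec j.castSucc - eVec (Fin.last d) ∨
          u (i + 1) - u i = -eVec j.castSucc - eVec (Fin.last d)) ∧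
      (u (i + 1) - u i = eVec (Fin.last d) → ω (u (i + 1)) = false)

/-- The tilted plane `L^{α,d}_η ⊆ ℤ^{d+1}`. -/
def tiltedPlane (α : ℝ) {d : ℕ} (η : Fin d → ℤ) : Set (Site d) :=
  {y | y (Fin.last d) = planeHt α η fun i => y i.castSucc}

/-- `F^{α,d}_η(x̄) = sup{n ∈ ℤ | ∃ y ∈ L^{α,d}_η, y ↣ (x̄,n)} + 1`, as an extended real. -/
noncomputable def Fheight (α : ℝ) {d : ℕ} (η : Fin d → ℤ) (ω : Config d)
    (x : Fin d → ℤ) : EReal :=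
  sSup {r : EReal | ∃ n : ℤ, r = ((n : ℝ) : EReal) ∧
    ∃ y ∈ tiltedPlane α η, AdmissiblePath ω y (Fin.snoc x n)} + 1

/-- `𝓛^{α,d}_η(h)`: the (random) set of sites of the shifted plane `L^{α,d}_η + h e_{d+1}`
reachable from the origin by an admissible λ-path. -/
def reachSet (α : ℝ) {d : ℕ} (η : Fin d → ℤ) (h : ℤ) (ω : Config d) : Set (Site d) :=
  {y | y (Fin.last d) = planeHt α η (fun i => y i.castSucc) + h ∧ AdmissiblePath ω 0 y}

/-!
The set of heights above `x̄` that are reached from the tilted plane contains the plane itself,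
passes to neighbouring columns with a loss of at most one, and, at its maximum, forces the next
site up to be open. So whenever all these sets are bounded, their maxima plus one form an open
Lipschitz surface.

To bound the probability that a site `w` at height `m` above the plane is reached from it, follow
such a path backwards from `w` to its starting point. The height of the displacement `w - z` above
the plane starts at `0`, rises by at most one per step and, height being subadditive, ends at `m` or
more. Hence it takes every value `0 ≤ k ≤ m`; the values `k < 0` are attained at sites `z` from
which downward steps alone lead to `w`. A union bound over the sites `z` realising `k`, combined
with translation invariance, gives the expected number of sites of `L^{α,d}_η(k)` reached from
the origin.
-/

section ReflTransGen

open Relation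

variable {β : Type*} {r : β → β → Prop}

/-- Appending a step to a self-avoiding path, and cutting off the loop if one is closed. -/
lemma exists_selfAvoiding_path_of_reflTransGen {x y : β} (h : ReflTransGen r x y) :
    ∃ (n : ℕ) (u : ℕ → β), u 0 = x ∧ u n = y ∧ (∀ i ≤ n, ∀ j ≤ n, i ≠ j → u i ≠ u j) ∧
      ∀ i < n, r (u i) (u (i + 1)) := by
  induction h with
  | refl => exact ⟨0, fun _ => x, rfl, rfl, by omega, by omega⟩
  | @tail y z _ hyz ih =>
    obtain ⟨n, u, hx, rfl, hinj, hstep⟩ := ih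
    by_cases hz : ∃ k ≤ n, u k = z
    · obtain ⟨k, hk, rfl⟩ := hz
      exact ⟨k, u, hx, rfl, fun i hi j hj => hinj i (hi.trans hk) j (hj.trans hk),
        fun i hi => hstep i (hi.trans_le hk)⟩
    · refine ⟨n + 1, Function.update u (n + 1) z, ?_, ?_, ?_, ?_⟩ <;> grind

lemma reflTransGen_iff_exists_selfAvoiding_path {x y : β} :
    ReflTransGen r x y ↔
      ∃ (n : ℕ) (u : ℕ → β), u 0 = x ∧ u n = y ∧ (∀ i ≤ n, ∀ j ≤ n, i ≠ j → u i ≠ u j) ∧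
        ∀ i < n, r (u i) (u (i + 1)) := by
  refine ⟨exists_selfAvoiding_path_of_reflTransGen, ?_⟩
  rintro ⟨n, u, rfl, rfl, -, hstep⟩
  exact (reflTransGen_of_succ_of_le (fun i j => r (u i) (u j)) (fun i hi => hstep i hi.2)
    (Nat.zero_le n)).lift u fun _ _ hij => hij

lemma reflTransGen_iff_exists_isChain {x y : β} :
    ReflTransGen r x y ↔
      ∃ l : List β, (x :: l).IsChain r ∧ (x :: l).getLast (List.cons_ne_nil x l) = y :=
  ⟨List.exists_isChain_cons_of_relationReflTransGen,
    fun ⟨l, hl, hy⟩ => List.relationReflTransGen_of_exists_isChain_cons l hl hy⟩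

variable {Ω : Type*} [MeasurableSpace Ω] {r : Ω → β → β → Prop}

lemma measurableSet_isChain (hr : ∀ x y, MeasurableSet {ω | r ω x y}) (l : List β) :
    MeasurableSet {ω | l.IsChain (r ω)} := by
  induction l using List.twoStepInduction with
  | nil => simp
  | singleton x => simp
  | cons_cons x y l _ ih =>
    simp only [List.isChain_cons_cons]
    exact (hr x y).inter (ih y)

lemma measurableSet_reflTransGen [Countable β] (hr : ∀ x y, MeasurableSet {ω | r ω x y})
    (x y : β) : MeasurableSet {ω | ReflTransGen (r ω) x y} := by
  simp only [reflTransGen_iff_exists_isChain, Set.ofPred_exists]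
  exact .iUnion fun l => (measurableSet_isChain hr _).inter (.const _)

end ReflTransGen

lemma lintegral_encard_eq_tsum_measure {Ω β : Type*} [MeasurableSpace Ω] [Countable β]
    (μ : Measure Ω) {S : Ω → Set β} (hS : ∀ z, MeasurableSet {ω | z ∈ S ω}) :
    ∫⁻ ω, ((S ω).encard : ℝ≥0∞) ∂μ = ∑' z, μ {ω | z ∈ S ω} := by
  calc
    _ = ∫⁻ ω, ∑' z, {ω | z ∈ S ω}.indicator 1 ω ∂μ := by
      refine lintegral_congr fun ω => ?_
      rw [← ENNReal.tsum_set_one, tsum_subtype (S ω) fun _ => (1 : ℝ≥0∞)]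
      rfl
    _ = ∑' z, ∫⁻ ω, {ω | z ∈ S ω}.indicator 1 ω ∂μ :=
      lintegral_tsum fun z => (measurable_one.indicator (hS z)).aemeasurable
    _ = _ := tsum_congr fun z => lintegral_indicator_one (hS z)

lemma eq_single_or_eq_neg_single_of_sum_abs_eq_one {ι : Type*} [Fintype ι] [DecidableEq ι]
    {z : ι → ℤ} (hz : ∑ i, |z i| = 1) : ∃ j, z = Pi.single j 1 ∨ z = -Pi.single j 1 := by
  have hsum : (Finsupp.equivFunOnFinite.symm fun i => (z i).natAbs).sum (fun _ n => n) = 1 := by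
    zify
    simpa [Finsupp.sum_fintype] using hz
  obtain ⟨j, hj⟩ := (Finsupp.sum_eq_one_iff _).1 hsum
  have habs (i : ι) : (z i).natAbs = if i = j then 1 else 0 := by
    simpa [Finsupp.single_apply, eq_comm] using DFunLike.congr_fun hj i
  have hoff (i : ι) (hi : i ≠ j) : z i = 0 := by simpa [hi] using habs i
  refine ⟨j, (Int.natAbs_eq (z j)).imp (fun h => ?_) fun h => ?_⟩ <;>
  · rw [habs j, if_pos rfl] at h
    ext i
    obtain rfl | hi := eq_or_ne i j <;> simp [*]

section TranslationInvariance

lemma measure_ext_of_finite_cylinders {ι S : Type*} [Countable S] [Nonempty S]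
    [MeasurableSpace S] [MeasurableSingletonClass S] {P Q : Measure (ι → S)}
    [IsFiniteMeasure P] [IsFiniteMeasure Q]
    (h : ∀ (s : Finset ι) (f : ι → S), P {ω | ∀ x ∈ s, ω x = f x} = Q {ω | ∀ x ∈ s, ω x = f x}) :
    P = Q := by
  refine IsProjectiveLimit.unique (P := fun s : Finset ι => Q.map s.restrict) (fun s => ?_)
    fun _ => rfl
  refine Measure.ext_of_singleton fun g => ?_
  let f : ι → S := Function.extend Subtype.val g fun _ => Classical.arbitrary S
  have hcyl : (s.restrict : (ι → S) → s → S) ⁻¹' {g} = {ω | ∀ x ∈ s, ω x = f x} := by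
    ext ω
    simp only [Set.mem_preimage, Set.mem_singleton_iff, funext_iff, Subtype.forall,
      Finset.restrict, Set.mem_ofPred_eq]
    exact forall₂_congr fun x hx => by
      rw [← Subtype.val_injective.extend_apply g (fun _ => Classical.arbitrary S) ⟨x, hx⟩]
  rw [Measure.map_apply (Finset.measurable_restrict s) (measurableSet_singleton g),
    Measure.map_apply (Finset.measurable_restrict s) (measurableSet_singleton g), hcyl, h]

variable {ι κ : Type*} {p : ℝ}

lemma IsBernoulli.unique {P Q : Measure (ι → Bool)} (hP : IsBernoulli p P)
    (hQ : IsBernoulli p Q) : P = Q := by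
  have := hP.1
  have := hQ.1
  exact measure_ext_of_finite_cylinders fun s f => (hP.2 s f).trans (hQ.2 s f).symm

lemma measurableSet_forall_mem_finset_eq {S : Type*} [MeasurableSpace S]
    [MeasurableSingletonClass S] (s : Finset ι) (f : ι → S) :
    MeasurableSet {ω : ι → S | ∀ x ∈ s, ω x = f x} := by
  simp only [Set.ofPred_forall]
  refine s.measurableSet_biInter fun x _ => ?_
  have heval : Measurable fun ω : ι → S => ω x := measurable_pi_apply x
  exact heval (measurableSet_singleton (f x))

lemma measurable_comp_right {S : Type*} [MeasurableSpace S] (e : κ → ι) :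
    Measurable fun (ω : ι → S) => ω ∘ e :=
  measurable_pi_lambda _ fun _ => measurable_pi_apply _

lemma IsBernoulli.map_comp {P : Measure (ι → Bool)} (hP : IsBernoulli p P) (e : κ ↪ ι) :
    IsBernoulli p (P.map (· ∘ e)) := by
  have := hP.1
  refine ⟨Measure.isProbabilityMeasure_map (measurable_comp_right e).aemeasurable, fun s f => ?_⟩
  rw [Measure.map_apply (measurable_comp_right e) (measurableSet_forall_mem_finset_eq s f)]
  simpa [e.injective.extend_apply] using hP.2 (s.map e) (Function.extend e f fun _ => false)

/-- The configuration `ω` seen from the site `v`. -/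
def shift {G S : Type*} [Add G] (v : G) (ω : G → S) : G → S := fun z => ω (z + v)

/-- The law `P` of a random configuration is invariant under all translations, so that a union bound
over the starting points of paths to a fixed site counts the endpoints of paths from the origin. -/
def IsTranslationInvariant {G S : Type*} [Add G] [MeasurableSpace S]
    (P : Measure (G → S)) : Prop :=
  ∀ v : G, MeasurePreserving (shift v) P P

lemma IsBernoulli.isTranslationInvariant {G : Type*} [AddGroup G] {P : Measure (G → Bool)}
    (hP : IsBernoulli p P) : IsTranslationInvariant P := fun v =>
  ⟨measurable_comp_right (· + v), (hP.map_comp (addRightEmbedding v)).unique hP⟩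

end TranslationInvariance

section LambdaPath

/-- The displacements `±e_j - e_{d+1}` of the downward steps of a λ-path. -/
def IsDownStep {d : ℕ} (v : Site d) : Prop :=
  ∃ j : Fin d, v = eVec j.castSucc - eVec (Fin.last d) ∨
    v = -eVec j.castSucc - eVec (Fin.last d)

/-- A single admissible step of a λ-path. -/
def LambdaStep {d : ℕ} (ω : Config d) (x y : Site d) : Prop :=
  (y - x = eVec (Fin.last d) ∨ IsDownStep (y - x)) ∧ (y - x = eVec (Fin.last d) → ω y = false)

/-- The relation `x ↣ y`, with the sites along the path allowed to repeat; by
`admissiblePath_iff_reach` this makes no difference. -/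
abbrev Reach {d : ℕ} (ω : Config d) : Site d → Site d → Prop :=
  Relation.ReflTransGen (LambdaStep ω)

variable {d : ℕ} {ω : Config d}

lemma admissiblePath_iff_reach {x y : Site d} : AdmissiblePath ω x y ↔ Reach ω x y :=
  (reflTransGen_iff_exists_selfAvoiding_path (r := LambdaStep ω)).symm

lemma IsDownStep.apply_last {v : Site d} (hv : IsDownStep v) : v (Fin.last d) = -1 := by
  obtain ⟨j, rfl | rfl⟩ := hv <;> simp [eVec, (Fin.castSucc_ne_last j).symm]

lemma IsDownStep.ne_eVec_last {v : Site d} (hv : IsDownStep v) : v ≠ eVec (Fin.last d) := by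
  rintro rfl
  simpa [eVec] using hv.apply_last

lemma IsDownStep.lambdaStep {v : Site d} (hv : IsDownStep v) (x : Site d) :
    LambdaStep ω x (x + v) := by
  simp [LambdaStep, hv, hv.ne_eVec_last]

lemma lambdaStep_add_eVec_last {x : Site d} (hx : ω (x + eVec (Fin.last d)) = false) :
    LambdaStep ω x (x + eVec (Fin.last d)) := by
  simp [LambdaStep, hx]

lemma reach_add_two_nsmul_eVec_last [NeZero d] (x : Site d) :
    Reach ω (x + 2 • eVec (Fin.last d)) x := by
  have hright := IsDownStep.lambdaStep (ω := ω) ⟨(0 : Fin d), Or.inl rfl⟩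
    (x + 2 • eVec (Fin.last d))
  have hleft := IsDownStep.lambdaStep (ω := ω) ⟨(0 : Fin d), Or.inr rfl⟩
    (x + 2 • eVec (Fin.last d) + (eVec (Fin.castSucc 0) - eVec (Fin.last d)))
  convert (Relation.ReflTransGen.single hright).tail hleft using 1
  abel

lemma snoc_add_eVec_last (x : Fin d → ℤ) (n : ℤ) :
    (Fin.snoc x n : Site d) + eVec (Fin.last d) = Fin.snoc x (n + 1) := by
  ext i
  cases i using Fin.lastCases <;> simp [eVec]

lemma isDownStep_snoc_sub_snoc {x y : Fin d → ℤ} (hxy : ∑ i, |y i - x i| = 1) (n : ℤ) :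
    IsDownStep ((Fin.snoc y (n - 1) : Site d) - Fin.snoc x n) := by
  obtain ⟨j, hj⟩ := eq_single_or_eq_neg_single_of_sum_abs_eq_one hxy
  refine ⟨j, hj.imp (fun h => ?_) fun h => ?_⟩ <;>
  · ext i
    cases i using Fin.lastCases with
    | last => simp [eVec, (Fin.castSucc_ne_last j).symm]
    | cast i => simpa [eVec, Pi.single_apply] using congrFun h i

lemma measurableSet_reach (x y : Site d) : MeasurableSet {ω : Config d | Reach ω x y} := by
  refine measurableSet_reflTransGen (fun x y => ?_) x y
  have hclosed : MeasurableSet {ω : Config d | ω y = false} :=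
    measurableSet_eq_fun (measurable_pi_apply y) measurable_const
  exact (MeasurableSet.const _).inter ((MeasurableSet.const _).imp hclosed)

lemma lambdaStep_shift_iff {v x y : Site d} :
    LambdaStep (shift v ω) x y ↔ LambdaStep ω (x + v) (y + v) := by
  simp [LambdaStep, shift]

lemma reach_shift_iff {v x y : Site d} :
    Reach (shift v ω) x y ↔ Reach ω (x + v) (y + v) := by
  refine ⟨fun h => h.lift (· + v) fun _ _ => lambdaStep_shift_iff.1, fun h => ?_⟩
  simpa [Function.onFun] using h.lift (p := LambdaStep (shift v ω)) (· - v)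
    fun _ _ hstep => lambdaStep_shift_iff.2 (by simpa using hstep)

lemma IsTranslationInvariant.measure_reach_eq {P : Measure (Config d)}
    (hP : IsTranslationInvariant P) (x y : Site d) :
    P {ω | Reach ω x y} = P {ω | Reach ω 0 (y - x)} := by
  rw [← (hP x).measure_preimage (measurableSet_reach 0 (y - x)).nullMeasurableSet]
  simp [Set.preimage, reach_shift_iff]

end LambdaPath

section HeightAbove

variable {d : ℕ} {ω : Config d} {α : ℝ} {η : Fin d → ℤ}

/-- Signed vertical distance from the tilted plane to the site `z`. -/
noncomputable def heightAbove (α : ℝ) {d : ℕ} (η : Fin d → ℤ) (z : Site d) : ℤ :=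
  z (Fin.last d) - planeHt α η fun i => z i.castSucc

lemma mem_tiltedPlane_iff {z : Site d} : z ∈ tiltedPlane α η ↔ heightAbove α η z = 0 :=
  sub_eq_zero.symm

lemma mem_reachSet_iff {k : ℤ} {z : Site d} :
    z ∈ reachSet α η k ω ↔ heightAbove α η z = k ∧ Reach ω 0 z := by
  rw [reachSet, Set.mem_ofPred_eq, admissiblePath_iff_reach, heightAbove, sub_eq_iff_eq_add']

lemma heightAbove_zero : heightAbove α η (0 : Site d) = 0 := by
  simp [heightAbove, planeHt]

lemma heightAbove_snoc (x : Fin d → ℤ) (n : ℤ) :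
    heightAbove α η (Fin.snoc x n) = n - planeHt α η x := by
  simp [heightAbove]

lemma heightAbove_sub_eVec_last (z : Site d) :
    heightAbove α η (z - eVec (Fin.last d)) = heightAbove α η z - 1 := by
  simp [heightAbove, eVec, sub_right_comm]

lemma planeHt_add_le (x y : Fin d → ℤ) :
    planeHt α η x + planeHt α η y ≤ planeHt α η (x + y) := by
  refine (Int.le_floor_add _ _).trans_eq ?_
  simp [planeHt, mul_add, Finset.sum_add_distrib]

lemma heightAbove_add_le (y z : Site d) :
    heightAbove α η (y + z) ≤ heightAbove α η y + heightAbove α η z := by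
  have hlast : (y + z) (Fin.last d) = y (Fin.last d) + z (Fin.last d) := rfl
  have hplane : planeHt α η (fun i => y i.castSucc) + planeHt α η (fun i => z i.castSucc) ≤
      planeHt α η fun i => (y + z) i.castSucc := planeHt_add_le _ _
  unfold heightAbove
  omega

lemma heightAbove_le_heightAbove_sub_of_mem_tiltedPlane {y : Site d} (hy : y ∈ tiltedPlane α η)
    (z : Site d) : heightAbove α η z ≤ heightAbove α η (z - y) := by
  simpa [mem_tiltedPlane_iff.1 hy] using heightAbove_add_le (α := α) (η := η) (z - y) y

lemma heightAbove_eVec_castSucc_sub (j : Fin d) :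
    heightAbove α η (eVec j.castSucc - eVec (Fin.last d)) = -1 - ⌊α * η j⌋ := by
  simp [heightAbove, planeHt, eVec, Pi.single_apply, (Fin.castSucc_ne_last j).symm]

lemma heightAbove_neg_eVec_castSucc_sub (j : Fin d) :
    heightAbove α η (-eVec j.castSucc - eVec (Fin.last d)) = -1 - ⌊-(α * η j)⌋ := by
  simp [heightAbove, planeHt, eVec, Pi.single_apply, (Fin.castSucc_ne_last j).symm]

lemma IsDownStep.heightAbove_nonpos (hslope : ∀ i, |α * η i| ≤ 1) {v : Site d}
    (hv : IsDownStep v) : heightAbove α η v ≤ 0 := by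
  obtain ⟨j, rfl | rfl⟩ := hv
  · have : -1 ≤ ⌊α * η j⌋ := Int.le_floor.2 (by simpa using (abs_le.1 (hslope j)).1)
    rw [heightAbove_eVec_castSucc_sub]
    omega
  · have : -1 ≤ ⌊-(α * η j)⌋ := Int.le_floor.2 (by simpa using (abs_le.1 (hslope j)).2)
    rw [heightAbove_neg_eVec_castSucc_sub]
    omega

lemma IsDownStep.heightAbove_add_le (hslope : ∀ i, |α * η i| ≤ 1) {v : Site d}
    (hv : IsDownStep v) (z : Site d) : heightAbove α η (z + v) ≤ heightAbove α η z :=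
  (_root_.heightAbove_add_le z v).trans (by linarith [hv.heightAbove_nonpos hslope])

lemma exists_isDownStep_heightAbove_eq_neg_one {j : Fin d} (hj : |α * η j| < 1) :
    ∃ v, IsDownStep v ∧ heightAbove α η v = -1 := by
  obtain ⟨hneg, hpos⟩ := abs_lt.1 hj
  rcases le_total 0 (α * η j) with h | h
  · refine ⟨_, ⟨j, Or.inl rfl⟩, ?_⟩
    rw [heightAbove_eVec_castSucc_sub, Int.floor_eq_zero_iff.2 ⟨h, hpos⟩, sub_zero]
  · refine ⟨_, ⟨j, Or.inr rfl⟩, ?_⟩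
    rw [heightAbove_neg_eVec_castSucc_sub,
      Int.floor_eq_zero_iff.2 ⟨by linarith, by linarith⟩, sub_zero]

/-- Suppressing the last upward step of a path lowers its endpoint by one. -/
lemma Reach.sub_eVec_last (hslope : ∀ i, |α * η i| ≤ 1) {x y : Site d} (h : Reach ω x y)
    (hxy : heightAbove α η x < heightAbove α η y) : Reach ω x (y - eVec (Fin.last d)) := by
  induction h with
  | refl => exact absurd hxy (lt_irrefl _)
  | @tail y z hy hyz ih =>
    rcases hyz.1 with hup | hdown
    · rwa [← hup, _root_.sub_sub_cancel]
    · have hle := hdown.heightAbove_add_le hslope y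
      rw [add_sub_cancel] at hle
      convert (ih (hxy.trans_le hle)).tail (hdown.lambdaStep _) using 1
      abel

lemma exists_reach_heightAbove_sub_eq_neg [NeZero d] (hslope : ∀ i, |α * η i| < 1)
    (ω : Config d) (w : Site d) (n : ℕ) :
    ∃ z, heightAbove α η (w - z) = -n ∧ Reach ω z w := by
  induction n using Nat.twoStepInduction with
  | zero => exact ⟨w, by simp [heightAbove_zero], .refl⟩
  | one =>
    obtain ⟨v, hv, hv_height⟩ := exists_isDownStep_heightAbove_eq_neg_one (hslope 0)
    exact ⟨w - v, by simpa using hv_height, .single (by simpa using hv.lambdaStep (w - v))⟩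
  | more n ih _ =>
    obtain ⟨z, hz, hzw⟩ := ih
    refine ⟨z + 2 • eVec (Fin.last d), ?_, (reach_add_two_nsmul_eVec_last z).trans hzw⟩
    rw [two_nsmul, ← add_assoc, ← sub_sub, ← sub_sub, heightAbove_sub_eVec_last,
      heightAbove_sub_eVec_last, hz]
    push_cast
    ring

lemma LambdaStep.heightAbove_sub_le (hslope : ∀ i, |α * η i| ≤ 1) {y z : Site d}
    (h : LambdaStep ω y z) (w : Site d) :
    heightAbove α η (w - y) ≤ heightAbove α η (w - z) + 1 := by
  rcases h.1 with hup | hdown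
  · rw [← sub_sub_sub_cancel_right w z y, hup, heightAbove_sub_eVec_last, sub_add_cancel]
  · have := hdown.heightAbove_add_le hslope (w - z)
    rw [sub_add_sub_cancel] at this
    omega

/-- A discrete intermediate value theorem: `heightAbove α η (w - z)` drops by at most one at each
step of `z` along the path. -/
lemma Reach.exists_heightAbove_sub_eq [NeZero d] (hslope : ∀ i, |α * η i| < 1) {y w : Site d}
    (h : Reach ω y w) {k : ℤ} (hk : k ≤ heightAbove α η (w - y)) :
    ∃ z, heightAbove α η (w - z) = k ∧ Reach ω z w := by
  induction h using Relation.ReflTransGen.head_induction_on with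
  | refl =>
    rw [sub_self, heightAbove_zero] at hk
    obtain ⟨n, rfl⟩ := Int.exists_eq_neg_ofNat hk
    exact exists_reach_heightAbove_sub_eq_neg hslope ω w n
  | @head y z hyz hz ih =>
    have hdrop := hyz.heightAbove_sub_le (fun i => (hslope i).le) w
    by_cases hkz : k ≤ heightAbove α η (w - z)
    · exact ih hkz
    · exact ⟨y, by omega, hz.head hyz⟩

end HeightAbove

section ReachableHeights

variable {d : ℕ} {ω : Config d} {α : ℝ} {η x : Fin d → ℤ}

/-- The heights `n` such that `y ↣ (x̄, n)` for some site `y` of the tilted plane; their supremum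
is `F^{α,d}_η(x̄) - 1`. -/
def reachableHeights (α : ℝ) {d : ℕ} (η : Fin d → ℤ) (ω : Config d) (x : Fin d → ℤ) : Set ℤ :=
  {n | ∃ y ∈ tiltedPlane α η, Reach ω y (Fin.snoc x n)}

lemma planeHt_mem_reachableHeights : planeHt α η x ∈ reachableHeights α η ω x :=
  ⟨Fin.snoc x (planeHt α η x), by rw [mem_tiltedPlane_iff, heightAbove_snoc, sub_self], .refl⟩

lemma mem_reachableHeights_of_le (hslope : ∀ i, |α * η i| ≤ 1) {m n : ℤ}
    (hn : n ∈ reachableHeights α η ω x) (hm : planeHt α η x ≤ m) (hmn : m ≤ n) :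
    m ∈ reachableHeights α η ω x := by
  induction n, hmn using Int.leInduction with
  | base => exact hn
  | succ n hmn ih =>
    obtain ⟨y, hy, hreach⟩ := hn
    refine ih ⟨y, hy, ?_⟩
    rw [← snoc_add_eVec_last] at hreach
    have hlow := hreach.sub_eVec_last (α := α) (η := η) hslope (by
      rw [mem_tiltedPlane_iff.1 hy, snoc_add_eVec_last, heightAbove_snoc]
      omega)
    rwa [add_sub_cancel_right] at hlow

lemma sub_one_mem_reachableHeights {y : Fin d → ℤ} (hxy : ∑ i, |y i - x i| = 1) {n : ℤ}
    (hn : n ∈ reachableHeights α η ω x) : n - 1 ∈ reachableHeights α η ω y := by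
  obtain ⟨z, hz, hreach⟩ := hn
  exact ⟨z, hz, hreach.tail (by
    simpa using (isDownStep_snoc_sub_snoc hxy n).lambdaStep (Fin.snoc x n))⟩

lemma add_one_mem_reachableHeights {n : ℤ} (hn : n ∈ reachableHeights α η ω x)
    (hclosed : ω (Fin.snoc x (n + 1)) = false) : n + 1 ∈ reachableHeights α η ω x := by
  obtain ⟨z, hz, hreach⟩ := hn
  rw [← snoc_add_eVec_last] at hclosed
  exact ⟨z, hz, snoc_add_eVec_last x n ▸ hreach.tail (lambdaStep_add_eVec_last hclosed)⟩

lemma mem_reachableHeights_of_le_Fheight_sub (hslope : ∀ i, |α * η i| ≤ 1) {h : ℕ} (hh : 1 ≤ h)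
    (hF : ((h : ℝ) : EReal) ≤ Fheight α η ω x - ((planeHt α η x : ℝ) : EReal)) :
    planeHt α η x + (h - 1) ∈ reachableHeights α η ω x := by
  by_contra hnot
  have hlt : ∀ n ∈ reachableHeights α η ω x, n ≤ planeHt α η x + (h - 2) := fun n hn => by
    by_contra hn_gt
    exact hnot (mem_reachableHeights_of_le hslope hn (by omega) (by omega))
  have hsup : Fheight α η ω x ≤ ((planeHt α η x + (h - 2) : ℝ) : EReal) + 1 := by
    refine add_le_add_left (sSup_le ?_) 1
    rintro _ ⟨n, rfl, y, hy, hreach⟩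
    exact_mod_cast hlt n ⟨y, hy, admissiblePath_iff_reach.1 hreach⟩
  have hle : ((h : ℝ) : EReal) ≤
      ((planeHt α η x + (h - 2) + 1 - planeHt α η x : ℝ) : EReal) :=
    hF.trans (EReal.sub_le_sub hsup le_rfl)
  linarith [EReal.coe_le_coe_iff.1 hle]

lemma mem_LIP_of_forall_bddAbove (hbdd : ∀ x, BddAbove (reachableHeights α η ω x)) :
    ω ∈ LIP α η := by
  let f (x : Fin d → ℤ) : ℤ := sSup (reachableHeights α η ω x)
  have hf (x : Fin d → ℤ) : IsGreatest (reachableHeights α η ω x) (f x) :=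
    ⟨Int.csSup_mem ⟨_, planeHt_mem_reachableHeights⟩ (hbdd x), fun _ => le_csSup (hbdd x)⟩
  have hdrop {x y : Fin d → ℤ} (hxy : ∑ i, |y i - x i| = 1) : f x - 1 ≤ f y :=
    (hf y).2 (sub_one_mem_reachableHeights hxy (hf x).1)
  refine ⟨fun x => f x + 1, fun x y hxy => ?_, fun x => ⟨?_, ?_⟩⟩
  · have hxy_le := hdrop hxy
    have hyx_le := hdrop (x := x) (y := y) (by simpa only [abs_sub_comm] using hxy)
    rw [add_sub_add_right_eq_sub, abs_le]
    omega
  · by_contra hclosed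
    exact (lt_add_one (f x)).not_ge
      ((hf x).2 (add_one_mem_reachableHeights (hf x).1 (Bool.eq_false_of_not_eq_true hclosed)))
  · exact Int.lt_add_one_of_le ((hf x).2 planeHt_mem_reachableHeights)

end ReachableHeights

section Criterion

variable {d : ℕ} {α : ℝ} {η : Fin d → ℤ} {P : Measure (Config d)}

lemma IsTranslationInvariant.measure_exists_reach_le (hP : IsTranslationInvariant P)
    (w : Site d) (k : ℤ) :
    P {ω | ∃ z, heightAbove α η (w - z) = k ∧ Reach ω z w} ≤
      ∫⁻ ω, ((reachSet α η k ω).encard : ℝ≥0∞) ∂P := by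
  calc
    _ ≤ ∑' z, P {ω | heightAbove α η (w - z) = k ∧ Reach ω z w} := by
      rw [Set.ofPred_exists]
      exact measure_iUnion_le _
    _ = ∑' z, P {ω | w - z ∈ reachSet α η k ω} := by
      refine tsum_congr fun z => ?_
      by_cases hz : heightAbove α η (w - z) = k
      · simpa [mem_reachSet_iff, hz] using hP.measure_reach_eq z w
      · simp [mem_reachSet_iff, hz]
    _ = ∑' z, P {ω | z ∈ reachSet α η k ω} :=
      (Equiv.subLeft w).tsum_eq fun z => P {ω | z ∈ reachSet α η k ω}
    _ = _ := by
      refine (lintegral_encard_eq_tsum_measure P fun z => ?_).symm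
      simp only [mem_reachSet_iff]
      exact (MeasurableSet.const _).inter (measurableSet_reach 0 z)

variable [NeZero d]

lemma IsTranslationInvariant.measure_mem_reachableHeights_le (hP : IsTranslationInvariant P)
    (hslope : ∀ i, |α * η i| < 1) (x : Fin d → ℤ) {k m : ℤ} (hkm : k ≤ m) :
    P {ω | planeHt α η x + m ∈ reachableHeights α η ω x} ≤
      ∫⁻ ω, ((reachSet α η k ω).encard : ℝ≥0∞) ∂P := by
  refine (measure_mono ?_).trans
    (hP.measure_exists_reach_le (Fin.snoc x (planeHt α η x + m)) k)
  rintro ω ⟨y, hy, hreach⟩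
  refine hreach.exists_heightAbove_sub_eq hslope (hkm.trans ?_)
  simpa [heightAbove_snoc] using
    heightAbove_le_heightAbove_sub_of_mem_tiltedPlane hy (Fin.snoc x (planeHt α η x + m))

lemma IsTranslationInvariant.measure_not_bddAbove_reachableHeights_le
    (hP : IsTranslationInvariant P) (hslope : ∀ i, |α * η i| < 1) (x : Fin d → ℤ) (k : ℤ) :
    P {ω | ¬BddAbove (reachableHeights α η ω x)} ≤
      ∫⁻ ω, ((reachSet α η k ω).encard : ℝ≥0∞) ∂P := by
  refine (measure_mono fun ω hω => ?_).trans
    (hP.measure_mem_reachableHeights_le hslope x (le_max_left k 0))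
  obtain ⟨n, hn, hlt⟩ := not_bddAbove_iff.1 hω (planeHt α η x + max k 0)
  exact mem_reachableHeights_of_le (fun i => (hslope i).le) hn (by simp) hlt.le

lemma IsTranslationInvariant.ae_forall_bddAbove_reachableHeights (hP : IsTranslationInvariant P)
    (hslope : ∀ i, |α * η i| < 1)
    (hlim : Tendsto (fun k : ℤ => ∫⁻ ω, ((reachSet α η k ω).encard : ℝ≥0∞) ∂P) atTop (nhds 0)) :
    ∀ᵐ ω ∂P, ∀ x, BddAbove (reachableHeights α η ω x) :=
  ae_all_iff.2 fun x => ae_iff.2 <| nonpos_iff_eq_zero.1 <|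
    ge_of_tendsto' hlim (hP.measure_not_bddAbove_reachableHeights_le hslope x)

theorem criterion_existence_open_lipschitz_surface_general (hslope : ∀ i, |α * η i| < 1)
    [IsProbabilityMeasure P] (hP : IsTranslationInvariant P) :
    (∀ (x : Fin d → ℤ) (h : ℕ), 1 ≤ h → ∀ k : ℤ, k < h →
      P {ω | ((h : ℝ) : EReal) ≤ Fheight α η ω x - ((planeHt α η x : ℝ) : EReal)} ≤
        ∫⁻ ω, ((reachSet α η k ω).encard : ℝ≥0∞) ∂P) ∧
    (Tendsto (fun h : ℤ => ∫⁻ ω, ((reachSet α η h ω).encard : ℝ≥0∞) ∂P) atTop (nhds 0) →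
      P (LIP α η) = 1) := by
  refine ⟨fun x h hh k hkh => ?_, fun hlim => ?_⟩
  · exact (measure_mono fun ω =>
        mem_reachableHeights_of_le_Fheight_sub (fun i => (hslope i).le) hh).trans
      (hP.measure_mem_reachableHeights_le hslope x (Int.le_sub_one_of_lt hkh))
  · have hLIP : ∀ᵐ ω ∂P, ω ∈ LIP α η :=
      (hP.ae_forall_bddAbove_reachableHeights hslope hlim).mono
        fun _ => mem_LIP_of_forall_bddAbove
    exact (measure_congr (eventuallyEq_univ.2 hLIP)).trans measure_univ

end Criterion

lemma IsSign.abs_mul_lt_one {d : ℕ} {η : Fin d → ℤ} (hη : IsSign η) {α : ℝ} (hα : |α| < 1)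
    (i : Fin d) : |α * η i| < 1 := by
  rcases hη i with h | h | h <;> simp [h, hα]

/-- Criterion for the existence of an open Lipschitz surface:
`P_p(F^{α,d}_η(x̄) − ⌊α ∑ᵢ ηᵢ x̄ᵢ⌋ ≥ h) ≤ E_p[|𝓛^{α,d}_η(h−2)|]` for every `x̄ ∈ ℤ^d` and
`h ∈ ℕ`, and if `E_p[|𝓛^{α,d}_η(h)|] → 0` as `h → ∞` then `P_p(LIP^{α,d}_η) = 1`. -/
theorem criterion_existence_open_lipschitz_surface
    {d : ℕ} (hd : 1 ≤ d) (α : ℝ) (hα : α ∈ Set.Ico (0 : ℝ) 1)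
    (η : Fin d → ℤ) (hη : IsSign η)
    (p : ℝ) (hp : p ∈ Set.Icc (0 : ℝ) 1)
    (P : Measure (Config d)) (hP : IsBernoulli p P) :
    (∀ (x : Fin d → ℤ) (h : ℕ), 1 ≤ h →
      P {ω | ((h : ℝ) : EReal) ≤ Fheight α η ω x - ((planeHt α η x : ℝ) : EReal)} ≤
        ∫⁻ ω, ((reachSet α η ((h : ℤ) - 2) ω).encard : ℝ≥0∞) ∂P) ∧
    (Tendsto (fun h : ℤ => ∫⁻ ω, ((reachSet α η h ω).encard : ℝ≥0∞) ∂P) atTop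
        (nhds 0) →
      P (LIP α η) = 1) := by
  have : NeZero d := ⟨by omega⟩
  have := hP.1
  have hgen := criterion_existence_open_lipschitz_surface_general
    (hη.abs_mul_lt_one ((abs_of_nonneg hα.1).trans_lt hα.2)) hP.isTranslationInvariant
  exact ⟨fun x h hh => hgen.1 x h hh (h - 2) (by omega), hgen.2⟩
end

section
/- General lower bound with free parameters: let α ∈ [0,1), d ∈ ℕ, k ∈ {0,…,d}, and let p₁, p₂, p₃, p₄ ∈ (0,1) satisfy p₁ + p₂ + p₃ + p₄ = 1. Then q_L(α,d,k) ≥ min{ (1/k)·p₁·√(p₂p₃), p₁·(p₃/k)^{1/(1−α)}, p₁p₄/(2(d−k)) }, where any term whose denominator vanishes (i.e. the first two terms when k = 0, and the third term when k = d) is interpreted as +∞. -/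
open MeasureTheory Filter ENNReal

/-!
The lowest open Lipschitz surface above the plane sits one unit above the highest points reachable
from the plane by admissible paths, whose upward steps end in closed sites and whose diagonal
downward steps are free. It exists as soon as the heights reachable above the origin are bounded,
so by Borel–Cantelli it suffices that the probabilities that some self-avoiding admissible path of
length `N` ends above the origin at nonnegative height are summable.

A path with `u` upward steps has its upward steps closed with probability `q ^ u`. Such a path does
not lose elevation relative to the tilted plane, so for `0 < r ≤ 1` this is at most the product of
the step weights `q ^ [s is upward] * r ^ (-elevation of s)`. Summing over all step sequences gives
`W ^ N`, where `W = q / r + ∑ i, (r ^ (1 + α * η i) + r ^ (1 - α * η i))`. With `q = p₁ * r`, the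
three terms of the minimum are exactly the bounds on `q` that make `W < p₁ + (p₂ + p₃) + p₄ = 1`:
for `s = k * r ^ (1 - α)` and `t = k * r ^ (1 + α)` we have `t ≤ s < p₃` and `s * t < p₂ * p₃`,
which forces `s + t < p₂ + p₃`.
-/

namespace LipschitzPercolation

section LoopErasure

variable {β : Type*} {r : β → β → Prop} {a b : β}

lemma exists_injective_path_of_reflTransGen (h : Relation.ReflTransGen r a b) :
    ∃ (n : ℕ) (v : Fin (n + 1) → β), Function.Injective v ∧ v 0 = a ∧ v (Fin.last n) = b ∧
      ∀ i : Fin n, r (v i.castSucc) (v i.succ) := by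
  induction h with
  | refl => exact ⟨0, fun _ => a, fun _ _ _ => Subsingleton.elim (α := Fin 1) _ _, rfl, rfl, nofun⟩
  | @tail b c _ hbc ih =>
    obtain ⟨n, v, hinj, h0, hlast, hv⟩ := ih
    by_cases hc : c ∈ Set.range v
    · obtain ⟨i, rfl⟩ := hc
      exact ⟨i, v ∘ Fin.castLE i.isLt, hinj.comp (Fin.castLE_injective _), h0, rfl,
        fun j => hv (Fin.castLE i.is_le j)⟩
    · refine ⟨n + 1, Fin.snoc v c, Fin.snoc_injective_of_injective hinj hc, ?_,
        Fin.snoc_last .., Fin.lastCases ?_ fun i => ?_⟩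
      · rw [← Fin.castSucc_zero, Fin.snoc_castSucc, h0]
      · rw [Fin.succ_last, Fin.snoc_castSucc, Fin.snoc_last, hlast]
        exact hbc
      · rw [Fin.succ_castSucc, Fin.snoc_castSucc, Fin.snoc_castSucc]
        exact hv i

end LoopErasure

lemma partialSum_last {M : Type*} [AddCommMonoid M] {n : ℕ} (f : Fin n → M) :
    Fin.partialSum f (Fin.last n) = ∑ i, f i := by
  simp [Fin.partialSum, List.sum_ofFn, List.take_of_length_le]

lemma eq_add_partialSum {M : Type*} [AddMonoid M] {n : ℕ} {v : Fin (n + 1) → M} {f : Fin n → M}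
    (h : ∀ i : Fin n, v i.succ = v i.castSucc + f i) (i : Fin (n + 1)) :
    v i = v 0 + Fin.partialSum f i := by
  induction i using Fin.induction with
  | zero => rw [Fin.partialSum_zero, add_zero]
  | succ i ih => rw [h, ih, Fin.partialSum_succ, add_assoc]

lemma add_lt_add_of_mul_lt_mul {s t a b : ℝ} (ha : 0 < a) (hts : t ≤ s) (hsb : s < b)
    (hst : s * t < a * b) : s + t < a + b := by
  rcases le_or_gt t a with hta | hat
  · linarith
  · have hmul : a * (t - a) < a * (b - s) :=
      calc a * (t - a)
          ≤ s * (t - a) := mul_le_mul_of_nonneg_right (hat.le.trans hts) (sub_nonneg.2 hat.le)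
        _ < a * (b - s) := by linarith
    linarith [lt_of_mul_lt_mul_left hmul ha.le]

lemma ofReal_lt_ofReal_div_natCast_iff {x y : ℝ} {n : ℕ} (hx : 0 ≤ x) :
    ENNReal.ofReal x < ENNReal.ofReal y / n ↔ x * n < y := by
  rw [ENNReal.lt_div_iff_mul_lt (.inr ENNReal.ofReal_ne_top) (.inl (ENNReal.natCast_ne_top n)),
    ← ENNReal.ofReal_natCast, ← ENNReal.ofReal_mul hx,
    ENNReal.ofReal_lt_ofReal_iff_of_nonneg (by positivity)]

/-- A site of `ℤ^{d+1}` split into its horizontal part and its height. -/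
abbrev Point (d : ℕ) := (Fin d → ℤ) × ℤ

/-- The site of `ℤ^{d+1}` that a point stands for. -/
def toSite {d : ℕ} (y : Point d) : Site d := Fin.snoc y.1 y.2

lemma toSite_injective {d : ℕ} : Function.Injective (toSite (d := d)) := fun _ _ h =>
  Prod.ext (Fin.snoc_injective2 h).1 (Fin.snoc_injective2 h).2

/-- Steps of admissible paths: `none` is the upward step, and `some (i, ε)` is the diagonal
downward step in the direction `ε eᵢ`. -/
abbrev Step (d : ℕ) := Option (Fin d × ℤˣ)

/-- The displacement of a step. -/
def disp {d : ℕ} : Step d → Point d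
  | none => (0, 1)
  | some (i, ε) => (Pi.single i (ε : ℤ), -1)

/-- A step of an admissible path from `y` to `z`: only an upward step has to end in a closed
site. -/
def AdmissibleStep {d : ℕ} (ω : Config d) (y z : Point d) : Prop :=
  ∃ t : Step d, z = y + disp t ∧ (t = none → ω (toSite z) = false)

/-- `y` is the end point of an admissible path that starts on the tilted plane. -/
def Reachable {d : ℕ} (α : ℝ) (η : Fin d → ℤ) (ω : Config d) (y : Point d) : Prop :=
  ∃ x, Relation.ReflTransGen (AdmissibleStep ω) (x, planeHt α η x) y

section LowestSurface

variable {d : ℕ} {α : ℝ} {η : Fin d → ℤ} {ω : Config d}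

lemma reachable_planeHt (x : Fin d → ℤ) : Reachable α η ω (x, planeHt α η x) :=
  ⟨x, .refl⟩

lemma Reachable.step {y z : Point d} (hy : Reachable α η ω y) (hyz : AdmissibleStep ω y z) :
    Reachable α η ω z :=
  hy.imp fun _ hx => hx.tail hyz

lemma mem_closure_disp_some (z : Fin d → ℤ) :
    ((z, -∑ i, |z i|) : Point d) ∈
      AddSubmonoid.closure (Set.range fun s : Fin d × ℤˣ => disp (some s)) := by
  have hcoord : ∀ i, ∃ ε : ℤˣ, z i = (z i).natAbs * ε := fun i => by
    rcases Int.natAbs_eq (z i) with h | h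
    · exact ⟨1, by simpa using h⟩
    · exact ⟨-1, by simpa using h⟩
  choose ε hε using hcoord
  have hsum : ((z, -∑ i, |z i|) : Point d) = ∑ i, (z i).natAbs • disp (some (i, ε i)) := by
    refine Prod.ext ?_ ?_
    · simp only [disp, Prod.smul_mk, Prod.fst_sum, ← Pi.single_smul, nsmul_eq_mul, ← hε,
        Finset.univ_sum_single]
    · simp only [disp, Prod.smul_mk, Prod.snd_sum, smul_neg, nsmul_eq_mul, mul_one,
        Int.natCast_natAbs, Finset.sum_neg_distrib]
  rw [hsum]
  exact sum_mem fun i _ => nsmul_mem (AddSubmonoid.subset_closure (Set.mem_range_self (i, ε i))) _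

lemma Reachable.descend {x : Fin d → ℤ} {n : ℤ} (h : Reachable α η ω (x, n)) (y : Fin d → ℤ) :
    Reachable α η ω (y, n - ∑ i, |x i - y i|) := by
  suffices ∀ v ∈ AddSubmonoid.closure (Set.range fun s : Fin d × ℤˣ => disp (some s)),
      ∀ u, Reachable α η ω u → Reachable α η ω (u + v) by
    have := this _ (mem_closure_disp_some (y - x)) _ h
    simpa only [Prod.mk_add_mk, add_sub_cancel, Pi.sub_apply, abs_sub_comm, ← sub_eq_add_neg]
      using this
  intro v hv
  induction hv using AddSubmonoid.closure_induction with
  | mem v hv =>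
    obtain ⟨s, rfl⟩ := hv
    exact fun u hu => hu.step ⟨some s, rfl, nofun⟩
  | zero => exact fun u hu => by rwa [add_zero]
  | add v w _ _ hv hw => exact fun u hu => by simpa only [add_assoc] using hw _ (hv u hu)

lemma mem_LIP_of_bddAbove (hbdd : BddAbove {n | Reachable α η ω (0, n)}) : ω ∈ LIP α η := by
  have hbdd' : ∀ x, BddAbove {n | Reachable α η ω (x, n)} := fun x => by
    obtain ⟨M, hM⟩ := hbdd
    exact ⟨M + ∑ i, |x i - 0|, fun n hn => sub_le_iff_le_add.1 (hM (hn.descend 0))⟩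
  let top : (Fin d → ℤ) → ℤ := fun x => sSup {n | Reachable α η ω (x, n)}
  have hmem : ∀ x, Reachable α η ω (x, top x) := fun x =>
    Int.csSup_mem (s := {n | Reachable α η ω (x, n)}) ⟨_, reachable_planeHt x⟩ (hbdd' x)
  have hle : ∀ {x n}, Reachable α η ω (x, n) → n ≤ top x := fun {x _} hn =>
    le_csSup (hbdd' x) hn
  refine ⟨fun x => top x + 1, fun x y hxy => ?_, fun x => ⟨?_, ?_⟩⟩
  · have hyx : ∑ i, |y i - x i| = 1 := by simpa only [abs_sub_comm] using hxy
    have := hle ((hmem x).descend y)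
    have := hle ((hmem y).descend x)
    rw [abs_le]
    constructor <;> linarith
  · by_contra hopen
    have hup : Reachable α η ω (x, top x + 1) :=
      (hmem x).step ⟨none, by simp [disp], fun _ => by simpa [toSite] using hopen⟩
    linarith [hle hup]
  · exact Int.lt_add_one_of_le (hle (reachable_planeHt x))

end LowestSurface

section Paths

variable {d N : ℕ} {α : ℝ} {η : Fin d → ℤ} {ω : Config d}

/-- The `i`-th vertex of the path with steps `t` that starts on the tilted plane and ends above
the origin; these two requirements determine the starting point. -/
noncomputable def vertex (α : ℝ) (η : Fin d → ℤ) (t : Fin N → Step d) (i : Fin (N + 1)) :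
    Point d :=
  (-∑ j, (disp (t j)).1, planeHt α η (-∑ j, (disp (t j)).1)) +
    Fin.partialSum (fun j => disp (t j)) i

/-- The indices of the upward steps. -/
def upSteps (t : Fin N → Step d) : Finset (Fin N) := {j | t j = none}

/-- The end points of the upward steps of the path with steps `t`. -/
noncomputable def upSites (α : ℝ) (η : Fin d → ℤ) (t : Fin N → Step d) : Finset (Site d) :=
  (upSteps t).image fun j => toSite (vertex α η t j.succ)

/-- The path with steps `t` is self-avoiding and ends at nonnegative height. -/
def IsDangerous (α : ℝ) (η : Fin d → ℤ) (t : Fin N → Step d) : Prop :=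
  Function.Injective (vertex α η t) ∧ 0 ≤ (vertex α η t (Fin.last N)).2

lemma vertex_last_fst (t : Fin N → Step d) : (vertex α η t (Fin.last N)).1 = 0 := by
  simp [vertex, partialSum_last, Prod.fst_sum]

lemma card_upSites {t : Fin N → Step d} (ht : Function.Injective (vertex α η t)) :
    (upSites α η t).card = (upSteps t).card :=
  Finset.card_image_of_injective _ (toSite_injective.comp (ht.comp (Fin.succ_injective N)))

lemma Reachable.exists_isDangerous {n : ℤ} (hn : 0 ≤ n) (h : Reachable α η ω (0, n)) :
    ∃ (N : ℕ) (t : Fin N → Step d), IsDangerous α η t ∧ (vertex α η t (Fin.last N)).2 = n ∧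
      ∀ x ∈ upSites α η t, ω x = false := by
  obtain ⟨x, hx⟩ := h
  obtain ⟨N, v, hinj, hv0, hvlast, hstep⟩ := exists_injective_path_of_reflTransGen hx
  choose t hvt hclosed using hstep
  have hv : ∀ i, v i = v 0 + Fin.partialSum (fun j => disp (t j)) i := eq_add_partialSum hvt
  have hx : -∑ j, (disp (t j)).1 = x := by
    have hlast := congrArg Prod.fst (hv (Fin.last N))
    rw [hvlast, hv0, partialSum_last, Prod.fst_add, Prod.fst_sum] at hlast
    exact (eq_neg_of_add_eq_zero_left hlast.symm).symm
  have hvertex : vertex α η t = v := funext fun i => by rw [vertex, hx, hv i, hv0]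
  refine ⟨N, t, ⟨hvertex ▸ hinj, ?_⟩, ?_, ?_⟩
  · rwa [hvertex, hvlast]
  · rw [hvertex, hvlast]
  · simpa [upSites, upSteps, hvertex] using hclosed

end Paths

section Tilting

variable {d N : ℕ} {α q r : ℝ} {η : Fin d → ℤ}

/-- The signed vertical distance of a point from the real hyperplane of which the tilted plane is
the integer part. -/
noncomputable def elevation (α : ℝ) (η : Fin d → ℤ) : Point d →+ ℝ where
  toFun y := y.2 - α * ∑ i, (η i : ℝ) * (y.1 i : ℝ)
  map_zero' := by simp
  map_add' y z := by
    simp only [Prod.fst_add, Prod.snd_add, Pi.add_apply, Int.cast_add, mul_add,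
      Finset.sum_add_distrib]
    ring

lemma elevation_planeHt_nonpos (x : Fin d → ℤ) : elevation α η (x, planeHt α η x) ≤ 0 :=
  sub_nonpos.2 (Int.floor_le _)

lemma elevation_disp_none : elevation α η (disp none) = 1 := by
  simp [elevation, disp]

lemma elevation_disp_some (i : Fin d) (ε : ℤˣ) :
    elevation α η (disp (some (i, ε))) = -(1 + α * η i * (ε : ℤ)) := by
  simp only [elevation, disp, AddMonoidHom.coe_mk, ZeroHom.coe_mk, Pi.single_apply, Int.cast_ite,
    Int.cast_zero, mul_ite, mul_zero, Finset.sum_ite_eq', Finset.mem_univ, if_true, Int.cast_neg,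
    Int.cast_one]
  ring

lemma IsDangerous.sum_elevation_nonneg {t : Fin N → Step d} (ht : IsDangerous α η t) :
    0 ≤ ∑ j, elevation α η (disp (t j)) := by
  have hend : elevation α η (vertex α η t (Fin.last N)) = (vertex α η t (Fin.last N)).2 := by
    simp [elevation, vertex_last_fst]
  have hend_nonneg : (0 : ℝ) ≤ (vertex α η t (Fin.last N)).2 := by exact_mod_cast ht.2
  rw [← hend, vertex, map_add, partialSum_last, map_sum] at hend_nonneg
  linarith [elevation_planeHt_nonpos (α := α) (η := η) (-∑ j, (disp (t j)).1)]

/-- The weight of a step: the probability `q` that an upward step ends in a closed site,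
exponentially tilted against the elevation gained. -/
noncomputable def weight (α : ℝ) (η : Fin d → ℤ) (q r : ℝ) (s : Step d) : ℝ :=
  (if s = none then q else 1) * r ^ (-elevation α η (disp s))

lemma weight_nonneg (hq : 0 ≤ q) (hr : 0 ≤ r) (s : Step d) : 0 ≤ weight α η q r s := by
  unfold weight
  positivity

lemma sum_weight (α : ℝ) (η : Fin d → ℤ) (q r : ℝ) :
    ∑ s, weight α η q r s = q / r + ∑ i, (r ^ (1 + α * η i) + r ^ (1 - α * η i)) := by
  simp [Fintype.sum_option, Fintype.sum_prod_type, weight, elevation_disp_none,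
    elevation_disp_some, UnitsInt.univ, Real.rpow_neg_one, div_eq_mul_inv, sub_eq_add_neg]

lemma IsDangerous.pow_card_le_prod_weight {t : Fin N → Step d} (ht : IsDangerous α η t)
    (hq : 0 ≤ q) (hr : 0 < r) (hr1 : r ≤ 1) :
    q ^ (upSteps t).card ≤ ∏ j, weight α η q r (t j) := by
  have htilt : 1 ≤ r ^ (-∑ j, elevation α η (disp (t j))) :=
    Real.one_le_rpow_of_pos_of_le_one_of_nonpos hr hr1
      (neg_nonpos.2 ht.sum_elevation_nonneg)
  calc q ^ (upSteps t).card
      ≤ q ^ (upSteps t).card * r ^ (-∑ j, elevation α η (disp (t j))) :=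
        le_mul_of_one_le_right (by positivity) htilt
    _ = ∏ j, weight α η q r (t j) := by
        rw [← Finset.sum_neg_distrib, Real.rpow_sum_of_pos hr]
        simp only [weight, upSteps, Finset.prod_mul_distrib, Finset.prod_ite, Finset.prod_const,
          one_pow, mul_one]

end Tilting

section Probability

variable {d : ℕ} {α p r : ℝ} {η : Fin d → ℤ} {P : Measure (Config d)}

lemma measure_forall_eq_false {ι : Type*} {P : Measure (ι → Bool)} (hP : IsBernoulli p P)
    (s : Finset ι) : P {ω | ∀ x ∈ s, ω x = false} = ENNReal.ofReal (1 - p) ^ s.card := by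
  simpa using hP.2 s fun _ => false

/-- The event that the upward steps of some dangerous path of length `N` all end in closed
sites. -/
def dangerousEvent (α : ℝ) (η : Fin d → ℤ) (N : ℕ) : Set (Config d) :=
  ⋃ (t : Fin N → Step d) (_ : IsDangerous α η t), {ω | ∀ x ∈ upSites α η t, ω x = false}

lemma measure_dangerousEvent_le (hP : IsBernoulli p P) (hp : p ≤ 1) (hr : 0 < r) (hr1 : r ≤ 1)
    (N : ℕ) :
    P (dangerousEvent α η N) ≤
      ENNReal.ofReal (((1 - p) / r + ∑ i, (r ^ (1 + α * η i) + r ^ (1 - α * η i))) ^ N) := by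
  have hq : 0 ≤ 1 - p := sub_nonneg.2 hp
  have hpath : ∀ t : Fin N → Step d,
      P (⋃ _ : IsDangerous α η t, {ω | ∀ x ∈ upSites α η t, ω x = false}) ≤
        ENNReal.ofReal (∏ j, weight α η (1 - p) r (t j)) := fun t => by
    by_cases ht : IsDangerous α η t
    · simp only [ht, Set.iUnion_true]
      rw [measure_forall_eq_false hP, card_upSites ht.1, ← ENNReal.ofReal_pow hq]
      exact ENNReal.ofReal_le_ofReal (ht.pow_card_le_prod_weight hq hr hr1)
    · simp [ht]
  calc P (dangerousEvent α η N)
      ≤ ∑ t : Fin N → Step d, ENNReal.ofReal (∏ j, weight α η (1 - p) r (t j)) :=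
        (measure_iUnion_fintype_le _ _).trans (Finset.sum_le_sum fun t _ => hpath t)
    _ = ENNReal.ofReal ((∑ s, weight α η (1 - p) r s) ^ N) := by
        rw [Fintype.sum_pow, ENNReal.ofReal_sum_of_nonneg fun t _ =>
          Finset.prod_nonneg fun j _ => weight_nonneg hq hr.le (t j)]
    _ = _ := by rw [sum_weight]

lemma bddAbove_reachable_of_eventually_notMem {ω : Config d}
    (h : ∀ᶠ N in atTop, ω ∉ dangerousEvent α η N) : BddAbove {n | Reachable α η ω (0, n)} := by
  obtain ⟨M, hM⟩ := eventually_atTop.1 h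
  have hfin : (⋃ N ∈ Set.Iio M,
      Set.range fun t : Fin N → Step d => (vertex α η t (Fin.last N)).2).Finite :=
    (Set.finite_Iio M).biUnion fun N _ => Set.finite_range _
  refine (bddAbove_Iio (a := (0 : ℤ))).union hfin.bddAbove |>.mono fun n hn => ?_
  refine (lt_or_ge n 0).imp id fun hn0 => ?_
  obtain ⟨N, t, ht, hend, hclosed⟩ := hn.exists_isDangerous hn0
  have hNM : N < M := not_le.1 fun hMN => hM N hMN (Set.mem_iUnion₂.2 ⟨t, ht, hclosed⟩)
  exact Set.mem_biUnion hNM ⟨t, hend⟩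

theorem ae_mem_LIP (hP : IsBernoulli p P) (hp : p ≤ 1) (hr : 0 < r) (hr1 : r ≤ 1)
    (hweight : (1 - p) / r + ∑ i, (r ^ (1 + α * η i) + r ^ (1 - α * η i)) < 1) :
    ∀ᵐ ω ∂P, ω ∈ LIP α η := by
  have hnonneg : 0 ≤ (1 - p) / r + ∑ i, (r ^ (1 + α * η i) + r ^ (1 - α * η i)) := by
    have := sub_nonneg.2 hp
    positivity
  have hsum : ∑' N, P (dangerousEvent α η N) ≠ ∞ :=
    ne_top_of_le_ne_top (summable_geometric_of_lt_one hnonneg hweight).tsum_ofReal_ne_top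
      (ENNReal.tsum_le_tsum (measure_dangerousEvent_le hP hp hr hr1))
  filter_upwards [ae_eventually_notMem hsum] with ω hω
  exact mem_LIP_of_bddAbove (bddAbove_reachable_of_eventually_notMem hω)

lemma le_of_isCriticalProb_of_ae_mem {P : ℝ → Measure (Config d)} {pc : ℝ}
    (hpc : IsCriticalProb P α η pc) (hp : 0 ≤ p) [(ae (P p)).NeBot]
    (h : ∀ᵐ ω ∂P p, ω ∈ LIP α η) : pc ≤ p := by
  by_contra! hlt
  have hnull := measure_eq_zero_iff_ae_notMem.1 (hpc.2.1 p hp hlt)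
  obtain ⟨ω, hω, hω'⟩ := (h.and hnull).exists
  exact hω' hω

end Probability

section Parameters

lemma isSign_etaK (d k : ℕ) : IsSign (etaK d k) := fun i => by
  unfold etaK
  split_ifs <;> simp

lemma sum_abs_etaK {d k : ℕ} (hk : k ≤ d) : ∑ i, |etaK d k i| = k := by
  simp only [etaK, apply_ite abs, abs_one, abs_zero, Finset.sum_boole]
  simp [Fin.card_filter_val_lt, hk]

variable {d k : ℕ} {η : Fin d → ℤ}

lemma le_of_isSign_of_sum_abs_eq (hη : IsSign η) (hk : ∑ i, |η i| = k) : k ≤ d := by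
  have hle : ∀ i, |η i| ≤ 1 := fun i => by rcases hη i with h | h | h <;> simp [h]
  have := Finset.sum_le_card_nsmul Finset.univ _ 1 fun i _ => hle i
  simpa [hk] using this

lemma sum_rpow_of_isSign (hη : IsSign η) (hk : ∑ i, |η i| = k) (α r : ℝ) :
    ∑ i, (r ^ (1 + α * η i) + r ^ (1 - α * η i)) =
      k * (r ^ (1 + α) + r ^ (1 - α)) + 2 * (d - k : ℕ) * r := by
  have hterm : ∀ i, r ^ (1 + α * η i) + r ^ (1 - α * η i) =
      |(η i : ℝ)| * (r ^ (1 + α) + r ^ (1 - α)) + (1 - |(η i : ℝ)|) * (2 * r) := fun i => by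
    rcases hη i with h | h | h
    · simp [h, sub_eq_add_neg, add_comm]
    · simp [h, two_mul]
    · simp [h]
  have hk' : ∑ i, |(η i : ℝ)| = k := by exact_mod_cast hk
  simp only [hterm, Finset.sum_add_distrib, ← Finset.sum_mul, Finset.sum_sub_distrib, hk']
  rw [Nat.cast_sub (le_of_isSign_of_sum_abs_eq hη hk)]
  simp only [Finset.sum_const, Finset.card_univ, Fintype.card_fin, nsmul_eq_mul, mul_one]
  ring

lemma mul_lt_of_ofReal_mul_lt_min {α r p₁ p₂ p₃ p₄ : ℝ} {k n : ℕ} (hα : α < 1) (hr : 0 ≤ r)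
    (h₁ : 0 < p₁)
    (h : ENNReal.ofReal (p₁ * r) <
      min (min (ENNReal.ofReal (p₁ * √(p₂ * p₃)) / (k : ℝ≥0∞))
          (ENNReal.ofReal p₁ * (ENNReal.ofReal p₃ / (k : ℝ≥0∞)) ^ ((1 : ℝ) / (1 - α))))
        (ENNReal.ofReal (p₁ * p₄) / (2 * (n : ℝ≥0∞)))) :
    r * k < √(p₂ * p₃) ∧ r ^ (1 - α) * k < p₃ ∧ r * (2 * n) < p₄ := by
  have hα' : 0 < 1 - α := sub_pos.2 hα
  have hcancel : ∀ {m : ℕ} {y : ℝ},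
      ENNReal.ofReal (p₁ * r) < ENNReal.ofReal (p₁ * y) / m → r * m < y := fun hlt => by
    rw [ofReal_lt_ofReal_div_natCast_iff (by positivity), mul_assoc] at hlt
    exact lt_of_mul_lt_mul_left hlt h₁.le
  rw [lt_min_iff, lt_min_iff] at h
  obtain ⟨⟨hsqrt, hrpow⟩, hflat⟩ := h
  refine ⟨hcancel hsqrt, ?_, by exact_mod_cast hcancel (m := 2 * n) (by exact_mod_cast hflat)⟩
  rw [ENNReal.ofReal_mul h₁.le] at hrpow
  have hlt := lt_of_mul_lt_mul_left' hrpow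
  rwa [one_div, ENNReal.lt_rpow_inv_iff hα', ENNReal.ofReal_rpow_of_nonneg hr hα'.le,
    ofReal_lt_ofReal_div_natCast_iff (by positivity)] at hlt

lemma lt_one_of_mul_lt_sqrt {r p₂ p₃ p₄ : ℝ} {k n : ℕ} (hkn : 1 ≤ k + n) (hr : 0 ≤ r)
    (h₂ : 0 ≤ p₂) (h₃ : 0 ≤ p₃) (hsum : p₂ + p₃ + p₄ ≤ 1) (hsqrt : r * k < √(p₂ * p₃))
    (hflat : r * (2 * n) < p₄) : r < 1 := by
  have hkn' : (1 : ℝ) ≤ k + 2 * n := by exact_mod_cast (by lia : 1 ≤ k + 2 * n)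
  calc r ≤ r * (k + 2 * n) := le_mul_of_one_le_right hr hkn'
    _ < √(p₂ * p₃) + p₄ := by rw [mul_add]; exact add_lt_add hsqrt hflat
    _ ≤ (p₂ + p₃) + p₄ := by
        gcongr
        exact Real.sqrt_le_iff.2 ⟨by positivity, by nlinarith [mul_nonneg h₂ h₃]⟩
    _ ≤ 1 := hsum

lemma mul_rpow_add_rpow_lt {α r p₂ p₃ : ℝ} {k : ℕ} (hα : 0 ≤ α) (hr : 0 < r) (hr1 : r ≤ 1)
    (h₂ : 0 < p₂) (hsqrt : r * k < √(p₂ * p₃)) (hrpow : r ^ (1 - α) * k < p₃) :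
    k * (r ^ (1 + α) + r ^ (1 - α)) < p₂ + p₃ := by
  have hle : r ^ (1 + α) * k ≤ r ^ (1 - α) * k := by
    gcongr ?_ * _
    exact Real.rpow_le_rpow_of_exponent_ge hr hr1 (by linarith)
  have hmul : r ^ (1 - α) * k * (r ^ (1 + α) * k) < p₂ * p₃ :=
    calc r ^ (1 - α) * k * (r ^ (1 + α) * k) = r ^ (1 - α + (1 + α)) * (k * k) := by
          rw [mul_mul_mul_comm, ← Real.rpow_add hr]
      _ = (r * k) ^ 2 := by
          rw [show 1 - α + (1 + α) = (2 : ℕ) by push_cast; ring, Real.rpow_natCast, mul_pow,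
            sq (k : ℝ)]
      _ < p₂ * p₃ := (Real.lt_sqrt (by positivity)).1 hsqrt
  linarith [add_lt_add_of_mul_lt_mul h₂ hle hrpow hmul]

end Parameters

end LipschitzPercolation

theorem qL_lower_bound_with_parameters_general
    {d : ℕ} (hd : 1 ≤ d) {α : ℝ} (hα : α ∈ Set.Ico (0 : ℝ) 1) {η : Fin d → ℤ} (hη : IsSign η)
    {k : ℕ} (hk : ∑ i, |η i| = k) {p₁ p₂ p₃ p₄ : ℝ} (h₁ : 0 < p₁) (h₂ : 0 < p₂) (h₃ : 0 < p₃)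
    (h₄ : 0 < p₄) (hsum : p₁ + p₂ + p₃ + p₄ = 1)
    {P : ℝ → Measure (Config d)} (hP : ∀ p ∈ Set.Icc (0 : ℝ) 1, IsBernoulli p (P p))
    {pc : ℝ} (hpc : IsCriticalProb P α η pc) :
    min (min (ENNReal.ofReal (p₁ * Real.sqrt (p₂ * p₃)) / (k : ℝ≥0∞))
          (ENNReal.ofReal p₁ * (ENNReal.ofReal p₃ / (k : ℝ≥0∞)) ^ ((1 : ℝ) / (1 - α))))
        (ENNReal.ofReal (p₁ * p₄) / (2 * ((d - k : ℕ) : ℝ≥0∞))) ≤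
      ENNReal.ofReal (1 - pc) := by
  by_contra! hlt
  obtain ⟨q, -, hqpc, hqmin⟩ := ENNReal.lt_iff_exists_real_btwn.1 hlt
  have hpc1 : 0 < 1 - pc := sub_pos.2 hpc.1.2
  replace hqpc : 1 - pc < q := (ENNReal.ofReal_lt_ofReal_iff_of_nonneg hpc1.le).1 hqpc
  obtain ⟨r, rfl⟩ : ∃ r, q = p₁ * r := ⟨q / p₁, (mul_div_cancel₀ q h₁.ne').symm⟩
  have hr : 0 < r := pos_of_mul_pos_right (hpc1.trans hqpc) h₁.le
  obtain ⟨hsqrt, hrpow, hflat⟩ :=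
    LipschitzPercolation.mul_lt_of_ofReal_mul_lt_min hα.2 hr.le h₁ hqmin
  have hr1 : r < 1 := LipschitzPercolation.lt_one_of_mul_lt_sqrt (by lia) hr.le h₂.le h₃.le
    (by linarith) hsqrt hflat
  have hsteep := LipschitzPercolation.mul_rpow_add_rpow_lt hα.1 hr hr1.le h₂ hsqrt hrpow
  have hq : p₁ * r ≤ 1 := mul_le_one₀ (by linarith) hr.le hr1.le
  have hB := hP (1 - p₁ * r) ⟨sub_nonneg.2 hq, sub_le_self 1 (by positivity)⟩
  have hLIP := LipschitzPercolation.ae_mem_LIP (α := α) (η := η) hB (sub_le_self 1 (by positivity))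
    hr hr1.le <| by
      rw [_root_.sub_sub_cancel, mul_div_cancel_right₀ _ hr.ne',
        LipschitzPercolation.sum_rpow_of_isSign hη hk]
      linarith
  have := hB.1
  linarith [LipschitzPercolation.le_of_isCriticalProb_of_ae_mem hpc (sub_nonneg.2 hq) hLIP]

/-- General lower bound with free parameters: if
`p₁, p₂, p₃, p₄ ∈ (0,1)` with `p₁ + p₂ + p₃ + p₄ = 1`, then for `k = 0,…,d`,
`q_L(α,d,k) ≥ min{(1/k)·p₁·√(p₂p₃), p₁·(p₃/k)^{1/(1−α)}, p₁p₄/(2(d−k))}`,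
computed in `[0,∞]` so that terms with vanishing denominator are `+∞`. -/
theorem qL_lower_bound_with_parameters
    {d : ℕ} (hd : 1 ≤ d) (α : ℝ) (hα : α ∈ Set.Ico (0 : ℝ) 1) (k : ℕ) (hk : k ≤ d)
    (p₁ p₂ p₃ p₄ : ℝ) (h₁ : p₁ ∈ Set.Ioo (0 : ℝ) 1) (h₂ : p₂ ∈ Set.Ioo (0 : ℝ) 1)
    (h₃ : p₃ ∈ Set.Ioo (0 : ℝ) 1) (h₄ : p₄ ∈ Set.Ioo (0 : ℝ) 1)
    (hsum : p₁ + p₂ + p₃ + p₄ = 1)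
    (P : ℝ → Measure (Config d)) (hP : ∀ p ∈ Set.Icc (0 : ℝ) 1, IsBernoulli p (P p))
    (pc : ℝ) (hpc : IsCriticalProb P α (etaK d k) pc) :
    min (min (ENNReal.ofReal (p₁ * Real.sqrt (p₂ * p₃)) / (k : ℝ≥0∞))
          (ENNReal.ofReal p₁ * (ENNReal.ofReal p₃ / (k : ℝ≥0∞)) ^ ((1 : ℝ) / (1 - α))))
        (ENNReal.ofReal (p₁ * p₄) / (2 * ((d - k : ℕ) : ℝ≥0∞))) ≤
      ENNReal.ofReal (1 - pc) := by
  exact qL_lower_bound_with_parameters_general hd hα (LipschitzPercolation.isSign_etaK d k)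
    (LipschitzPercolation.sum_abs_etaK hk) h₁.1 h₂.1 h₃.1 h₄.1 hsum hP hpc
end

section
/- Continuity of the critical probability of ρ-percolation: for every d ∈ ℕ, the map ρ ↦ q_c(ρ,d) is continuous on [0,1). -/
open MeasureTheory Filter ENNReal

/-- Site-percolation configurations on `ℤ^d`: a site is open iff its value is `true`. -/
abbrev ConfigD (d : ℕ) := (Fin d → ℤ) → Bool

/-- An oriented nearest-neighbour path in `ℤ^d` started at the origin: every step adds
one standard basis vector. -/
def IsOrientedPath {d : ℕ} (x : ℕ → Fin d → ℤ) : Prop :=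
  x 0 = 0 ∧ ∀ n : ℕ, ∃ i : Fin d, x (n + 1) = x n + Pi.single i 1

/-- The event that `ρ`-percolation occurs: some oriented nearest-neighbour path started at
the origin satisfies `liminf_n (1/n) ∑_{i=1}^n 1_{x̄ᵢ closed} ≥ ρ`. -/
def RhoPerc {d : ℕ} (ρ : ℝ) : Set (ConfigD d) :=
  {ω | ∃ x : ℕ → Fin d → ℤ, IsOrientedPath x ∧
    ρ ≤ atTop.liminf fun n : ℕ =>
      (∑ i ∈ Finset.Icc 1 n, if ω (x i) then (0 : ℝ) else 1) / n}

/-!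
Close every open site of a Bernoulli(`p`) configuration independently with probability `1 - r`. The
result is a Bernoulli(`p * r`) configuration, and by the law of large numbers along a fixed path the
asymptotic density of open sites there is multiplied by `r`. Hence `ρ`-percolation at `q = 1 - p`
yields `ρ'`-percolation at `q' = 1 - p * r`, where `1 - ρ' = r * (1 - ρ)`, which says that
`(1 - q_c(ρ)) / (1 - ρ)` is nondecreasing in `ρ`. Since `1 - q_c(ρ)` itself is nonincreasing, it
cannot jump.
-/

open ProbabilityTheory
open scoped Topology NNReal

lemma continuousOn_of_antitoneOn_of_monotoneOn_mul {α 𝕜 : Type*}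
    [TopologicalSpace α] [LinearOrder α]
    [Field 𝕜] [LinearOrder 𝕜] [IsStrictOrderedRing 𝕜] [TopologicalSpace 𝕜] [OrderTopology 𝕜]
    {f u : α → 𝕜} {s : Set α} (hu : ContinuousOn u s) (hu0 : ∀ x ∈ s, 0 < u x)
    (hf : AntitoneOn f s) (hfu : MonotoneOn (fun x => f x * u x) s) : ContinuousOn f s := by
  intro x hx
  have hratio : Tendsto (fun y => f x * u x / u y) (𝓝[s] x) (𝓝 (f x)) := by
    have hlim := (tendsto_const_nhds (x := f x * u x)).div (hu x hx) (hu0 x hx).ne'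
    rwa [mul_div_cancel_right₀ _ (hu0 x hx).ne'] at hlim
  have hbetween : ∀ y ∈ s, f y ∈ Set.uIcc (f x) (f x * u x / u y) := by
    intro y hy
    rcases le_total x y with hxy | hyx
    · exact Set.mem_uIcc_of_ge ((div_le_iff₀ (hu0 y hy)).2 (hfu hx hy hxy)) (hf hx hy hxy)
    · exact Set.mem_uIcc_of_le (hf hy hx hyx) ((le_div_iff₀ (hu0 y hy)).2 (hfu hy hx hyx))
  refine tendsto_of_tendsto_of_tendsto_of_le_of_le'
    (by simpa using (tendsto_const_nhds (x := f x)).min hratio)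
    (by simpa using (tendsto_const_nhds (x := f x)).max hratio)
    (eventually_nhdsWithin_of_forall fun y hy => (hbetween y hy).1)
    (eventually_nhdsWithin_of_forall fun y hy => (hbetween y hy).2)

section StrongLaw

variable {Ω ι : Type*} [MeasurableSpace Ω] {μ : Measure Ω} {X : ι → Ω → ℝ} {s : ℕ → Finset ι}

lemma hasSubgaussianMGF_mono {Y : Ω → ℝ} {c c' : ℝ≥0} (h : HasSubgaussianMGF Y c μ)
    (hc : c ≤ c') : HasSubgaussianMGF Y c' μ :=
  ⟨h.integrable_exp_mul, fun t => (h.mgf_le t).trans (by gcongr)⟩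

lemma ae_eventually_sum_lt_of_hasSubgaussianMGF (hind : iIndepFun X μ) {c : ℝ≥0}
    (hX : ∀ i, HasSubgaussianMGF (X i) c μ) (hs : ∀ n, (s n).card = n) {δ : ℝ} (hδ : 0 < δ) :
    ∀ᵐ ω ∂μ, ∀ᶠ n : ℕ in atTop, ∑ i ∈ s n, X i ω < δ * n := by
  have := hind.isProbabilityMeasure
  -- Hoeffding's exponent has `c` in the denominator, where `c = 0` would give the trivial bound.
  have hX' (i : ι) : HasSubgaussianMGF (X i) (c + 1) μ := hasSubgaussianMGF_mono (hX i) (by simp)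
  have hoeffding (n : ℕ) : μ {ω | δ * n ≤ ∑ i ∈ s n, X i ω} ≤
      ENNReal.ofReal (Real.exp (n * -(δ ^ 2 / (2 * (c + 1))))) := by
    rw [← ofReal_measureReal]
    refine ENNReal.ofReal_le_ofReal ((HasSubgaussianMGF.measure_sum_ge_le_of_iIndepFun hind
      (fun i _ => hX' i) (by positivity)).trans_eq ?_)
    simp only [Finset.sum_const, hs, nsmul_eq_mul]
    push_cast
    field_simp
  have hsummable : ∑' n : ℕ, μ {ω | δ * n ≤ ∑ i ∈ s n, X i ω} ≠ ∞ :=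
    ne_top_of_le_ne_top
      (Real.summable_exp_nat_mul_iff.2 (neg_lt_zero.2 (by positivity))).tsum_ofReal_ne_top
      (ENNReal.tsum_le_tsum hoeffding)
  filter_upwards [ae_eventually_notMem hsummable] with ω hω
  simpa using hω

lemma ae_tendsto_sum_div_of_hasSubgaussianMGF (hind : iIndepFun X μ) {c : ℝ≥0}
    (hX : ∀ i, HasSubgaussianMGF (X i) c μ) (hs : ∀ n, (s n).card = n) :
    ∀ᵐ ω ∂μ, Tendsto (fun n : ℕ => (∑ i ∈ s n, X i ω) / n) atTop (𝓝 0) := by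
  have hpos (k : ℕ) : (0 : ℝ) < 1 / (k + 1) := Nat.one_div_pos_of_nat
  have hupper (k : ℕ) := ae_eventually_sum_lt_of_hasSubgaussianMGF hind hX hs (hpos k)
  have hlower (k : ℕ) := ae_eventually_sum_lt_of_hasSubgaussianMGF
    (hind.comp (fun _ => Neg.neg) fun _ => measurable_neg) (fun i => (hX i).neg) hs (hpos k)
  filter_upwards [ae_all_iff.2 hupper, ae_all_iff.2 hlower] with ω hω hω'
  refine Metric.tendsto_nhds.2 fun ε hε => ?_
  obtain ⟨k, hk⟩ := exists_nat_one_div_lt hε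
  filter_upwards [hω k, hω' k, eventually_gt_atTop 0] with n hn hn' hn0
  have hn0 : (0 : ℝ) < n := by exact_mod_cast hn0
  simp only [Function.comp_apply, Finset.sum_neg_distrib] at hn'
  rw [Real.dist_0_eq_abs, abs_div, Nat.abs_cast]
  exact ((div_lt_iff₀ hn0).2 (abs_lt.2 ⟨by linarith, hn⟩)).trans hk

lemma ae_tendsto_sum_sub_integral_div_of_mem_Icc (hind : iIndepFun X μ)
    (hm : ∀ i, AEMeasurable (X i) μ) {a b : ℝ} (hb : ∀ i, ∀ᵐ ω ∂μ, X i ω ∈ Set.Icc a b)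
    (hs : ∀ n, (s n).card = n) :
    ∀ᵐ ω ∂μ, Tendsto (fun n : ℕ => (∑ i ∈ s n, (X i ω - ∫ ω', X i ω' ∂μ)) / n) atTop (𝓝 0) :=
  have := hind.isProbabilityMeasure
  ae_tendsto_sum_div_of_hasSubgaussianMGF
    (hind.comp (fun i t => t - ∫ ω', X i ω' ∂μ) fun _ => measurable_id.sub_const _)
    (fun i => hasSubgaussianMGF_of_mem_Icc (hm i) (hb i)) hs

end StrongLaw

section BoolConfigurations

variable {ι : Type*}

lemma measurableSet_eq_true (x : ι) : MeasurableSet {ω : ι → Bool | ω x = true} :=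
  measurableSet_eq_fun (measurable_pi_apply x) measurable_const

lemma measurableSpace_pi_bool_eq_generateFrom :
    (MeasurableSpace.pi : MeasurableSpace (ι → Bool)) =
      MeasurableSpace.generateFrom {t | ∃ x ∈ Set.univ, {ω : ι → Bool | ω x = true} = t} := by
  apply le_antisymm
  · refine iSup_le fun x => measurable_iff_comap_le.1 ?_
    exact @measurable_to_bool _ (_) _ (MeasurableSpace.measurableSet_generateFrom ⟨x, trivial, rfl⟩)
  · refine MeasurableSpace.generateFrom_le ?_
    rintro _ ⟨x, -, rfl⟩
    exact measurableSet_eq_true x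

lemma measurableSet_forall_eq_true (s : Finset ι) :
    MeasurableSet {ω : ι → Bool | ∀ x ∈ s, ω x = true} := by
  simp only [Set.ofPred_forall]
  exact s.measurableSet_biInter fun x _ => measurableSet_eq_true x

lemma measure_ext_of_forall_eq_true {μ ν : Measure (ι → Bool)} [IsFiniteMeasure μ]
    (h : ∀ s : Finset ι, μ {ω | ∀ x ∈ s, ω x = true} = ν {ω | ∀ x ∈ s, ω x = true}) :
    μ = ν := by
  refine ext_of_generate_finite (piiUnionInter (fun x => {{ω : ι → Bool | ω x = true}}) Set.univ)
    ?_ (isPiSystem_piiUnionInter _ (fun x => IsPiSystem.singleton _) _) ?_ (by simpa using h ∅)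
  · rw [generateFrom_piiUnionInter_singleton_left, measurableSpace_pi_bool_eq_generateFrom]
  · rw [piiUnionInter_singleton_left]
    rintro _ ⟨s, -, rfl⟩
    simpa only [Set.ofPred_forall] using h s

lemma measurable_inf_config : Measurable fun z : (ι → Bool) × (ι → Bool) => z.1 ⊓ z.2 :=
  measurable_pi_lambda _ fun x =>
    (measurable_of_countable fun b : Bool × Bool => b.1 ⊓ b.2).comp
      (f := fun z : (ι → Bool) × (ι → Bool) => (z.1 x, z.2 x)) (by fun_prop)

end BoolConfigurations

namespace IsBernoulli

variable {ι : Type*} {p r : ℝ} {μ ν π : Measure (ι → Bool)}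

lemma measure_forall_eq_true (h : IsBernoulli p μ) (s : Finset ι) :
    μ {ω | ∀ x ∈ s, ω x = true} = ENNReal.ofReal p ^ s.card := by
  simpa using h.2 s fun _ => true

lemma measure_eq_true (h : IsBernoulli p μ) (x : ι) :
    μ {ω | ω x = true} = ENNReal.ofReal p := by
  simpa using h.measure_forall_eq_true {x}

lemma measure_eq_false (h : IsBernoulli p μ) (x : ι) :
    μ {ω | ω x = false} = ENNReal.ofReal (1 - p) := by
  simpa using h.2 {x} fun _ => false

lemma mem_Icc [Nonempty ι] (h : IsBernoulli p μ) : p ∈ Set.Icc (0 : ℝ) 1 := by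
  have := h.1
  obtain ⟨x⟩ := ‹Nonempty ι›
  have hopen : ENNReal.ofReal p ≤ 1 := h.measure_eq_true x ▸ prob_le_one
  have hclosed : ENNReal.ofReal (1 - p) ≤ 1 := h.measure_eq_false x ▸ prob_le_one
  rw [ENNReal.ofReal_le_one] at hopen hclosed
  exact ⟨by linarith, hopen⟩

lemma iIndepFun_eval (h : IsBernoulli p μ) : iIndepFun (fun (x : ι) (ω : ι → Bool) => ω x) μ := by
  have hset : iIndepSet (fun x : ι => {ω : ι → Bool | ω x = true}) μ := by
    refine (iIndepSet_iff_meas_biInter measurableSet_eq_true).2 fun s => ?_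
    simpa only [Set.ofPred_forall, h.measure_eq_true, Finset.prod_const] using
      h.measure_forall_eq_true s
  refine iIndep_of_iIndep_of_le hset fun x => measurable_iff_comap_le.1 ?_
  exact @measurable_to_bool _ (_) _ (MeasurableSpace.measurableSet_generateFrom rfl)

lemma integral_comp_eval (h : IsBernoulli p μ) (x : ι) (f : Bool → ℝ) :
    ∫ ω, f (ω x) ∂μ = p * f true + (1 - p) * f false := by
  have := h.1
  have : Nonempty ι := ⟨x⟩
  have hx : Measurable fun ω : ι → Bool => ω x := measurable_pi_apply x
  have hreal_true : (μ.map fun ω => ω x).real {true} = p := by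
    rw [map_measureReal_apply hx (measurableSet_singleton _)]
    exact (congrArg ENNReal.toReal (h.measure_eq_true x)).trans
      (ENNReal.toReal_ofReal h.mem_Icc.1)
  have hreal_false : (μ.map fun ω => ω x).real {false} = 1 - p := by
    rw [map_measureReal_apply hx (measurableSet_singleton _)]
    exact (congrArg ENNReal.toReal (h.measure_eq_false x)).trans
      (ENNReal.toReal_ofReal (sub_nonneg.2 h.mem_Icc.2))
  have := Measure.isProbabilityMeasure_map (μ := μ) hx.aemeasurable
  rw [← integral_map hx.aemeasurable (f := f) (measurable_of_countable f).aestronglyMeasurable,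
    integral_fintype .of_finite]
  simp [hreal_true, hreal_false]

lemma map_inf_prod [Nonempty ι] (hμ : IsBernoulli p μ) (hν : IsBernoulli r ν)
    (hπ : IsBernoulli (p * r) π) : (μ.prod ν).map (fun z => z.1 ⊓ z.2) = π := by
  have := hμ.1
  have := hν.1
  refine measure_ext_of_forall_eq_true fun s => ?_
  have hpreimage : (fun z : (ι → Bool) × (ι → Bool) => z.1 ⊓ z.2) ⁻¹' {ω | ∀ x ∈ s, ω x = true} =
      {ω | ∀ x ∈ s, ω x = true} ×ˢ {ω | ∀ x ∈ s, ω x = true} := by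
    ext z
    simp [forall_and]
  rw [Measure.map_apply measurable_inf_config (measurableSet_forall_eq_true s), hpreimage,
    Measure.prod_prod, hμ.measure_forall_eq_true, hν.measure_forall_eq_true,
    hπ.measure_forall_eq_true, ENNReal.ofReal_mul hμ.mem_Icc.1, mul_pow]

end IsBernoulli

section ClosedDensity

variable {ι : Type*}

/-- The proportion of closed sites of `ω` among the first `n` sites `x 1, …, x n` that the sequence
`x` visits after its starting point `x 0`; it is `0` for `n = 0`. Its lower limit along an oriented
path is the quantity compared with `ρ` in the definition of `ρ`-percolation. -/
noncomputable def closedDensity (ω : ι → Bool) (x : ℕ → ι) (n : ℕ) : ℝ :=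
  (∑ i ∈ Finset.Icc 1 n, if ω (x i) then (0 : ℝ) else 1) / n

lemma closedDensity_mem_Icc (ω : ι → Bool) (x : ℕ → ι) (n : ℕ) :
    closedDensity ω x n ∈ Set.Icc (0 : ℝ) 1 := by
  have hterm (i : ℕ) : (if ω (x i) then (0 : ℝ) else 1) ∈ Set.Icc (0 : ℝ) 1 := by
    split_ifs <;> simp
  refine ⟨div_nonneg (Finset.sum_nonneg fun i _ => (hterm i).1) n.cast_nonneg,
    div_le_one_of_le₀ ?_ n.cast_nonneg⟩
  simpa using Finset.sum_le_card_nsmul (Finset.Icc 1 n) _ 1 fun i _ => (hterm i).2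

lemma le_liminf_closedDensity_iff {ω : ι → Bool} {x : ℕ → ι} {ρ : ℝ} :
    ρ ≤ atTop.liminf (closedDensity ω x) ↔ ∀ y < ρ, ∀ᶠ n in atTop, y < closedDensity ω x n :=
  le_liminf_iff
    (isBoundedUnder_of ⟨1, fun n => (closedDensity_mem_Icc ω x n).2⟩).isCoboundedUnder_ge
    (isBoundedUnder_of ⟨0, fun n => (closedDensity_mem_Icc ω x n).1⟩)

lemma IsBernoulli.ae_tendsto_closedDensity_inf {r : ℝ} {ν : Measure (ι → Bool)}
    (hν : IsBernoulli r ν) {x : ℕ → ι} (hx : Function.Injective x) (ω : ι → Bool) :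
    ∀ᵐ η ∂ν, Tendsto
      (fun n => closedDensity (ω ⊓ η) x n - (1 - r * (1 - closedDensity ω x n))) atTop (𝓝 0) := by
  let X (i : ℕ) (η : ι → Bool) : ℝ := if (ω ⊓ η) (x i) then 0 else 1
  have hmeas (i : ℕ) : Measurable fun b : Bool => if ω (x i) ⊓ b then (0 : ℝ) else 1 :=
    measurable_of_countable _
  have hind : iIndepFun X ν := (hν.iIndepFun_eval.precomp hx).comp _ hmeas
  have hmean (i : ℕ) : ∫ η, X i η ∂ν = 1 - r * (1 - if ω (x i) then 0 else 1) := by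
    refine (hν.integral_comp_eval (x i) fun b => if ω (x i) ⊓ b then (0 : ℝ) else 1).trans ?_
    cases ω (x i) <;> simp
  have hlln := ae_tendsto_sum_sub_integral_div_of_mem_Icc hind
    (fun i => ((hmeas i).comp (measurable_pi_apply (x i))).aemeasurable) (a := 0) (b := 1)
    (fun i => ae_of_all _ fun η => by dsimp only [X]; split_ifs <;> simp)
    (s := fun n => Finset.Icc 1 n) (by simp)
  filter_upwards [hlln] with η hη
  refine hη.congr' ?_
  filter_upwards [eventually_ne_atTop 0] with n hn
  have hn : (n : ℝ) ≠ 0 := by exact_mod_cast hn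
  simp only [hmean, X, closedDensity, Finset.sum_sub_distrib, ← Finset.mul_sum, Finset.sum_const,
    Nat.card_Icc, add_tsub_cancel_right, nsmul_eq_mul]
  field_simp

end ClosedDensity

section OrientedPaths

variable {d : ℕ}

lemma IsOrientedPath.sum_apply {x : ℕ → Fin d → ℤ} (hx : IsOrientedPath x) (n : ℕ) :
    ∑ j, x n j = n := by
  induction n with
  | zero => simp [hx.1]
  | succ n ih =>
    obtain ⟨i, hi⟩ := hx.2 n
    simp [hi, Finset.sum_add_distrib, ih]

lemma IsOrientedPath.injective {x : ℕ → Fin d → ℤ} (hx : IsOrientedPath x) :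
    Function.Injective x := fun m n hmn => by
  have := hx.sum_apply m
  rw [hmn, hx.sum_apply n] at this
  exact_mod_cast this.symm

lemma isOrientedPath_single (i : Fin d) : IsOrientedPath fun n : ℕ => Pi.single i (n : ℤ) :=
  ⟨by simp, fun n => ⟨i, by simp [← Pi.single_add]⟩⟩

lemma mem_rhoPerc_iff {ω : ConfigD d} {ρ : ℝ} :
    ω ∈ RhoPerc ρ ↔ ∃ x : ℕ → Fin d → ℤ, IsOrientedPath x ∧
      ∀ y < ρ, ∀ᶠ n in atTop, y < closedDensity ω x n :=
  exists_congr fun _ => and_congr_right fun _ => le_liminf_closedDensity_iff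

lemma antitone_rhoPerc : Antitone (RhoPerc (d := d)) :=
  fun _ _ h _ ⟨x, hx, hl⟩ => ⟨x, hx, h.trans hl⟩

lemma rhoPerc_eq_univ_of_nonpos [NeZero d] {ρ : ℝ} (hρ : ρ ≤ 0) : RhoPerc (d := d) ρ = Set.univ :=
  Set.eq_univ_of_forall fun ω => mem_rhoPerc_iff.2 ⟨_, isOrientedPath_single 0, fun _ hy =>
    .of_forall fun n => (hy.trans_le hρ).trans_le (closedDensity_mem_Icc ω _ n).1⟩

end OrientedPaths

section Thinning

variable {d : ℕ} {p r ρ : ℝ} {μ ν π : Measure (ConfigD d)}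

lemma ae_inf_mem_rhoPerc (hν : IsBernoulli r ν) {ω : ConfigD d} (hω : ω ∈ RhoPerc ρ) :
    ∀ᵐ η ∂ν, ω ⊓ η ∈ RhoPerc (1 - r * (1 - ρ)) := by
  obtain ⟨x, hx, hωx⟩ := mem_rhoPerc_iff.1 hω
  filter_upwards [hν.ae_tendsto_closedDensity_inf hx.injective ω] with η hη
  refine mem_rhoPerc_iff.2 ⟨x, hx, fun y hy => ?_⟩
  obtain ⟨δ, hδ, hyδ⟩ : ∃ δ > 0, y + 2 * δ = 1 - r * (1 - ρ) :=
    ⟨(1 - r * (1 - ρ) - y) / 2, by linarith, by ring⟩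
  filter_upwards [hωx (ρ - δ) (by linarith), hη.eventually_const_lt (neg_lt_zero.2 hδ)]
    with n hdensity hfluctuation
  nlinarith [hν.mem_Icc.1, hν.mem_Icc.2]

lemma measure_rhoPerc_ne_zero_of_thinning (hμ : IsBernoulli p μ) (hν : IsBernoulli r ν)
    (hπ : IsBernoulli (p * r) π) (h : μ (RhoPerc ρ) ≠ 0) :
    π (RhoPerc (1 - r * (1 - ρ))) ≠ 0 := by
  have := hμ.1
  have := hν.1
  refine mt (fun hzero => ?_) h
  rw [← hμ.map_inf_prod hν hπ, measure_eq_zero_iff_ae_notMem] at hzero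
  have hprod := Measure.ae_ae_of_ae_prod (ae_of_ae_map measurable_inf_config.aemeasurable hzero)
  rw [measure_eq_zero_iff_ae_notMem]
  filter_upwards [hprod] with ω hω hmem
  obtain ⟨η, hnotMem, hη⟩ := (hω.and (ae_inf_mem_rhoPerc hν hmem)).exists
  exact hnotMem hη

end Thinning

section Criticality

variable {Ω : Type*} [MeasurableSpace Ω] {P : ℝ → Measure Ω} {A A' : Set Ω} {c c' r : ℝ}

/-- `c` is the critical value of `q = 1 - p` for the event `A` under the measures `P p`,
`p ∈ [0, 1]`: below it `A` has probability `0`, above it probability `1`. For `A = RhoPerc ρ` this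
characterizes `q_c(ρ, d)`. -/
def IsCritical (P : ℝ → Measure Ω) (A : Set Ω) (c : ℝ) : Prop :=
  c ∈ Set.Icc (0 : ℝ) 1 ∧ (∀ q, 0 ≤ q → q < c → P (1 - q) A = 0) ∧
    ∀ q, c < q → q ≤ 1 → P (1 - q) A = 1

lemma isCritical_univ (hP : ∀ p ∈ Set.Icc (0 : ℝ) 1, IsProbabilityMeasure (P p)) :
    IsCritical P Set.univ 0 :=
  ⟨by simp, fun q hq hq' => absurd hq hq'.not_ge, fun q hq hq1 =>
    (hP (1 - q) ⟨by linarith, by linarith⟩).measure_univ⟩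

lemma IsCritical.mul_one_sub_le (h : IsCritical P A c) (h' : IsCritical P A' c')
    (hr : r ∈ Set.Icc (0 : ℝ) 1)
    (htransfer : ∀ p ∈ Set.Icc (0 : ℝ) 1, P p A ≠ 0 → P (p * r) A' ≠ 0) :
    r * (1 - c) ≤ 1 - c' := by
  obtain ⟨⟨hc0, hc1⟩, -, hone⟩ := h
  obtain ⟨⟨-, hc'1⟩, hzero, -⟩ := h'
  by_contra! hlt
  have hr0 : 0 < r := by nlinarith [hr.1]
  obtain ⟨p, hp, hpc⟩ := exists_between ((div_lt_iff₀' hr0).2 hlt)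
  have hp0 : 0 ≤ p := (div_nonneg (by linarith) hr0.le).trans hp.le
  rw [div_lt_iff₀ hr0] at hp
  have hA : P p A = 1 := by simpa using hone (1 - p) (by linarith) (by linarith)
  have hA' : P (p * r) A' = 0 := by
    simpa using hzero (1 - p * r) (by nlinarith [hr.2]) (by linarith)
  exact htransfer p ⟨hp0, by linarith⟩ (by simp [hA]) hA'

end Criticality

section CriticalValue

variable {d : ℕ} {P : ℝ → Measure (ConfigD d)} {qc : ℝ → ℝ} {s : Set ℝ}

lemma antitoneOn_one_sub_of_isCritical (hqc : ∀ ρ ∈ s, IsCritical P (RhoPerc ρ) (qc ρ)) :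
    AntitoneOn (fun ρ => 1 - qc ρ) s := fun ρ hρ ρ' hρ' hle => by
  simpa only [one_mul] using (hqc ρ' hρ').mul_one_sub_le (hqc ρ hρ) (r := 1) (by simp)
    fun p _ h => by simpa only [mul_one] using mt (measure_mono_null (antitone_rhoPerc hle)) h

lemma monotoneOn_one_sub_mul_inv_of_isCritical
    (hP : ∀ p ∈ Set.Icc (0 : ℝ) 1, IsBernoulli p (P p)) (hs : ∀ ρ ∈ s, ρ < 1)
    (hqc : ∀ ρ ∈ s, IsCritical P (RhoPerc ρ) (qc ρ)) :
    MonotoneOn (fun ρ => (1 - qc ρ) * (1 - ρ)⁻¹) s := by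
  intro ρ hρ ρ' hρ' hle
  have hpos : 0 < 1 - ρ := sub_pos.2 (hs ρ hρ)
  have hpos' : 0 < 1 - ρ' := sub_pos.2 (hs ρ' hρ')
  set r := (1 - ρ') / (1 - ρ) with hr_def
  have hr : r ∈ Set.Icc (0 : ℝ) 1 :=
    ⟨div_nonneg hpos'.le hpos.le, (div_le_one hpos).2 (by linarith)⟩
  have hρ'_eq : 1 - r * (1 - ρ) = ρ' := by rw [hr_def, div_mul_cancel₀ _ hpos.ne']; ring
  have hthin : r * (1 - qc ρ) ≤ 1 - qc ρ' :=
    (hqc ρ hρ).mul_one_sub_le (hqc ρ' hρ') hr fun p hp h => hρ'_eq ▸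
      measure_rhoPerc_ne_zero_of_thinning (hP p hp) (hP r hr)
        (hP _ ⟨mul_nonneg hp.1 hr.1, mul_le_one₀ hp.2 hr.1 hr.2⟩) h
  calc (1 - qc ρ) * (1 - ρ)⁻¹ = r * (1 - qc ρ) * (1 - ρ')⁻¹ := by rw [hr_def]; field_simp
    _ ≤ (1 - qc ρ') * (1 - ρ')⁻¹ := by gcongr

end CriticalValue

/-- Continuity of the critical probability of `ρ`-percolation:
for every `d ≥ 1`, the map `ρ ↦ q_c(ρ,d)` is continuous on `[0,1)`, where `q_c(0,d) = 0`
and for `ρ ∈ (0,1]` the critical probability `q_c(ρ,d)` is characterized by: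
`ρ`-percolation a.s. does not occur for `q < q_c(ρ,d)` and a.s. occurs for
`q > q_c(ρ,d)`. -/
theorem qc_rho_percolation_continuous
    {d : ℕ} (hd : 1 ≤ d)
    (P : ℝ → Measure (ConfigD d)) (hP : ∀ p ∈ Set.Icc (0 : ℝ) 1, IsBernoulli p (P p))
    (qc : ℝ → ℝ) (hqc0 : qc 0 = 0)
    (hqc : ∀ ρ ∈ Set.Ioc (0 : ℝ) 1, qc ρ ∈ Set.Icc (0 : ℝ) 1 ∧
      (∀ q, 0 ≤ q → q < qc ρ → P (1 - q) (RhoPerc ρ) = 0) ∧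
      (∀ q, qc ρ < q → q ≤ 1 → P (1 - q) (RhoPerc ρ) = 1)) :
    ContinuousOn qc (Set.Ico 0 1) := by
  have : NeZero d := ⟨by lia⟩
  have hcrit : ∀ ρ ∈ Set.Ico (0 : ℝ) 1, IsCritical P (RhoPerc ρ) (qc ρ) := by
    rintro ρ ⟨hρ0, hρ1⟩
    rcases hρ0.eq_or_lt with rfl | hρ0
    · rw [hqc0, rhoPerc_eq_univ_of_nonpos le_rfl]
      exact isCritical_univ fun p hp => (hP p hp).1
    · exact hqc ρ ⟨hρ0, hρ1.le⟩
  have hcont : ContinuousOn (fun ρ => 1 - qc ρ) (Set.Ico 0 1) :=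
    continuousOn_of_antitoneOn_of_monotoneOn_mul
      ((continuousOn_const.sub continuousOn_id).inv₀ fun ρ hρ => (sub_pos.2 hρ.2).ne')
      (fun ρ hρ => inv_pos.2 (sub_pos.2 hρ.2))
      (antitoneOn_one_sub_of_isCritical hcrit)
      (monotoneOn_one_sub_mul_inv_of_isCritical hP (fun ρ hρ => hρ.2) hcrit)
  exact ((continuousOn_const (c := (1 : ℝ))).sub hcont).congr fun ρ _ => by simp
end

section
/- Criterion for non-existence of an open Lipschitz surface: fix α ∈ (0,1), d ∈ ℕ and η = (1,…,1) ∈ {−1,0,+1}^d, and define the random variable T := inf{m ∈ ℕ₀ : ∃ x̄ ∈ ℕ₀^d with ‖x̄‖₁ = m such that the site (x̄, ‖x̄‖₁) ∈ ℤ^{d+1} is closed}. If p ∈ (0,1) satisfies E_p[T] < 1/(1−α), then P_p(LIP^{α,d}_η) = 0, i.e. P_p-almost surely there exists no open Lipschitz surface above L^{α,d}_η; consequently 1 − p ≥ q_L(α,d,d). -/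
open MeasureTheory Filter ENNReal

/-- The random variable `T`: the least `m ∈ ℕ₀` such that some site `(x̄, ‖x̄‖₁)` with
`x̄ ∈ ℕ₀^d` and `‖x̄‖₁ = m` is closed (with value `∞` if there is no such site), as an
extended nonnegative real. -/
noncomputable def Tvar {d : ℕ} (ω : Config d) : ℝ≥0∞ :=
  sInf {r : ℝ≥0∞ | ∃ m : ℕ, r = m ∧ ∃ x : Fin d → ℤ, (∀ i, 0 ≤ x i) ∧
    (∑ i, |x i|) = m ∧ ω (Fin.snoc x (m : ℤ)) = false}

/-!
Fix `N` and walk downwards through the hyperplanes `{(x, c + ∑ i, x i)}` of levels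
`c = N, N - 1, …`: in the hyperplane of level `c`, jump from the current `x` to the nearest closed
site above `x + ℕ₀^d`. These jumps read disjoint sets of sites, and the law of a jump does not
depend on the position it starts from, so they are i.i.d. and their coordinate sums have the law
of `T`. By the strong law of large numbers the coordinate sum after `k` jumps is about `k E[T]`,
and when `E[T] < 1 / (1 - α)` the hyperplane of level `N - k` is eventually below the tilted plane
at that position.

A Lipschitz function rises by at most `∑ i, z i` along `z ≥ 0`. Hence an open Lipschitz surface
that is above the hyperplane of level `c - 1` at the end of a jump is at or above the closed site
there, so strictly above it, so above the hyperplane of level `c` at the start of the jump. Going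
back along the walk, every open Lipschitz surface `F` above the tilted plane has `N < F 0`, for
every `N`.
-/

open ProbabilityTheory Function Topology

lemma eq_infinitePi_of_forall_finset {ι X : Type*} [Countable X] [MeasurableSpace X]
    [MeasurableSingletonClass X] {μ : ι → Measure X} [∀ i, IsProbabilityMeasure (μ i)]
    {P : Measure (ι → X)}
    (h : ∀ (s : Finset ι) (f : ι → X), P {ω | ∀ i ∈ s, ω i = f i} = ∏ i ∈ s, μ i {f i}) :
    P = Measure.infinitePi μ := by
  classical
  refine ((Measure.isProjectiveLimit_infinitePi μ).unique fun s => ?_).symm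
  refine Measure.ext_of_singleton fun f => ?_
  obtain ⟨f, rfl⟩ : ∃ f' : ι → X, s.restrict f' = f :=
    ⟨fun i => if hi : i ∈ s then f ⟨i, hi⟩ else (nonempty_of_isProbabilityMeasure (μ i)).some,
      by ext i; simp⟩
  have hcylinder : s.restrict (π := fun _ => X) ⁻¹' {s.restrict f} = {ω | ∀ i ∈ s, ω i = f i} := by
    ext ω
    simp only [Set.mem_preimage, Set.mem_singleton_iff, funext_iff, Finset.restrict,
      Subtype.forall, Set.mem_ofPred_eq]
  rw [Measure.map_apply (by fun_prop) (MeasurableSet.singleton _), hcylinder, h,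
    Measure.pi_singleton, ← Finset.prod_coe_sort]
  rfl

lemma eventually_add_mul_le_natCast {s : ℕ → ℝ} {m c : ℝ}
    (hs : Tendsto (fun n : ℕ => s n / n) atTop (𝓝 m)) (hcm : c * m < 1) (a : ℝ) :
    ∀ᶠ n : ℕ in atTop, a + c * s n ≤ n := by
  have hlim : Tendsto (fun n : ℕ => a / n + c * (s n / n)) atTop (𝓝 (0 + c * m)) :=
    (tendsto_const_div_atTop_nhds_zero_nat a).add (hs.const_mul c)
  have hlim_lt : 0 + c * m < 1 := by rwa [zero_add]
  filter_upwards [hlim.eventually_le_const hlim_lt, eventually_gt_atTop 0] with n hn hn0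
  have hn0' : (0 : ℝ) < n := by exact_mod_cast hn0
  rwa [mul_div_assoc', ← add_div, div_le_one hn0'] at hn

lemma integrable_and_integral_lt_of_lintegral_lt {Ω : Type*} {mΩ : MeasurableSpace Ω}
    {P : Measure Ω} {f : Ω → ℝ} (hf : AEStronglyMeasurable f P) (hf0 : 0 ≤ᵐ[P] f) {c : ℝ}
    (h : ∫⁻ ω, ENNReal.ofReal (f ω) ∂P < ENNReal.ofReal c) :
    Integrable f P ∧ ∫ ω, f ω ∂P < c := by
  have hfin : ∫⁻ ω, ENNReal.ofReal (f ω) ∂P < ⊤ := h.trans ENNReal.ofReal_lt_top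
  refine ⟨⟨hf, (hasFiniteIntegral_iff_ofReal hf0).2 hfin⟩, ?_⟩
  rwa [integral_eq_lintegral_of_nonneg_ae hf0 hf, ← ENNReal.lt_ofReal_iff_toReal_lt hfin.ne]

lemma exists_measurable_forall_exists_imp {Ω E : Type*} [MeasurableSpace Ω] [MeasurableSpace E]
    [Countable E] [Nonempty E] {p : Ω → E → Prop} (hp : ∀ e, MeasurableSet {ω | p ω e}) :
    ∃ X : Ω → E, Measurable X ∧ ∀ ω, (∃ e, p ω e) → p ω (X ω) := by
  classical
  obtain ⟨u, hu⟩ := exists_surjective_nat E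
  have hex : ∀ ω, ∃ n, (∃ e, p ω e) → p ω (u n) := fun ω => by
    by_cases h : ∃ e, p ω e
    · obtain ⟨e, he⟩ := h
      obtain ⟨n, rfl⟩ := hu e
      exact ⟨n, fun _ => he⟩
    · exact ⟨0, fun h' => (h h').elim⟩
  have hmeas : ∀ n, MeasurableSet {ω | (∃ e, p ω e) → p ω (u n)} := fun n =>
    measurableSet_setOfPred.2 <| .imp (.exists fun e => measurableSet_setOfPred.1 (hp e))
      (measurableSet_setOfPred.1 (hp (u n)))
  exact ⟨fun ω => u (Nat.find (hex ω)), Measurable.of_discrete.comp (measurable_find hex hmeas),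
    fun ω => Nat.find_spec (hex ω)⟩

section Independence

lemma iIndepFun_comp_infinitePi {ι κ τ X : Type*} [MeasurableSpace X] (b : Measure X)
    [IsProbabilityMeasure b] {e : κ → τ → ι} (he : Injective (uncurry e)) :
    iIndepFun (fun k (ω : ι → X) t => ω (e k t)) (Measure.infinitePi fun _ => b) := by
  rw [iIndepFun_iff_map_fun_eq_infinitePi_map (by fun_prop)]
  have hcol : ∀ k, (Measure.infinitePi fun _ : ι => b).map (fun ω t => ω (e k t)) =
      Measure.infinitePi fun _ => b := fun k =>
    Measure.map_infinitePi_infinitePi_of_inj (P := fun _ => b)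
      (he.comp (Prod.mk_right_injective k))
  simp_rw [hcol]
  rw [← Measure.infinitePi_map_curry fun _ _ => b,
    ← Measure.map_infinitePi_infinitePi_of_inj (P := fun _ : ι => b) he,
    Measure.map_map (by fun_prop) (by fun_prop)]
  rfl

variable {Ω E F H D : Type*} {mΩ : MeasurableSpace Ω} {P : Measure Ω} [IsProbabilityMeasure P]
  [MeasurableSpace E] [MeasurableSpace F] [MeasurableSpace H] [MeasurableSpace D]
  {X : Ω → E} {Y : Ω → H} {Z : Ω → F} {ν : Measure H} {μ : Measure D} {g : E → H → D}

lemma hasLaw_prodMk_of_forall_hasLaw {θ : Measure E} (hX : HasLaw X θ P) (hY : HasLaw Y ν P)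
    (hXY : X ⟂ᵢ[P] Y) (hg : Measurable (uncurry g)) (hμ : ∀ x, HasLaw (g x) μ ν) :
    HasLaw (fun ω => (X ω, g (X ω) (Y ω))) (θ.prod μ) P := by
  have := hX.isProbabilityMeasure_iff.1 ‹_›
  have := hY.isProbabilityMeasure_iff.1 ‹_›
  exact ((MeasurePreserving.id θ).skew_product hg (ae_of_all θ fun x => (hμ x).map_eq)).hasLaw.comp
    (hXY.hasLaw_prod hX hY)

lemma hasLaw_apply_of_forall_hasLaw (hX : AEMeasurable X P) (hY : HasLaw Y ν P)
    (hXY : X ⟂ᵢ[P] Y) (hg : Measurable (uncurry g)) (hμ : ∀ x, HasLaw (g x) μ ν) :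
    HasLaw (fun ω => g (X ω) (Y ω)) μ P := by
  have := Measure.isProbabilityMeasure_map hX
  obtain ⟨ω⟩ := nonempty_of_isProbabilityMeasure P
  have := hY.isProbabilityMeasure_iff.1 ‹_›
  have := (hμ (X ω)).isProbabilityMeasure_iff.1 ‹_›
  exact measurePreserving_snd.hasLaw.comp
    (hasLaw_prodMk_of_forall_hasLaw ⟨hX, rfl⟩ hY hXY hg hμ)

lemma indepFun_apply_of_forall_hasLaw (hZ : AEMeasurable Z P) (hX : AEMeasurable X P)
    (hY : HasLaw Y ν P) (hZXY : (fun ω => (Z ω, X ω)) ⟂ᵢ[P] Y) (hg : Measurable (uncurry g))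
    (hμ : ∀ x, HasLaw (g x) μ ν) : Z ⟂ᵢ[P] fun ω => g (X ω) (Y ω) := by
  have hZX : AEMeasurable (fun ω => (Z ω, X ω)) P := hZ.prodMk hX
  have hlaw : HasLaw (fun ω => g (X ω) (Y ω)) μ P :=
    hasLaw_apply_of_forall_hasLaw hX hY (hZXY.comp measurable_snd measurable_id) hg hμ
  have hg' : Measurable (uncurry fun zx : F × E => g zx.2) :=
    hg.comp (measurable_snd.prodMap measurable_id)
  have hind : (fun ω => (Z ω, X ω)) ⟂ᵢ[P] fun ω => g (X ω) (Y ω) :=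
    (indepFun_iff_hasLaw_prodMk_prod ⟨hZX, rfl⟩ hlaw).2
      (hasLaw_prodMk_of_forall_hasLaw ⟨hZX, rfl⟩ hY hZXY hg' fun zx => hμ zx.2)
  exact hind.comp measurable_fst measurable_id

end Independence

section StrictPast

variable {Ω F H : Type*} [MeasurableSpace F] [MeasurableSpace H]

/-- The σ-algebra generated by the variables `Y j` with `j < k`. -/
@[reducible] def strictPast (Y : ℕ → Ω → H) (k : ℕ) : MeasurableSpace Ω :=
  ⨆ j ∈ Set.Iio k, MeasurableSpace.comap (Y j) inferInstance

lemma strictPast_mono (Y : ℕ → Ω → H) : Monotone (strictPast Y) := fun _ _ h =>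
  biSup_mono fun _ hj => hj.trans_le h

lemma measurable_strictPast (Y : ℕ → Ω → H) {j k : ℕ} (hjk : j < k) :
    Measurable[strictPast Y k] (Y j) :=
  measurable_iff_comap_le.2 (le_iSup₂_of_le j hjk le_rfl)

variable {mΩ : MeasurableSpace Ω} {P : Measure Ω} {Y : ℕ → Ω → H}

lemma strictPast_le (hY : ∀ k, Measurable (Y k)) (k : ℕ) : strictPast Y k ≤ mΩ :=
  iSup₂_le fun j _ => (hY j).comap_le

lemma indepFun_of_measurable_strictPast {X : Ω → F} {k : ℕ} (hY : ∀ k, Measurable (Y k))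
    (hind : iIndepFun Y P) (hX : Measurable[strictPast Y k] X) : X ⟂ᵢ[P] Y k := by
  rw [IndepFun_iff_Indep]
  have hpast := indep_iSup_of_disjoint (fun j => (hY j).comap_le) hind.iIndep
    (S := Set.Iio k) (T := {k}) (by simp)
  rw [iSup_singleton] at hpast
  exact indep_of_indep_of_le_left hpast hX.comap_le

end StrictPast

section DrivenWalk

variable {Ω E H : Type*} [AddMonoid E]

/-- The walk started at `0` which reads the environment `y k` at time `k` and jumps from its
current position `x` by `g x (y k)`. -/
def drivenWalk (g : E → H → E) (y : ℕ → H) : ℕ → E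
  | 0 => 0
  | k + 1 => drivenWalk g y k + g (drivenWalk g y k) (y k)

/-- The increment of `drivenWalk g y` at time `k`. -/
def drivenStep (g : E → H → E) (y : ℕ → H) (k : ℕ) : E :=
  g (drivenWalk g y k) (y k)

lemma drivenWalk_succ (g : E → H → E) (y : ℕ → H) (k : ℕ) :
    drivenWalk g y (k + 1) = drivenWalk g y k + drivenStep g y k :=
  rfl

lemma map_drivenWalk {M : Type*} [AddCommMonoid M] (f : E →+ M) (g : E → H → E) (y : ℕ → H)
    (n : ℕ) : f (drivenWalk g y n) = ∑ k ∈ Finset.range n, f (drivenStep g y k) := by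
  induction n with
  | zero => exact map_zero f
  | succ n ih => rw [drivenWalk_succ, map_add, ih, Finset.sum_range_succ]

variable [MeasurableSpace E] [MeasurableSpace H] [MeasurableAdd₂ E] {g : E → H → E}

lemma measurable_strictPast_drivenWalk (hg : Measurable (uncurry g)) (Y : ℕ → Ω → H) (k : ℕ) :
    Measurable[strictPast Y k] fun ω => drivenWalk g (Y · ω) k := by
  induction k with
  | zero => exact measurable_const
  | succ k ih =>
    have hwalk := ih.mono (strictPast_mono Y k.le_succ) le_rfl
    exact hwalk.add (hg.comp (hwalk.prodMk (measurable_strictPast Y k.lt_succ_self)))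

lemma measurable_strictPast_drivenStep (hg : Measurable (uncurry g)) (Y : ℕ → Ω → H) {j k : ℕ}
    (hjk : j < k) : Measurable[strictPast Y k] fun ω => drivenStep g (Y · ω) j :=
  hg.comp (((measurable_strictPast_drivenWalk hg Y j).mono (strictPast_mono Y hjk.le) le_rfl).prodMk
    (measurable_strictPast Y hjk))

variable {mΩ : MeasurableSpace Ω} {P : Measure Ω} {Y : ℕ → Ω → H} {ν : Measure H} {μ : Measure E}

lemma hasLaw_drivenStep [IsProbabilityMeasure P] (hg : Measurable (uncurry g))
    (hY : ∀ k, Measurable (Y k)) (hind : iIndepFun Y P)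
    (hν : ∀ k, HasLaw (Y k) ν P) (hμ : ∀ x, HasLaw (g x) μ ν) (k : ℕ) :
    HasLaw (fun ω => drivenStep g (Y · ω) k) μ P :=
  have hwalk := measurable_strictPast_drivenWalk hg Y k
  have hwalk_ae := (hwalk.mono (strictPast_le hY k) le_rfl).aemeasurable (μ := P)
  hasLaw_apply_of_forall_hasLaw (X := fun ω => drivenWalk g (Y · ω) k) hwalk_ae (hν k)
    (indepFun_of_measurable_strictPast hY hind hwalk) hg hμ

lemma indepFun_drivenStep [IsProbabilityMeasure P] (hg : Measurable (uncurry g))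
    (hY : ∀ k, Measurable (Y k)) (hind : iIndepFun Y P)
    (hν : ∀ k, HasLaw (Y k) ν P) (hμ : ∀ x, HasLaw (g x) μ ν) {j k : ℕ} (hjk : j < k) :
    (fun ω => drivenStep g (Y · ω) j) ⟂ᵢ[P] fun ω => drivenStep g (Y · ω) k :=
  have hstep := measurable_strictPast_drivenStep hg Y hjk
  have hwalk := measurable_strictPast_drivenWalk hg Y k
  have hstep_ae := (hstep.mono (strictPast_le hY k) le_rfl).aemeasurable (μ := P)
  have hwalk_ae := (hwalk.mono (strictPast_le hY k) le_rfl).aemeasurable (μ := P)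
  indepFun_apply_of_forall_hasLaw (X := fun ω => drivenWalk g (Y · ω) k) hstep_ae hwalk_ae (hν k)
    (indepFun_of_measurable_strictPast hY hind (hstep.prodMk hwalk)) hg hμ

lemma ae_tendsto_drivenWalk_div [IsProbabilityMeasure P] (hg : Measurable (uncurry g))
    (hY : ∀ k, Measurable (Y k)) (hind : iIndepFun Y P)
    (hν : ∀ k, HasLaw (Y k) ν P) (hμ : ∀ x, HasLaw (g x) μ ν) {f : E →+ ℝ} (hf : Measurable f)
    (hint : Integrable f μ) :
    ∀ᵐ ω ∂P, Tendsto (fun n : ℕ => f (drivenWalk g (Y · ω) n) / n) atTop (𝓝 (∫ x, f x ∂μ)) := by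
  have hlaw := hasLaw_drivenStep hg hY hind hν hμ
  have hident : ∀ k, IdentDistrib (fun ω => f (drivenStep g (Y · ω) k))
      (fun ω => f (drivenStep g (Y · ω) 0)) P P := fun k =>
    ((hlaw k).identDistrib (hlaw 0)).comp hf
  have hpair : Pairwise ((· ⟂ᵢ[P] ·) on fun k ω => f (drivenStep g (Y · ω) k)) :=
    fun j k hjk => hjk.lt_or_gt.elim
      (fun h => (indepFun_drivenStep hg hY hind hν hμ h).comp hf hf)
      (fun h => ((indepFun_drivenStep hg hY hind hν hμ h).comp hf hf).symm)
  have hmean : ∫ ω, f (drivenStep g (Y · ω) 0) ∂P = ∫ x, f x ∂μ :=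
    (hlaw 0).integral_comp hf.aestronglyMeasurable
  have hint0 : Integrable (fun ω => f (drivenStep g (Y · ω) 0)) P := by
    rw [← (hlaw 0).map_eq] at hint
    exact hint.comp_aemeasurable (hlaw 0).aemeasurable
  have hslln := strong_law_ae_real _ hint0 hpair hident
  rw [hmean] at hslln
  simpa only [map_drivenWalk] using hslln

end DrivenWalk

lemma IsBernoulli.eq_infinitePi {ι : Type*} {p : ℝ} (hp : p ∈ Set.Icc 0 1)
    {P : Measure (ι → Bool)} (h : IsBernoulli p P) :
    P = Measure.infinitePi fun _ => Ber(true, false, ⟨p, hp⟩) := by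
  refine eq_infinitePi_of_forall_finset fun s f => ?_
  rw [h.2 s f]
  refine Finset.prod_congr rfl fun i _ => ?_
  have hopen : ENNReal.ofReal p = unitInterval.toNNReal ⟨p, hp⟩ :=
    ENNReal.ofReal_eq_coe_nnreal hp.1
  have hclosed : ENNReal.ofReal (1 - p) = unitInterval.toNNReal (unitInterval.symm ⟨p, hp⟩) :=
    ENNReal.ofReal_eq_coe_nnreal (sub_nonneg.2 hp.2)
  cases f i <;> simp [hopen, hclosed]

section Lipschitz

variable {d : ℕ}

/-- The sum `∑ i, x i` of the coordinates of `x`, as an additive homomorphism; on the nonnegative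
orthant this is the norm `‖x‖₁`. -/
def coordSum : (Fin d → ℤ) →+ ℤ where
  toFun x := ∑ i, x i
  map_zero' := Finset.sum_const_zero
  map_add' _ _ := Finset.sum_add_distrib

lemma coordSum_apply (x : Fin d → ℤ) : coordSum x = ∑ i, x i := rfl

lemma coordSum_nonneg {x : Fin d → ℤ} (hx : 0 ≤ x) : 0 ≤ coordSum x := by
  rw [coordSum_apply]
  exact Finset.sum_nonneg fun i _ => hx i

lemma IsLipschitzFn.apply_add_le {F : (Fin d → ℤ) → ℤ} (hF : IsLipschitzFn F)
    {z : Fin d → ℤ} (hz : 0 ≤ z) (x : Fin d → ℤ) : F (x + z) ≤ F x + coordSum z := by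
  let S : AddSubmonoid (Fin d → ℤ) :=
    { carrier := {z | ∀ x, F (x + z) ≤ F x + coordSum z}
      zero_mem' := fun x => by simp only [add_zero, map_zero, le_refl]
      add_mem' := fun {y z} hy hz x => by
        rw [map_add, ← add_assoc, ← add_assoc]
        exact (hz (x + y)).trans (add_le_add_left (hy x) _) }
  have hsingle : ∀ i, Pi.single i 1 ∈ S := fun i x => by
    have hstep := hF (x + Pi.single i 1) x (by simp [Pi.single_apply, apply_ite abs])
    have hsum : coordSum (Pi.single i 1 : Fin d → ℤ) = 1 := by simp [coordSum_apply]
    rw [hsum]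
    linarith [le_abs_self (F (x + Pi.single i 1) - F x)]
  suffices hzS : z ∈ S from hzS x
  rw [← Finset.univ_sum_single z]
  refine sum_mem fun i _ => ?_
  have hnsmul : Pi.single i (z i) = (z i).toNat • (Pi.single i 1 : Fin d → ℤ) := by
    rw [← Pi.single_smul, nsmul_one, Int.natCast_toNat_eq_self.2 (hz i)]
  exact hnsmul ▸ nsmul_mem (hsingle i) _

end Lipschitz

lemma le_planeHt_one {d : ℕ} {α : ℝ} {n : ℤ} {x : Fin d → ℤ} :
    n ≤ planeHt α (fun _ => 1) x ↔ (n : ℝ) ≤ α * coordSum x := by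
  simp only [planeHt, coordSum_apply, Int.le_floor, Int.cast_one, one_mul, Int.cast_sum]

section Layers

variable {d : ℕ}

/-- The site above `x` in the hyperplane `{(x, c + ∑ i, x i)}` of level `c`. -/
def levelSite (c : ℤ) (x : Fin d → ℤ) : Site d := Fin.snoc x (c + coordSum x)

lemma injective_uncurry_levelSite : Injective (uncurry (levelSite (d := d))) := by
  rintro ⟨c, x⟩ ⟨c', x'⟩ h
  obtain ⟨rfl, hc⟩ := (Fin.snoc_inj (α := fun _ : Fin (d + 1) => ℤ)).1 h
  exact Prod.ext (add_left_injective _ hc) rfl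

/-- The configuration on the hyperplane of level `c`, parametrized by `ℤ^d`. -/
def layer (c : ℤ) (ω : Config d) (x : Fin d → ℤ) : Bool := ω (levelSite c x)

/-- The configuration `ζ` on `ℤ^d` seen from `x`. -/
def viewFrom (x : Fin d → ℤ) (ζ : (Fin d → ℤ) → Bool) (y : Fin d → ℤ) : Bool := ζ (x + y)

variable (b : Measure Bool) [IsProbabilityMeasure b]

lemma measurePreserving_layer (c : ℤ) :
    MeasurePreserving (layer (d := d) c) (Measure.infinitePi fun _ => b)
      (Measure.infinitePi fun _ => b) :=
  ⟨measurable_pi_lambda _ fun _ => measurable_pi_apply _,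
    Measure.map_infinitePi_infinitePi_of_inj (P := fun _ => b)
      (injective_uncurry_levelSite.comp (Prod.mk_right_injective c))⟩

lemma measurePreserving_viewFrom (x : Fin d → ℤ) :
    MeasurePreserving (viewFrom x) (Measure.infinitePi fun _ => b)
      (Measure.infinitePi fun _ => b) :=
  ⟨measurable_pi_lambda _ fun _ => measurable_pi_apply _,
    Measure.map_infinitePi_infinitePi_of_inj (P := fun _ => b) (add_right_injective x)⟩

lemma iIndepFun_layer {ι : Type*} {c : ι → ℤ} (hc : Injective c) :
    iIndepFun (fun i => layer (d := d) (c i)) (Measure.infinitePi fun _ => b) :=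
  iIndepFun_comp_infinitePi b (e := fun i => levelSite (c i)) <|
    injective_uncurry_levelSite.comp (hc.prodMap injective_id)

end Layers

section ClosedOrthant

variable {d : ℕ} {ζ : (Fin d → ℤ) → Bool}

/-- The closed sites with nonnegative coordinates. -/
def closedOrthant (ζ : (Fin d → ℤ) → Bool) : Set (Fin d → ℤ) := {x | 0 ≤ x ∧ ζ x = false}

/-- The `ℓ¹`-distance from the origin to `closedOrthant ζ`, with value `∞` if that set is empty. -/
noncomputable def orthantDist (ζ : (Fin d → ℤ) → Bool) : ℝ≥0∞ :=
  ⨅ x ∈ closedOrthant ζ, ENNReal.ofReal (coordSum x : ℝ)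

lemma closedOrthant_nonempty_of_orthantDist_lt_top (h : orthantDist ζ < ⊤) :
    (closedOrthant ζ).Nonempty := by
  obtain ⟨x, hx⟩ := iInf_lt_iff.1 h
  exact ⟨x, (iInf_lt_iff.1 hx).1⟩

lemma measurableSet_setOf_mem_closedOrthant (x : Fin d → ℤ) :
    MeasurableSet {ζ | x ∈ closedOrthant ζ} :=
  (MeasurableSet.const (0 ≤ x)).inter
    (measurableSet_eq_fun (measurable_pi_apply x) measurable_const)

lemma measurable_orthantDist : Measurable (orthantDist (d := d)) := by
  classical
  refine .iInf fun x => ?_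
  simp_rw [iInf_eq_if]
  exact .ite (measurableSet_setOf_mem_closedOrthant x) measurable_const measurable_const

lemma Tvar_eq_orthantDist (ω : Config d) : Tvar ω = orthantDist (layer 0 ω) := by
  have hlayer : ∀ x, layer 0 ω x = ω (Fin.snoc x (coordSum x)) := fun x => by
    rw [layer, levelSite, zero_add]
  have hnorm : ∀ x : Fin d → ℤ, 0 ≤ x → ∑ i, |x i| = coordSum x := fun x hx =>
    Finset.sum_congr rfl fun i _ => abs_of_nonneg (hx i)
  refine le_antisymm (le_iInf₂ fun x ⟨hx, hclosed⟩ => sInf_le ?_) (le_sInf ?_)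
  · have hcast := Int.toNat_of_nonneg (coordSum_nonneg hx)
    refine ⟨(coordSum x).toNat, ?_, x, hx, (hnorm x hx).trans hcast.symm, ?_⟩
    · rw [← ENNReal.ofReal_natCast, ← Int.cast_natCast, hcast]
    · rw [hcast, ← hlayer, hclosed]
  · rintro _ ⟨m, rfl, x, hx, hm, hclosed⟩
    rw [hnorm x hx] at hm
    refine (iInf₂_le x ⟨hx, ?_⟩).trans_eq ?_
    · rw [hm, Int.cast_natCast, ENNReal.ofReal_natCast]
    · rw [hlayer, hm, hclosed]

/-- `x` is a closed site in the nonnegative orthant at minimal `ℓ¹`-distance from the origin. -/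
def IsNearestClosed (ζ : (Fin d → ℤ) → Bool) (x : Fin d → ℤ) : Prop :=
  x ∈ closedOrthant ζ ∧ IsMinOn coordSum (closedOrthant ζ) x

lemma exists_isNearestClosed (h : (closedOrthant ζ).Nonempty) : ∃ x, IsNearestClosed ζ x := by
  have hbdd : ∀ m ∈ coordSum '' closedOrthant ζ, 0 ≤ m := by
    rintro _ ⟨x, hx, rfl⟩
    exact coordSum_nonneg hx.1
  obtain ⟨m, ⟨x, hx, rfl⟩, hmin⟩ := Int.exists_least_of_bdd
    (P := (· ∈ coordSum '' closedOrthant ζ)) ⟨0, hbdd⟩ (h.image coordSum)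
  exact ⟨x, hx, fun y hy => hmin _ ⟨y, hy, rfl⟩⟩

lemma measurableSet_setOf_isNearestClosed (x : Fin d → ℤ) :
    MeasurableSet {ζ | IsNearestClosed ζ x} := by
  simp only [IsNearestClosed, isMinOn_iff, measurableSet_setOfPred]
  exact .and (measurableSet_setOfPred.1 (measurableSet_setOf_mem_closedOrthant x)) <|
    .forall fun y => .imp (measurableSet_setOfPred.1 (measurableSet_setOf_mem_closedOrthant y))
      measurable_const

lemma IsNearestClosed.ofReal_coordSum {x : Fin d → ℤ} (hx : IsNearestClosed ζ x) :
    ENNReal.ofReal (coordSum x : ℝ) = orthantDist ζ :=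
  le_antisymm (le_iInf₂ fun _ hy => ENNReal.ofReal_le_ofReal (by exact_mod_cast hx.2 hy))
    (iInf₂_le x hx.1)

variable (d) in
lemma exists_measurable_isNearestClosed :
    ∃ ξ : ((Fin d → ℤ) → Bool) → (Fin d → ℤ), Measurable ξ ∧
      ∀ ζ, (closedOrthant ζ).Nonempty → IsNearestClosed ζ (ξ ζ) := by
  obtain ⟨ξ, hξ, hsel⟩ := exists_measurable_forall_exists_imp
    (measurableSet_setOf_isNearestClosed (d := d))
  exact ⟨ξ, hξ, fun ζ hζ => hsel ζ (exists_isNearestClosed hζ)⟩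

variable {ν : Measure ((Fin d → ℤ) → Bool)}

lemma ae_closedOrthant_nonempty (h : ∫⁻ ζ, orthantDist ζ ∂ν ≠ ⊤) :
    ∀ᵐ ζ ∂ν, (closedOrthant ζ).Nonempty :=
  (ae_lt_top measurable_orthantDist h).mono fun _ => closedOrthant_nonempty_of_orthantDist_lt_top

lemma integrable_coordSum_and_integral_lt {ξ : ((Fin d → ℤ) → Bool) → (Fin d → ℤ)}
    (hξ : Measurable ξ) (hnearest : ∀ ζ, (closedOrthant ζ).Nonempty → IsNearestClosed ζ (ξ ζ))
    {m : ℝ} (h : ∫⁻ ζ, orthantDist ζ ∂ν < ENNReal.ofReal m) :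
    Integrable (fun ζ => (coordSum (ξ ζ) : ℝ)) ν ∧
      ∫ ζ, (coordSum (ξ ζ) : ℝ) ∂ν < m := by
  have hae : ∀ᵐ ζ ∂ν, IsNearestClosed ζ (ξ ζ) :=
    (ae_closedOrthant_nonempty h.ne_top).mono hnearest
  have hmeas : Measurable fun ζ => (coordSum (ξ ζ) : ℝ) :=
    (Measurable.of_discrete (f := fun x : Fin d → ℤ => (coordSum x : ℝ))).comp hξ
  refine integrable_and_integral_lt_of_lintegral_lt hmeas.aestronglyMeasurable
    (hae.mono fun ζ hζ => Int.cast_nonneg (coordSum_nonneg hζ.1.1)) ?_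
  rwa [lintegral_congr_ae (hae.mono fun ζ hζ => hζ.ofReal_coordSum)]

end ClosedOrthant

section ClosedWalk

variable {d : ℕ} {ξ : ((Fin d → ℤ) → Bool) → (Fin d → ℤ)}

/-- The walk which, at time `k`, jumps within the hyperplane of level `N - k` by the vector which
`ξ` selects for the configuration seen from the current position. -/
def closedWalk (ξ : ((Fin d → ℤ) → Bool) → (Fin d → ℤ)) (N : ℤ) (ω : Config d) : ℕ → Fin d → ℤ :=
  drivenWalk (fun x ζ => ξ (viewFrom x ζ)) fun k => layer (N - k) ω

lemma ae_tendsto_coordSum_closedWalk_div (b : Measure Bool) [IsProbabilityMeasure b]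
    (hξ : Measurable ξ)
    (hint : Integrable (fun ζ => (coordSum (ξ ζ) : ℝ)) (Measure.infinitePi fun _ => b)) (N : ℤ) :
    ∀ᵐ ω ∂(Measure.infinitePi fun _ : Site d => b),
      Tendsto (fun k : ℕ => (coordSum (closedWalk ξ N ω k) : ℝ) / k) atTop
        (𝓝 (∫ ζ, (coordSum (ξ ζ) : ℝ) ∂(Measure.infinitePi fun _ => b))) := by
  let f : (Fin d → ℤ) →+ ℝ := (Int.castAddHom ℝ).comp coordSum
  have hf : Measurable f := .of_discrete
  have hjump : Measurable (uncurry fun (x : Fin d → ℤ) ζ => ξ (viewFrom x ζ)) :=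
    measurable_from_prod_countable_right fun x =>
      hξ.comp (measurePreserving_viewFrom b x).measurable
  have hind : iIndepFun (fun k : ℕ => layer (d := d) (N - k)) (Measure.infinitePi fun _ => b) :=
    iIndepFun_layer b fun j k h => by simpa using h
  have hμ : ∀ x, HasLaw (fun ζ => ξ (viewFrom x ζ))
      ((Measure.infinitePi fun _ => b).map ξ) (Measure.infinitePi fun _ => b) := fun x =>
    HasLaw.comp ⟨hξ.aemeasurable, rfl⟩ (measurePreserving_viewFrom b x).hasLaw
  have hlln := ae_tendsto_drivenWalk_div hjump
    (fun k => (measurePreserving_layer b (N - k)).measurable) hind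
    (fun k => (measurePreserving_layer b (N - k)).hasLaw) hμ hf
    ((integrable_map_measure hf.aestronglyMeasurable hξ.aemeasurable).2 hint)
  rwa [integral_map hξ.aemeasurable hf.aestronglyMeasurable] at hlln

variable {F : (Fin d → ℤ) → ℤ} {ω : Config d}

lemma IsLipschitzFn.lt_of_mem_closedOrthant (hF : IsLipschitzFn F)
    (hopen : ∀ x, ω (Fin.snoc x (F x)) = true) {c : ℤ} {x z : Fin d → ℤ}
    (hz : z ∈ closedOrthant (viewFrom x (layer c ω)))
    (h : c - 1 + coordSum (x + z) < F (x + z)) : c + coordSum x < F x := by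
  obtain ⟨hz0, hclosed⟩ := hz
  have hlip := hF.apply_add_le hz0 x
  have hne : F (x + z) ≠ c + coordSum (x + z) := fun heq => by
    have htrue := hopen (x + z)
    rw [heq] at htrue
    exact Bool.false_ne_true (hclosed.symm.trans htrue)
  rw [map_add] at h hne
  omega

lemma IsLipschitzFn.lt_apply_zero_of_lt_closedWalk (hF : IsLipschitzFn F)
    (hopen : ∀ x, ω (Fin.snoc x (F x)) = true) {N : ℤ}
    (hξ : ∀ c x, ξ (viewFrom x (layer c ω)) ∈ closedOrthant (viewFrom x (layer c ω))) {k : ℕ}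
    (h : N - k + coordSum (closedWalk ξ N ω k) < F (closedWalk ξ N ω k)) : N < F 0 := by
  induction k with
  | zero => simpa [closedWalk, drivenWalk] using h
  | succ k ih =>
    refine ih (hF.lt_of_mem_closedOrthant hopen (hξ (N - k) _) ?_)
    rwa [Nat.cast_add_one, ← sub_sub] at h

end ClosedWalk

section Criterion

variable {d : ℕ} {b : Measure Bool} [IsProbabilityMeasure b]

lemma lintegral_Tvar :
    ∫⁻ ω, Tvar ω ∂(Measure.infinitePi fun _ : Site d => b) =
      ∫⁻ ζ, orthantDist ζ ∂(Measure.infinitePi fun _ : Fin d → ℤ => b) := by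
  simp only [Tvar_eq_orthantDist]
  exact (measurePreserving_layer b 0).lintegral_comp measurable_orthantDist

lemma ae_forall_closedOrthant_nonempty
    (h : ∫⁻ ζ, orthantDist ζ ∂(Measure.infinitePi fun _ : Fin d → ℤ => b) ≠ ⊤) :
    ∀ᵐ ω ∂(Measure.infinitePi fun _ : Site d => b),
      ∀ c x, (closedOrthant (viewFrom x (layer c ω))).Nonempty :=
  ae_all_iff.2 fun c => ae_all_iff.2 fun x => ((measurePreserving_viewFrom b x).comp
    (measurePreserving_layer b c)).quasiMeasurePreserving.ae (ae_closedOrthant_nonempty h)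

lemma infinitePi_LIP_one_eq_zero {α : ℝ} (hα : α < 1)
    (hT : ∫⁻ ω, Tvar ω ∂(Measure.infinitePi fun _ : Site d => b) < ENNReal.ofReal (1 / (1 - α))) :
    Measure.infinitePi (fun _ => b) (LIP α fun _ : Fin d => 1) = 0 := by
  rw [lintegral_Tvar] at hT
  obtain ⟨ξ, hξ, hnearest⟩ := exists_measurable_isNearestClosed d
  obtain ⟨hint, hmean⟩ := integrable_coordSum_and_integral_lt hξ hnearest hT
  rw [lt_div_iff₀' (sub_pos.2 hα)] at hmean
  refine measure_eq_zero_iff_ae_notMem.2 ?_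
  filter_upwards [ae_all_iff.2 (ae_tendsto_coordSum_closedWalk_div b hξ hint),
    ae_forall_closedOrthant_nonempty hT.ne_top] with ω hlln hnonempty
  rintro ⟨F, hF, hsurface⟩
  obtain ⟨k, hk⟩ := (eventually_add_mul_le_natCast (hlln (F 0)) hmean (F 0)).exists
  refine lt_irrefl (F 0) (hF.lt_apply_zero_of_lt_closedWalk (fun x => (hsurface x).1)
    (fun c x => (hnearest _ (hnonempty c x)).1) (k := k) ?_)
  refine (le_planeHt_one.2 ?_).trans_lt (hsurface _).2
  push_cast
  linarith

end Criterion

theorem criterion_nonexistence_open_lipschitz_surface_general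
    {d : ℕ} {α : ℝ} (hα : α < 1) {p : ℝ} (hp : p ∈ Set.Icc (0 : ℝ) 1)
    {P : ℝ → Measure (Config d)} (hP : IsBernoulli p (P p))
    (hT : ∫⁻ ω, Tvar ω ∂(P p) < ENNReal.ofReal (1 / (1 - α))) :
    P p (LIP α (fun _ => 1)) = 0 ∧
    ∀ pc : ℝ, IsCriticalProb P α (fun _ => 1) pc → 1 - pc ≤ 1 - p := by
  have hLIP : P p (LIP α (fun _ => 1)) = 0 := by
    rw [hP.eq_infinitePi hp] at hT ⊢
    exact infinitePi_LIP_one_eq_zero hα hT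
  refine ⟨hLIP, fun pc hpc => sub_le_sub_left (not_lt.1 fun hlt => ?_) 1⟩
  exact zero_ne_one (hLIP.symm.trans (hpc.2.2 p hlt hp.2))

/-- Criterion for the non-existence of an open Lipschitz surface:
for `α ∈ (0,1)`, `η = (1,…,1)` and `p ∈ (0,1)`, if `E_p[T] < 1/(1−α)` then `P_p`-a.s.
there is no open Lipschitz surface above `L^{α,d}_η`; consequently
`1 − p ≥ q_L(α,d,d)`. -/
theorem criterion_nonexistence_open_lipschitz_surface
    {d : ℕ} (hd : 1 ≤ d) (α : ℝ) (hα : α ∈ Set.Ioo (0 : ℝ) 1)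
    (p : ℝ) (hp : p ∈ Set.Ioo (0 : ℝ) 1)
    (P : ℝ → Measure (Config d)) (hP : ∀ p' ∈ Set.Icc (0 : ℝ) 1, IsBernoulli p' (P p'))
    (hT : ∫⁻ ω, Tvar ω ∂(P p) < ENNReal.ofReal (1 / (1 - α))) :
    P p (LIP α (fun _ => 1)) = 0 ∧
    ∀ pc : ℝ, IsCriticalProb P α (fun _ => 1) pc → 1 - pc ≤ 1 - p :=
  have hp' : p ∈ Set.Icc (0 : ℝ) 1 := Set.Ioo_subset_Icc_self hp
  criterion_nonexistence_open_lipschitz_surface_general hα.2 hp' (hP p hp') hT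
end

section
/- For every d ∈ ℕ and every q ∈ (0,1), under P_{1−q} the normalized maximal number of closed sites on oriented paths, Y_{0,n}/n, converges almost surely and in L¹ to a deterministic constant γ(q), and this limit equals the critical density of ρ-percolation: γ(q) = ρ_c(q). -/
open MeasureTheory Filter ENNReal

/-- `Y_{0,n}`: the maximal number of closed sites collected by an oriented
nearest-neighbour path of length `n` started at the origin. -/
noncomputable def Ymax (d n : ℕ) (ω : ConfigD d) : ℕ :=
  sSup {r : ℕ | ∃ x : ℕ → Fin d → ℤ, IsOrientedPath x ∧
    r = ∑ i ∈ Finset.Icc 1 n, if ω (x i) then 0 else 1}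

/-- `ρ_c(q) = sup {ρ | P_{1−q}(ρ-percolation occurs) = 1}`, where `P p` is the
Bernoulli(`p`) product measure on `{0,1}^{ℤ^d}`. -/
noncomputable def rhoC {d : ℕ} (P : ℝ → Measure (ConfigD d)) (q : ℝ) : ℝ :=
  sSup {ρ : ℝ | P (1 - q) (RhoPerc ρ) = 1}

/-!
Resampling one level `{x | ∑ i, x i = k}` changes `Y_{0,n}` by at most one, because an oriented path
visits each level once. So McDiarmid's inequality makes `Y_{0,n}` concentrate around its mean with
tails `2 exp (-2 ε² n)`, and Borel–Cantelli gives this simultaneously for the paths started anywhere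
in a box whose side is polynomial in `n`. Conditioning on the first `m` levels shows that the mean
is superadditive, so by Fekete's lemma the means, and with them `Y_{0,n} / n`, tend to some `γ`.

If `ρ`-percolation has probability one, then `ρ ≤ γ` because `Y_{0,n}` dominates the count along any
path. Conversely, concatenate optimal paths of lengths `1, 3, 5, …`, each started where the previous
one ends. The block of length `2k + 1` starts at level `k²`, inside the box covered by
Borel–Cantelli, so it contributes at least `ρ (2k + 1)` closed sites whenever `ρ < γ` and `k` is
large, and blocks are too short compared with `k²` for their interior to affect the limit inferior.
-/

open ProbabilityTheory
open scoped NNReal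

lemma tendsto_natSqrt_sq_div :
    Tendsto (fun n : ℕ => (n.sqrt : ℝ) ^ 2 / n) atTop (nhds 1) := by
  have h := (tendsto_nat_floor_div_atTop.comp
    (Real.tendsto_sqrt_atTop.comp tendsto_natCast_atTop_atTop)).pow 2
  simpa [Function.comp_def, Real.nat_floor_real_sqrt_eq_nat_sqrt, div_pow] using h

lemma hasSubgaussianMGF_add_prod {α β : Type*} [MeasurableSpace α] [MeasurableSpace β]
    {μ : Measure α} {ν : Measure β} [SFinite μ] [SFinite ν] {X : α → ℝ} {Y : α × β → ℝ}
    {a b : ℝ≥0} (hX : HasSubgaussianMGF X a μ) (hY : AEStronglyMeasurable Y (μ.prod ν))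
    (hYx : ∀ x, HasSubgaussianMGF (fun y => Y (x, y)) b ν) :
    HasSubgaussianMGF (fun w => X w.1 + Y w) (a + b) (μ.prod ν) := by
  have hexp : ∀ t x y, Real.exp (t * (X x + Y (x, y))) =
      Real.exp (t * X x) * Real.exp (t * Y (x, y)) := fun t x y => by rw [mul_add, Real.exp_add]
  have hle : ∀ t x, ∫ y, Real.exp (t * (X x + Y (x, y))) ∂ν ≤
      Real.exp (t * X x) * Real.exp (b * t ^ 2 / 2) := fun t x => by
    simp only [hexp, integral_const_mul]
    gcongr
    exact (hYx x).mgf_le t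
  have hint : ∀ t, Integrable (fun w => Real.exp (t * (X w.1 + Y w))) (μ.prod ν) := fun t => by
    have hmeas : AEStronglyMeasurable (fun w => Real.exp (t * (X w.1 + Y w))) (μ.prod ν) :=
      Real.continuous_exp.comp_aestronglyMeasurable
        ((hX.aestronglyMeasurable.comp_fst.add hY).const_mul t)
    refine (integrable_prod_iff hmeas).2 ⟨ae_of_all _ fun x => ?_, ?_⟩
    · simpa only [hexp] using ((hYx x).integrable_exp_mul t).const_mul (Real.exp (t * X x))
    · simp only [Real.norm_eq_abs, Real.abs_exp]
      refine ((hX.integrable_exp_mul t).mul_const (Real.exp (b * t ^ 2 / 2))).mono'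
        hmeas.integral_prod_right' (ae_of_all _ fun x => ?_)
      rw [Real.norm_of_nonneg (by positivity)]
      exact hle t x
  refine ⟨hint, fun t => ?_⟩
  calc mgf (fun w => X w.1 + Y w) (μ.prod ν) t
      = ∫ x, ∫ y, Real.exp (t * (X x + Y (x, y))) ∂ν ∂μ := integral_prod _ (hint t)
    _ ≤ ∫ x, Real.exp (t * X x) * Real.exp (b * t ^ 2 / 2) ∂μ :=
      integral_mono (hint t).integral_prod_left
        ((hX.integrable_exp_mul t).mul_const _) (hle t)
    _ ≤ Real.exp (a * t ^ 2 / 2) * Real.exp (b * t ^ 2 / 2) := by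
      rw [integral_mul_const]
      gcongr
      exact hX.mgf_le t
    _ = Real.exp ((a + b : ℝ≥0) * t ^ 2 / 2) := by
      rw [← Real.exp_add]
      push_cast
      ring_nf

lemma hasSubgaussianMGF_of_le_add {Ω : Type*} [MeasurableSpace Ω] {μ : Measure Ω}
    [IsProbabilityMeasure μ] {X : Ω → ℝ} (hX : AEMeasurable X μ) {c : ℝ≥0}
    (hc : ∀ ω ω', X ω ≤ X ω' + c) :
    HasSubgaussianMGF (fun ω => X ω - μ[X]) ((c / 2) ^ 2) μ := by
  have := nonempty_of_isProbabilityMeasure μ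
  have hbdd : BddBelow (Set.range X) := by
    obtain ⟨ω⟩ := this
    refine ⟨X ω - c, ?_⟩
    rintro _ ⟨ω', rfl⟩
    linarith [hc ω ω']
  have h := hasSubgaussianMGF_of_mem_Icc (a := ⨅ ω, X ω) (b := (⨅ ω, X ω) + c) hX
    (ae_of_all _ fun ω => ⟨ciInf_le hbdd ω, by
      rw [← sub_le_iff_le_add]
      exact le_ciInf fun ω' => sub_le_iff_le_add.2 (hc ω ω')⟩)
  simpa using h

lemma integrable_of_le_add {Ω : Type*} [MeasurableSpace Ω] {μ : Measure Ω}
    [IsProbabilityMeasure μ] {X : Ω → ℝ} (hX : AEMeasurable X μ) {c : ℝ≥0}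
    (hc : ∀ ω ω', X ω ≤ X ω' + c) : Integrable X μ :=
  ((hasSubgaussianMGF_of_le_add hX hc).integrable.add (integrable_const μ[X])).congr
    (ae_of_all _ fun ω => by simp)

lemma measureReal_abs_ge_le_of_hasSubgaussianMGF {Ω : Type*} [MeasurableSpace Ω] {μ : Measure Ω}
    {X : Ω → ℝ} {c : ℝ≥0} (hX : HasSubgaussianMGF X c μ) {ε : ℝ} (hε : 0 ≤ ε) :
    μ.real {ω | ε ≤ |X ω|} ≤ 2 * Real.exp (-ε ^ 2 / (2 * c)) := by
  have hunion : {ω | ε ≤ |X ω|} = {ω | ε ≤ X ω} ∪ {ω | ε ≤ (-X) ω} := by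
    ext ω
    simp [le_abs]
  rw [hunion, two_mul]
  exact (measureReal_union_le _ _).trans
    (add_le_add (hX.measure_ge_le hε) (hX.neg.measure_ge_le hε))

lemma measurePreserving_comp_infinitePi {X ι κ : Type*} [MeasurableSpace X] (ν : Measure X)
    [IsProbabilityMeasure ν] (e : ι ↪ κ) :
    MeasurePreserving (fun ω : κ → X => ω ∘ e) (Measure.infinitePi fun _ => ν)
      (Measure.infinitePi fun _ => ν) := by
  have hmeas : Measurable fun ω : κ → X => ω ∘ e :=
    measurable_pi_lambda _ fun i => measurable_pi_apply (e i)
  refine ⟨hmeas, Measure.eq_infinitePi _ fun s t ht => ?_⟩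
  have hpre : (fun ω : κ → X => ω ∘ e) ⁻¹' Set.pi s t =
    Set.pi (s.map e) (Function.extend e t fun _ => Set.univ) := by
    ext ω
    simp [Set.mem_pi, e.injective.extend_apply]
  rw [Measure.map_apply hmeas (.pi s.countable_toSet fun i _ => ht i), hpre,
    Measure.infinitePi_pi, Finset.prod_map]
  · simp [e.injective.extend_apply]
  · simp [e.injective.extend_apply, ht]

section ProductMeasure

variable {ι : Type*} {X : ι → Type*} [∀ i, MeasurableSpace (X i)]

lemma measurable_of_dependsOn_finite [∀ i, Countable (X i)] [∀ i, MeasurableSingletonClass (X i)]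
    {β : Type*} [MeasurableSpace β] {f : (∀ i, X i) → β} {s : Set ι} (hs : s.Finite)
    (hf : DependsOn f s) : Measurable f := by
  rcases isEmpty_or_nonempty β with hβ | hβ
  · have := Function.isEmpty f
    exact measurable_of_empty f
  · obtain ⟨g, rfl⟩ := dependsOn_iff_exists_comp.1 hf
    have := hs.to_subtype
    exact (measurable_of_countable g).comp (by fun_prop)

lemma measurable_piecewise_prod (A : Set ι) [∀ i, Decidable (i ∈ A)] :
    Measurable fun w : (∀ i, X i) × (∀ i, X i) => A.piecewise w.2 w.1 := by
  refine measurable_pi_lambda _ fun i => ?_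
  by_cases hi : i ∈ A <;> simp only [Set.piecewise, hi, if_true, if_false] <;> fun_prop

variable {μ : ∀ i, Measure (X i)}

open Classical in
/-- The conditional expectation of `f` given the coordinates outside `A`, for the product measure
with marginals `μ`: the coordinates in `A` are resampled and integrated out. -/
noncomputable def resampledMean (μ : ∀ i, Measure (X i)) (A : Set ι) (f : (∀ i, X i) → ℝ)
    (ω : ∀ i, X i) : ℝ :=
  ∫ ω', f (A.piecewise ω' ω) ∂Measure.infinitePi μ

variable {f : (∀ i, X i) → ℝ}

lemma dependsOn_resampledMean {A s : Set ι} (hf : DependsOn f (A ∪ s)) :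
    DependsOn (resampledMean μ A f) s := fun ω₁ ω₂ h => by
  classical
  refine integral_congr_ae (ae_of_all _ fun ω' => hf fun i hi => ?_)
  by_cases hA : i ∈ A
  · simp [hA]
  · simp [hA, h i (hi.resolve_left hA)]

variable (μ) [∀ i, IsProbabilityMeasure (μ i)]

lemma measurePreserving_piecewise_infinitePi (A : Set ι) [∀ i, Decidable (i ∈ A)] :
    MeasurePreserving (fun w : (∀ i, X i) × (∀ i, X i) => A.piecewise w.2 w.1)
      ((Measure.infinitePi μ).prod (Measure.infinitePi μ)) (Measure.infinitePi μ) := by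
  refine ⟨measurable_piecewise_prod A, Measure.eq_infinitePi μ fun s t ht => ?_⟩
  have hpre : (fun w : (∀ i, X i) × (∀ i, X i) => A.piecewise w.2 w.1) ⁻¹' Set.pi s t =
      Set.pi (s.filter (· ∉ A)) t ×ˢ Set.pi (s.filter (· ∈ A)) t := by
    ext w
    simp only [Set.mem_preimage, Set.mem_pi, Set.mem_prod, Finset.coe_filter, Set.mem_ofPred_eq]
    refine ⟨fun h => ⟨fun i hi => ?_, fun i hi => ?_⟩, fun h i hi => ?_⟩
    · simpa [hi.2] using h i hi.1
    · simpa [hi.2] using h i hi.1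
    · by_cases hA : i ∈ A
      · simpa [hA] using h.2 i ⟨hi, hA⟩
      · simpa [hA] using h.1 i ⟨hi, hA⟩
  rw [Measure.map_apply (measurable_piecewise_prod A) (.pi s.countable_toSet fun i _ => ht i),
    hpre, Measure.prod_prod, Measure.infinitePi_pi μ fun i _ => ht i,
    Measure.infinitePi_pi μ fun i _ => ht i, mul_comm, Finset.prod_filter_mul_prod_filter_not]

variable {μ}

lemma measurable_resampledMean (hf : Measurable f) (A : Set ι) :
    Measurable (resampledMean μ A f) := by
  classical
  exact ((hf.comp (measurable_piecewise_prod A)).stronglyMeasurable.integral_prod_right'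
    (ν := Measure.infinitePi μ)).measurable

lemma integrable_resampledMean (hf : Integrable f (Measure.infinitePi μ)) (A : Set ι) :
    Integrable (resampledMean μ A f) (Measure.infinitePi μ) := by
  classical
  have hA := measurePreserving_piecewise_infinitePi μ A
  rw [← hA.map_eq] at hf
  exact (hf.comp_measurable hA.measurable).integral_prod_left

lemma integral_resampledMean (hf : Integrable f (Measure.infinitePi μ)) (A : Set ι) :
    ∫ ω, resampledMean μ A f ω ∂Measure.infinitePi μ = ∫ ω, f ω ∂Measure.infinitePi μ := by
  classical
  have hA := measurePreserving_piecewise_infinitePi μ A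
  rw [← hA.map_eq] at hf
  conv_rhs => rw [← hA.map_eq, integral_map hA.aemeasurable hf.aestronglyMeasurable]
  exact (integral_prod _ (hf.comp_measurable hA.measurable)).symm

open Classical in
lemma integrable_piecewise_of_le_add {A : Set ι} {c : ℝ≥0} (hf : Measurable f)
    (hA : ∀ ω ω', (∀ i ∉ A, ω i = ω' i) → f ω ≤ f ω' + c) (ω : ∀ i, X i) :
    Integrable (fun ω' => f (A.piecewise ω' ω)) (Measure.infinitePi μ) :=
  integrable_of_le_add
    ((hf.comp (measurable_piecewise_prod A)).comp measurable_prodMk_left).aemeasurable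
    fun ω₁ ω₂ => hA _ _ fun i hi => by simp [hi]

lemma hasSubgaussianMGF_of_resampledMean {A : Set ι} {a c : ℝ≥0} (hf : Measurable f)
    (hmean : HasSubgaussianMGF
      (fun ω => resampledMean μ A f ω - ∫ ω', resampledMean μ A f ω' ∂Measure.infinitePi μ) a
      (Measure.infinitePi μ))
    (hA : ∀ ω ω', (∀ i ∉ A, ω i = ω' i) → f ω ≤ f ω' + c) :
    HasSubgaussianMGF (fun ω => f ω - ∫ ω', f ω' ∂Measure.infinitePi μ) (a + (c / 2) ^ 2)
      (Measure.infinitePi μ) := by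
  classical
  have hT := measurePreserving_piecewise_infinitePi μ A
  have hfT : Measurable fun w : (∀ i, X i) × (∀ i, X i) => f (A.piecewise w.2 w.1) :=
    hf.comp hT.measurable
  have hfiber : ∀ ω, HasSubgaussianMGF
      (fun ω' => f (A.piecewise ω' ω) - resampledMean μ A f ω) ((c / 2) ^ 2)
      (Measure.infinitePi μ) := fun ω =>
    hasSubgaussianMGF_of_le_add (hfT.comp measurable_prodMk_left).aemeasurable
      fun ω₁ ω₂ => hA _ _ fun i hi => by simp [hi]
  have hsum := hasSubgaussianMGF_add_prod hmean
    (hfT.sub ((measurable_resampledMean hf A).comp measurable_fst)).aestronglyMeasurable hfiber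
  set b := ∫ ω, resampledMean μ A f ω ∂Measure.infinitePi μ with hb
  have hfb : HasSubgaussianMGF (fun ω => f ω - b) (a + (c / 2) ^ 2) (Measure.infinitePi μ) := by
    refine hsum.congr_identDistrib ⟨hsum.aemeasurable, (hf.sub_const b).aemeasurable, ?_⟩
    conv_rhs => rw [← hT.map_eq, Measure.map_map (hf.sub_const b) hT.measurable]
    congr 1
    funext w
    simp
  have hint : Integrable f (Measure.infinitePi μ) :=
    (hfb.integrable.add (integrable_const b)).congr (ae_of_all _ fun ω => by simp)
  rwa [hb, integral_resampledMean hint] at hfb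

/-- McDiarmid's inequality, before the Chernoff bound. The coordinates are grouped by `lev` because
resampling a whole level of sites at once changes `Ymax` by at most one. -/
lemma hasSubgaussianMGF_infinitePi_of_bounded_differences {κ : Type*} (lev : ι → κ) (c : κ → ℝ≥0)
    (S : Finset κ) (hf : Measurable f) (hdep : DependsOn f (lev ⁻¹' S))
    (hdiff : ∀ k ∈ S, ∀ ω ω', (∀ i, lev i ≠ k → ω i = ω' i) → f ω ≤ f ω' + c k) :
    HasSubgaussianMGF (fun ω => f ω - ∫ ω', f ω' ∂Measure.infinitePi μ) (∑ k ∈ S, (c k / 2) ^ 2)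
      (Measure.infinitePi μ) := by
  classical
  induction S using Finset.induction_on generalizing f with
  | empty =>
    obtain ⟨ω₀⟩ := nonempty_of_isProbabilityMeasure (Measure.infinitePi μ)
    obtain ⟨a, rfl⟩ : ∃ a, f = fun _ => a := ⟨f ω₀, funext fun ω => hdep (by simp)⟩
    simp
  | insert k S hk ih =>
    have hA : ∀ ω ω', (∀ i ∉ lev ⁻¹' {k}, ω i = ω' i) → f ω ≤ f ω' + c k :=
      hdiff k (Finset.mem_insert_self k S)
    rw [Finset.sum_insert hk, add_comm]
    refine hasSubgaussianMGF_of_resampledMean hf (ih (measurable_resampledMean hf _)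
      (dependsOn_resampledMean ?_) fun j hj ω ω' h => ?_) hA
    · rwa [← Set.preimage_union, ← Set.insert_eq, ← Finset.coe_insert]
    · calc resampledMean μ (lev ⁻¹' {k}) f ω
          ≤ ∫ ζ, (f ((lev ⁻¹' {k}).piecewise ζ ω') + c j) ∂Measure.infinitePi μ :=
            integral_mono (integrable_piecewise_of_le_add hf hA ω)
              ((integrable_piecewise_of_le_add hf hA ω').add (integrable_const _))
              fun ζ => hdiff j (Finset.mem_insert_of_mem hj) _ _ fun i hi => by
                by_cases hik : i ∈ lev ⁻¹' {k}
                · rw [Set.piecewise_eq_of_mem _ _ _ hik, Set.piecewise_eq_of_mem _ _ _ hik]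
                · rw [Set.piecewise_eq_of_notMem _ _ _ hik, Set.piecewise_eq_of_notMem _ _ _ hik,
                    h i hi]
        _ = resampledMean μ (lev ⁻¹' {k}) f ω' + c j := by
            rw [integral_add (integrable_piecewise_of_le_add hf hA ω') (integrable_const _)]
            simp [resampledMean]

end ProductMeasure

lemma IsBernoulli.exists_eq_infinitePi {ι : Type*} [Nonempty ι] {p : ℝ} {P : Measure (ι → Bool)}
    (hP : IsBernoulli p P) :
    ∃ ν : Measure Bool, IsProbabilityMeasure ν ∧ P = Measure.infinitePi fun _ => ν := by
  classical
  have := hP.1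
  obtain ⟨i₀⟩ := ‹Nonempty ι›
  have hν : IsProbabilityMeasure (P.map fun ω => ω i₀) :=
    Measure.isProbabilityMeasure_map (measurable_pi_apply i₀).aemeasurable
  have hsingleton : ∀ b, P.map (fun ω => ω i₀) {b} =
      if b then ENNReal.ofReal p else ENNReal.ofReal (1 - p) := fun b => by
    rw [Measure.map_apply (measurable_pi_apply i₀) (measurableSet_singleton b)]
    simpa [Set.preimage] using hP.2 {i₀} fun _ => b
  refine ⟨P.map fun ω => ω i₀, hν, IsProjectiveLimit.unique (fun I => ?_)
    (Measure.isProjectiveLimit_infinitePi _)⟩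
  refine Measure.ext_of_singleton fun g => ?_
  have hpre : (I.restrict : (ι → Bool) → (I → Bool)) ⁻¹' {g} =
      {ω | ∀ x ∈ I, ω x = if h : x ∈ I then g ⟨x, h⟩ else true} := by
    ext ω
    simp +contextual [funext_iff]
  rw [Measure.map_apply (by fun_prop) (measurableSet_singleton g), hpre, hP.2,
    Measure.pi_singleton, ← Finset.prod_coe_sort]
  simp [hsingleton]

section Paths

variable {d : ℕ}

/-- The position after `n` steps of the oriented path from the origin with step directions `s`. -/
def pathPos (s : ℕ → Fin d) (n : ℕ) : Fin d → ℤ :=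
  ∑ i ∈ Finset.range n, Pi.single (s i) 1

/-- The number of closed sites among the first `n` sites after the origin on the oriented path
with step directions `s`. -/
def closedCount (ω : ConfigD d) (s : ℕ → Fin d) (n : ℕ) : ℕ :=
  ∑ i ∈ Finset.range n, if ω (pathPos s (i + 1)) then 0 else 1

/-- The sum of the coordinates of a site, that is, the time at which oriented paths from the origin
visit it. -/
def siteLevel (x : Fin d → ℤ) : ℤ := ∑ i, x i

/-- The configuration seen from the site `z`. -/
def seenFrom (z : Fin d → ℤ) (ω : ConfigD d) : ConfigD d := ω ∘ (Equiv.addRight z).toEmbedding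

lemma siteLevel_add (x y : Fin d → ℤ) : siteLevel (x + y) = siteLevel x + siteLevel y := by
  simp [siteLevel, Finset.sum_add_distrib]

lemma siteLevel_pathPos (s : ℕ → Fin d) (n : ℕ) : siteLevel (pathPos s n) = n := by
  simp only [siteLevel, pathPos, Finset.sum_apply]
  rw [Finset.sum_comm]
  simp

lemma pathPos_mem_Icc (s : ℕ → Fin d) (n : ℕ) : pathPos s n ∈ Set.Icc 0 fun _ => (n : ℤ) := by
  have hsingle : ∀ i j, (Pi.single (s i) 1 : Fin d → ℤ) j ∈ Set.Icc 0 1 := fun i j => by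
    by_cases h : j = s i <;> simp [h]
  refine ⟨Finset.sum_nonneg fun i _ j => (hsingle i j).1, fun j => ?_⟩
  rw [pathPos, Finset.sum_apply]
  simpa using Finset.sum_le_card_nsmul (Finset.range n) _ 1 fun i _ => (hsingle i j).2

lemma pathPos_add (s : ℕ → Fin d) (m n : ℕ) :
    pathPos s (m + n) = pathPos (fun i => s (m + i)) n + pathPos s m := by
  rw [pathPos, Finset.sum_range_add, add_comm, pathPos, pathPos]

lemma pathPos_congr {s t : ℕ → Fin d} {n : ℕ} (h : ∀ i < n, s i = t i) :
    pathPos s n = pathPos t n :=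
  Finset.sum_congr rfl fun i hi => by rw [h i (Finset.mem_range.1 hi)]

lemma isOrientedPath_pathPos (s : ℕ → Fin d) : IsOrientedPath (pathPos s) :=
  ⟨by simp [pathPos], fun n => ⟨s n, by simp [pathPos, Finset.sum_range_succ]⟩⟩

lemma IsOrientedPath.exists_eq_pathPos {x : ℕ → Fin d → ℤ} (hx : IsOrientedPath x) :
    ∃ s : ℕ → Fin d, x = pathPos s := by
  choose s hs using hx.2
  refine ⟨s, funext fun n => ?_⟩
  induction n with
  | zero => simp [pathPos, hx.1]
  | succ n ih => rw [hs, ih, pathPos, pathPos, Finset.sum_range_succ]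

lemma sum_Icc_eq_closedCount {R : Type*} [NonAssocSemiring R] (ω : ConfigD d) (s : ℕ → Fin d)
    (n : ℕ) :
    (∑ i ∈ Finset.Icc 1 n, if ω (pathPos s i) then (0 : R) else 1) = closedCount ω s n := by
  rw [closedCount, Finset.range_eq_Ico,
    Finset.sum_Ico_add' (fun i => if ω (pathPos s i) then 0 else 1) 0 n 1, zero_add,
    Finset.Ico_add_one_right_eq_Icc]
  push_cast
  rfl

lemma closedCount_congr (ω : ConfigD d) {s t : ℕ → Fin d} {n : ℕ} (h : ∀ i < n, s i = t i) :
    closedCount ω s n = closedCount ω t n :=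
  Finset.sum_congr rfl fun i hi => by
    rw [pathPos_congr fun j hj => h j (by have := Finset.mem_range.1 hi; omega)]

lemma closedCount_add (ω : ConfigD d) (s : ℕ → Fin d) (m n : ℕ) :
    closedCount ω s (m + n) = closedCount ω s m +
      closedCount (seenFrom (pathPos s m) ω) (fun i => s (m + i)) n := by
  rw [closedCount, Finset.sum_range_add]
  congr 1
  refine Finset.sum_congr rfl fun i _ => ?_
  rw [add_assoc, pathPos_add]
  rfl

lemma closedCount_le (ω : ConfigD d) (s : ℕ → Fin d) (n : ℕ) : closedCount ω s n ≤ n := by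
  refine (Finset.sum_le_card_nsmul _ _ 1 fun i _ => ?_).trans (by simp)
  split_ifs <;> simp

lemma closedCount_mono (ω : ConfigD d) (s : ℕ → Fin d) : Monotone (closedCount ω s) :=
  fun _ _ h => Finset.sum_le_sum_of_subset (Finset.range_mono h)

lemma dependsOn_closedCount {s : ℕ → Fin d} {n : ℕ} {S : Set (Fin d → ℤ)}
    (hS : ∀ i ∈ Finset.Icc 1 n, pathPos s i ∈ S) :
    DependsOn (fun ω : ConfigD d => closedCount ω s n) S := fun ω ω' h =>
  Finset.sum_congr rfl fun i hi => by
    rw [h _ (hS (i + 1) (by simpa using hi))]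

lemma closedCount_le_add_one {ω ω' : ConfigD d} {k : ℤ}
    (h : ∀ x, siteLevel x ≠ k → ω x = ω' x) (s : ℕ → Fin d) (n : ℕ) :
    closedCount ω s n ≤ closedCount ω' s n + 1 := by
  calc closedCount ω s n
      ≤ ∑ i ∈ Finset.range n, ((if ω' (pathPos s (i + 1)) then 0 else 1) +
          if i = (k - 1).toNat then 1 else 0) := Finset.sum_le_sum fun i _ => by
        by_cases hi : i = (k - 1).toNat
        · simp only [hi, if_true]
          split_ifs <;> simp
        · rw [h _ (by rw [siteLevel_pathPos]; push_cast; omega)]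
          simp
    _ ≤ closedCount ω' s n + 1 := by
        rw [Finset.sum_add_distrib, Finset.sum_ite_eq']
        refine Nat.add_le_add_left ?_ _
        split_ifs <;> simp

lemma Ymax_eq_sSup_range_closedCount (n : ℕ) (ω : ConfigD d) :
    Ymax d n ω = sSup (Set.range fun s : ℕ → Fin d => closedCount ω s n) := by
  unfold Ymax
  congr 1
  ext r
  constructor
  · rintro ⟨x, hx, rfl⟩
    obtain ⟨s, rfl⟩ := hx.exists_eq_pathPos
    exact ⟨s, (sum_Icc_eq_closedCount ω s n).symm⟩
  · rintro ⟨s, rfl⟩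
    exact ⟨pathPos s, isOrientedPath_pathPos s, (sum_Icc_eq_closedCount ω s n).symm⟩

lemma bddAbove_range_closedCount (n : ℕ) (ω : ConfigD d) :
    BddAbove (Set.range fun s : ℕ → Fin d => closedCount ω s n) :=
  ⟨n, by rintro _ ⟨s, rfl⟩; exact closedCount_le ω s n⟩

lemma closedCount_le_Ymax (ω : ConfigD d) (s : ℕ → Fin d) (n : ℕ) :
    closedCount ω s n ≤ Ymax d n ω := by
  rw [Ymax_eq_sSup_range_closedCount]
  exact le_csSup (bddAbove_range_closedCount n ω) ⟨s, rfl⟩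

lemma dependsOn_Ymax {n : ℕ} {S : Set (Fin d → ℤ)}
    (hS : ∀ s : ℕ → Fin d, ∀ i ∈ Finset.Icc 1 n, pathPos s i ∈ S) :
    DependsOn (Ymax d n) S := fun ω ω' h => by
  rw [Ymax_eq_sSup_range_closedCount, Ymax_eq_sSup_range_closedCount]
  congr 2
  exact funext fun s => dependsOn_closedCount (hS s) h

lemma dependsOn_Ymax_siteLevel (n : ℕ) :
    DependsOn (Ymax d n) (siteLevel ⁻¹' Set.Icc 1 (n : ℤ)) :=
  dependsOn_Ymax fun s i hi => by
    rw [Set.mem_preimage, siteLevel_pathPos]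
    simpa using hi

lemma measurable_Ymax (n : ℕ) : Measurable (Ymax d n) :=
  measurable_of_dependsOn_finite (Set.finite_Icc 0 fun _ => (n : ℤ)) <|
    dependsOn_Ymax fun s i hi => Set.Icc_subset_Icc_right
      (fun _ => Int.ofNat_le.2 (Finset.mem_Icc.1 hi).2) (pathPos_mem_Icc s i)

lemma Ymax_le (n : ℕ) (ω : ConfigD d) : Ymax d n ω ≤ n := by
  rw [Ymax_eq_sSup_range_closedCount]
  exact csSup_le' (Set.forall_mem_range.2 fun s => closedCount_le ω s n)

lemma Ymax_le_add_one {ω ω' : ConfigD d} {k : ℤ} (h : ∀ x, siteLevel x ≠ k → ω x = ω' x) (n : ℕ) :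
    Ymax d n ω ≤ Ymax d n ω' + 1 := by
  rw [Ymax_eq_sSup_range_closedCount]
  exact csSup_le' (Set.forall_mem_range.2 fun s => (closedCount_le_add_one h s n).trans
    (Nat.add_le_add_right (closedCount_le_Ymax ω' s n) 1))

lemma exists_closedCount_eq_Ymax [NeZero d] (n : ℕ) (ω : ConfigD d) :
    ∃ s : ℕ → Fin d, closedCount ω s n = Ymax d n ω := by
  rw [Ymax_eq_sSup_range_closedCount]
  exact Nat.sSup_mem (Set.range_nonempty _) (bddAbove_range_closedCount n ω)

lemma closedCount_add_Ymax_seenFrom_le (ω : ConfigD d) (s : ℕ → Fin d) (m n : ℕ) :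
    closedCount ω s m + Ymax d n (seenFrom (pathPos s m) ω) ≤ Ymax d (m + n) ω := by
  have : NeZero d := ⟨(s 0).pos.ne'⟩
  obtain ⟨t, ht⟩ := exists_closedCount_eq_Ymax n (seenFrom (pathPos s m) ω)
  set u : ℕ → Fin d := fun i => if i < m then s i else t (i - m) with hu
  have hs : ∀ i < m, u i = s i := fun i hi => if_pos hi
  have htail : (fun i => u (m + i)) = t := funext fun i => by simp [hu]
  calc closedCount ω s m + Ymax d n (seenFrom (pathPos s m) ω) = closedCount ω u (m + n) := by
        rw [closedCount_add, closedCount_congr ω hs, pathPos_congr hs, htail, ht]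
    _ ≤ Ymax d (m + n) ω := closedCount_le_Ymax ω u (m + n)

end Paths

section Law

variable {d : ℕ}

/-- The law of a configuration whose sites are i.i.d. with marginal law `ν`. -/
noncomputable abbrev iidLaw (d : ℕ) (ν : Measure Bool) : Measure (ConfigD d) :=
  Measure.infinitePi fun _ => ν

/-- The expected value of `Ymax d n` under the i.i.d. law with marginal `ν`. -/
noncomputable def meanYmax (d : ℕ) (ν : Measure Bool) (n : ℕ) : ℝ :=
  ∫ ω, (Ymax d n ω : ℝ) ∂iidLaw d ν

variable (ν : Measure Bool) [IsProbabilityMeasure ν]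

lemma measurePreserving_seenFrom (z : Fin d → ℤ) :
    MeasurePreserving (seenFrom z) (iidLaw d ν) (iidLaw d ν) :=
  measurePreserving_comp_infinitePi ν (Equiv.addRight z).toEmbedding

lemma measurable_cast_Ymax (n : ℕ) : Measurable fun ω : ConfigD d => (Ymax d n ω : ℝ) :=
  measurable_from_top.comp (measurable_Ymax n)

lemma integrable_Ymax (n : ℕ) : Integrable (fun ω : ConfigD d => (Ymax d n ω : ℝ)) (iidLaw d ν) :=
  .of_bound (measurable_cast_Ymax n).aestronglyMeasurable n <| ae_of_all _ fun ω => by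
    simpa using Ymax_le n ω

lemma Ymax_div_le_one (n : ℕ) (ω : ConfigD d) : (Ymax d n ω : ℝ) / n ≤ 1 :=
  div_le_one_of_le₀ (by exact_mod_cast Ymax_le n ω) (Nat.cast_nonneg n)

lemma meanYmax_le (n : ℕ) : meanYmax d ν n ≤ n := by
  simpa [meanYmax] using integral_mono (integrable_Ymax (d := d) ν n) (integrable_const (n : ℝ))
    fun ω => Nat.cast_le.2 (Ymax_le n ω)

lemma integral_Ymax_seenFrom (n : ℕ) (z : Fin d → ℤ) :
    ∫ ω, (Ymax d n (seenFrom z ω) : ℝ) ∂iidLaw d ν = meanYmax d ν n := by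
  have hz := measurePreserving_seenFrom ν z
  rw [meanYmax, ← integral_map hz.aemeasurable
    (f := fun ω => (Ymax d n ω : ℝ)) (measurable_cast_Ymax n).aestronglyMeasurable, hz.map_eq]

lemma hasSubgaussianMGF_Ymax (n : ℕ) :
    HasSubgaussianMGF (fun ω => Ymax d n ω - meanYmax d ν n) (n / 4) (iidLaw d ν) := by
  have h := hasSubgaussianMGF_infinitePi_of_bounded_differences (μ := fun _ => ν) siteLevel
    (fun _ => 1) (Finset.Icc 1 (n : ℤ)) (measurable_cast_Ymax (d := d) n)
    (fun ω ω' h => congrArg _ (dependsOn_Ymax_siteLevel n (by simpa using h)))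
    fun k _ ω ω' h => by exact_mod_cast Ymax_le_add_one h n
  convert h using 1
  · rfl
  · simp only [Finset.sum_const, Int.card_Icc, add_sub_cancel_right, Int.toNat_natCast,
      nsmul_eq_mul]
    ring

lemma measureReal_abs_Ymax_sub_ge_le {ε : ℝ} (hε : 0 ≤ ε) (n : ℕ) :
    (iidLaw d ν).real {ω | ε * n ≤ |Ymax d n ω - meanYmax d ν n|} ≤
      2 * Real.exp (-(2 * ε ^ 2) * n) := by
  convert measureReal_abs_ge_le_of_hasSubgaussianMGF (hasSubgaussianMGF_Ymax ν n)
    (mul_nonneg hε n.cast_nonneg) using 3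
  rcases eq_or_ne (n : ℝ) 0 with h | h
  · simp [h]
  · push_cast
    field_simp
    ring

variable [NeZero d]

lemma Ymax_add_meanYmax_le_resampledMean (m n : ℕ) (ω : ConfigD d) :
    Ymax d m ω + meanYmax d ν n ≤
      resampledMean (fun _ => ν) {x | m < siteLevel x} (fun ω => (Ymax d (m + n) ω : ℝ)) ω := by
  classical
  obtain ⟨s, hs⟩ := exists_closedCount_eq_Ymax m ω
  set z := pathPos s m
  set A : Set (Fin d → ℤ) := {x | m < siteLevel x}
  have hint : Integrable (fun ω' => (Ymax d n (seenFrom z ω') : ℝ)) (iidLaw d ν) :=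
    (measurePreserving_seenFrom ν z).integrable_comp_of_integrable (integrable_Ymax ν n)
  have hmeas : Measurable fun ω' => (Ymax d (m + n) (A.piecewise ω' ω) : ℝ) :=
    (measurable_cast_Ymax _).comp ((measurable_piecewise_prod A).comp measurable_prodMk_left)
  calc (Ymax d m ω : ℝ) + meanYmax d ν n
      = ∫ ω', (Ymax d m ω + Ymax d n (seenFrom z ω') : ℝ) ∂iidLaw d ν := by
        rw [integral_add (integrable_const _) hint, integral_Ymax_seenFrom]
        simp
    _ ≤ ∫ ω', (Ymax d (m + n) (A.piecewise ω' ω) : ℝ) ∂iidLaw d ν := by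
        refine integral_mono ((integrable_const _).add hint)
          (.of_bound hmeas.aestronglyMeasurable (m + n : ℕ) (ae_of_all _ fun ω' => by
            rw [Real.norm_natCast]
            exact Nat.cast_le.2 (Ymax_le (m + n) _))) fun ω' => ?_
        have hpast : closedCount (A.piecewise ω' ω) s m = Ymax d m ω := by
          rw [← hs]
          refine dependsOn_closedCount (S := Aᶜ) (fun i hi => ?_)
            fun x hx => Set.piecewise_eq_of_notMem _ _ _ hx
          simpa [A, siteLevel_pathPos] using (Finset.mem_Icc.1 hi).2
        have hfuture : Ymax d n (seenFrom z (A.piecewise ω' ω)) = Ymax d n (seenFrom z ω') := by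
          refine dependsOn_Ymax_siteLevel n fun x hx => Set.piecewise_eq_of_mem A _ _ ?_
          have hlevel : 0 < siteLevel x := hx.1
          simpa [A, z, siteLevel_add, siteLevel_pathPos] using hlevel
        rw [← hpast, ← hfuture]
        exact_mod_cast closedCount_add_Ymax_seenFrom_le (A.piecewise ω' ω) s m n
    _ = resampledMean (fun _ => ν) A (fun ω => (Ymax d (m + n) ω : ℝ)) ω := by
        unfold resampledMean
        congr!

lemma meanYmax_add_le (m n : ℕ) : meanYmax d ν m + meanYmax d ν n ≤ meanYmax d ν (m + n) := by
  calc meanYmax d ν m + meanYmax d ν n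
      = ∫ ω, (Ymax d m ω + meanYmax d ν n) ∂iidLaw d ν := by
        rw [integral_add (integrable_Ymax ν m) (integrable_const _)]
        simp [meanYmax]
    _ ≤ ∫ ω, resampledMean (fun _ => ν) {x | m < siteLevel x} (fun ω => (Ymax d (m + n) ω : ℝ)) ω
          ∂iidLaw d ν :=
        integral_mono ((integrable_Ymax ν m).add (integrable_const _))
          (integrable_resampledMean (integrable_Ymax ν (m + n)) _)
          (Ymax_add_meanYmax_le_resampledMean ν m n)
    _ = meanYmax d ν (m + n) := integral_resampledMean (integrable_Ymax ν (m + n)) _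

lemma exists_tendsto_meanYmax_div :
    ∃ γ, Tendsto (fun n : ℕ => meanYmax d ν n / n) atTop (nhds γ) := by
  have hsub : Subadditive fun n => -meanYmax d ν n := fun m n => by
    linarith [meanYmax_add_le ν (d := d) m n]
  have hbdd : BddBelow (Set.range fun n : ℕ => -meanYmax d ν n / n) := by
    refine ⟨-1, Set.forall_mem_range.2 fun n => ?_⟩
    rw [neg_div, neg_le_neg_iff]
    exact div_le_one_of_le₀ (meanYmax_le ν n) n.cast_nonneg
  exact ⟨-hsub.lim, by simpa [neg_div] using (hsub.tendsto_lim hbdd).neg⟩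

end Law

section Concentration

variable {d : ℕ} (ν : Measure Bool) [IsProbabilityMeasure ν]

/-- The sites with all coordinates in `[0, n)`. -/
noncomputable def siteBox (d n : ℕ) : Finset (Fin d → ℤ) :=
  Fintype.piFinset fun _ => Finset.Ico 0 (n : ℤ)

/-- Uniform typicality of `ω` at density `γ`: from every site of the box of side `n ^ 2`, the
maximal fraction of closed sites on oriented paths of length `n` is close to `γ` for large `n`. -/
def IsTypical (γ : ℝ) (ω : ConfigD d) : Prop :=
  ∀ ε > 0, ∀ᶠ n : ℕ in atTop, ∀ z ∈ siteBox d (n ^ 2), |(Ymax d n (seenFrom z ω) : ℝ) / n - γ| < ε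

lemma card_siteBox (d n : ℕ) : (siteBox d n).card = n ^ d := by
  simp [siteBox]

lemma measureReal_exists_siteBox_le {ε : ℝ} (hε : 0 ≤ ε) (n : ℕ) :
    (iidLaw d ν).real {ω | ∃ z ∈ siteBox d (n ^ 2),
      ε * n ≤ |Ymax d n (seenFrom z ω) - meanYmax d ν n|} ≤
      2 * ((n : ℝ) ^ (2 * d) * Real.exp (-(2 * ε ^ 2) * n)) := by
  set A := {ω : ConfigD d | ε * n ≤ |Ymax d n ω - meanYmax d ν n|} with hA
  have hmeas : MeasurableSet A :=
    measurableSet_le measurable_const ((measurable_cast_Ymax n).sub_const _).norm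
  have hunion : {ω : ConfigD d | ∃ z ∈ siteBox d (n ^ 2),
      ε * n ≤ |Ymax d n (seenFrom z ω) - meanYmax d ν n|} =
      ⋃ z ∈ siteBox d (n ^ 2), seenFrom z ⁻¹' A := by
    ext ω
    simp [hA]
  calc (iidLaw d ν).real _ ≤ ∑ z ∈ siteBox d (n ^ 2), (iidLaw d ν).real (seenFrom z ⁻¹' A) := by
        rw [hunion]
        exact measureReal_biUnion_finset_le _ _
    _ ≤ ∑ _z ∈ siteBox d (n ^ 2), 2 * Real.exp (-(2 * ε ^ 2) * n) :=
        Finset.sum_le_sum fun z _ => by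
          rw [(measurePreserving_seenFrom ν z).measureReal_preimage hmeas.nullMeasurableSet]
          exact measureReal_abs_Ymax_sub_ge_le ν hε n
    _ = 2 * ((n : ℝ) ^ (2 * d) * Real.exp (-(2 * ε ^ 2) * n)) := by
        rw [Finset.sum_const, card_siteBox, nsmul_eq_mul]
        push_cast
        ring

lemma ae_eventually_forall_siteBox_abs_sub_lt {ε : ℝ} (hε : 0 < ε) :
    ∀ᵐ ω ∂iidLaw d ν, ∀ᶠ n : ℕ in atTop, ∀ z ∈ siteBox d (n ^ 2),
      |Ymax d n (seenFrom z ω) - meanYmax d ν n| < ε * n := by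
  have hsum := (Real.summable_pow_mul_exp_neg_nat_mul (2 * d)
    (show 0 < 2 * ε ^ 2 by positivity)).mul_left 2
  have hfinite : ∑' n : ℕ, iidLaw d ν {ω | ∃ z ∈ siteBox d (n ^ 2),
      ε * n ≤ |Ymax d n (seenFrom z ω) - meanYmax d ν n|} ≠ ∞ := by
    refine ne_top_of_le_ne_top hsum.tsum_ofReal_ne_top (ENNReal.tsum_le_tsum fun n => ?_)
    rw [← ofReal_measureReal]
    exact ofReal_le_ofReal (measureReal_exists_siteBox_le ν hε.le n)
  filter_upwards [ae_eventually_notMem hfinite] with ω hω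
  filter_upwards [hω] with n hn z hz
  exact lt_of_not_ge fun h => hn ⟨z, hz, h⟩

lemma exists_ae_isTypical [NeZero d] : ∃ γ, ∀ᵐ ω ∂iidLaw d ν, IsTypical γ ω := by
  obtain ⟨γ, hγ⟩ := exists_tendsto_meanYmax_div (d := d) ν
  refine ⟨γ, ?_⟩
  have hae : ∀ᵐ ω ∂iidLaw d ν, ∀ i : ℕ, ∀ᶠ n : ℕ in atTop, ∀ z ∈ siteBox d (n ^ 2),
      |Ymax d n (seenFrom z ω) - meanYmax d ν n| < 1 / ((i : ℝ) + 1) * n :=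
    ae_all_iff.2 fun i => ae_eventually_forall_siteBox_abs_sub_lt ν Nat.one_div_pos_of_nat
  filter_upwards [hae] with ω hω ε hε
  obtain ⟨i, hi⟩ := exists_nat_one_div_lt (half_pos hε)
  filter_upwards [hω i, Metric.tendsto_nhds.1 hγ _ (half_pos hε), eventually_gt_atTop 0]
    with n hfluct hmean hn z hz
  have hn' : (0 : ℝ) < n := Nat.cast_pos.2 hn
  calc |(Ymax d n (seenFrom z ω) : ℝ) / n - γ|
      ≤ |(Ymax d n (seenFrom z ω) : ℝ) / n - meanYmax d ν n / n| + |meanYmax d ν n / n - γ| :=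
        abs_sub_le _ _ _
    _ < ε / 2 + ε / 2 := by
        refine add_lt_add ?_ hmean
        rw [← sub_div, abs_div, Nat.abs_cast, div_lt_iff₀ hn']
        exact (hfluct z hz).trans (by gcongr)
    _ = ε := add_halves ε

end Concentration

section Percolation

variable {d : ℕ} {ω : ConfigD d} {γ ρ : ℝ}

lemma closedCount_div_mem_Icc (ω : ConfigD d) (s : ℕ → Fin d) (n : ℕ) :
    (closedCount ω s n : ℝ) / n ∈ Set.Icc (0 : ℝ) 1 :=
  ⟨by positivity, div_le_one_of_le₀ (by exact_mod_cast closedCount_le ω s n) n.cast_nonneg⟩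

lemma mem_RhoPerc_iff :
    ω ∈ RhoPerc ρ ↔ ∃ s : ℕ → Fin d,
      ρ ≤ atTop.liminf fun n : ℕ => (closedCount ω s n : ℝ) / n := by
  constructor
  · rintro ⟨x, hx, h⟩
    obtain ⟨s, rfl⟩ := hx.exists_eq_pathPos
    exact ⟨s, by simpa only [sum_Icc_eq_closedCount] using h⟩
  · rintro ⟨s, h⟩
    exact ⟨pathPos s, isOrientedPath_pathPos s, by simpa only [sum_Icc_eq_closedCount] using h⟩

lemma le_of_mem_RhoPerc_of_tendsto (hω : ω ∈ RhoPerc ρ)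
    (h : Tendsto (fun n : ℕ => (Ymax d n ω : ℝ) / n) atTop (nhds γ)) : ρ ≤ γ := by
  obtain ⟨s, hs⟩ := mem_RhoPerc_iff.1 hω
  rw [← h.liminf_eq]
  refine hs.trans (liminf_le_liminf (Eventually.of_forall fun n => ?_) ?_ ?_)
  · gcongr
    exact closedCount_le_Ymax ω s n
  · exact isBoundedUnder_of ⟨0, fun n => (closedCount_div_mem_Icc ω s n).1⟩
  · exact h.isBoundedUnder_le.isCoboundedUnder_ge

/-- The `k`-th block occupies the times in `[k ^ 2, (k + 1) ^ 2)`, so that time `n` belongs to block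
`n.sqrt`. -/
lemma exists_steps_eq_block (b : ℕ → (Fin d → ℤ) → ℕ → Fin d) :
    ∃ s : ℕ → Fin d, ∀ k, ∀ i < 2 * k + 1, s (k ^ 2 + i) = b k (pathPos s (k ^ 2)) i := by
  let z : ℕ → Fin d → ℤ := Nat.rec 0 fun k z => pathPos (b k z) (2 * k + 1) + z
  let s : ℕ → Fin d := fun n => b n.sqrt (z n.sqrt) (n - n.sqrt ^ 2)
  have hs : ∀ k, ∀ i < 2 * k + 1, s (k ^ 2 + i) = b k (z k) i := fun k i hi => by
    simp only [s, Nat.sqrt_add_eq' k (show i ≤ k + k by omega), Nat.add_sub_cancel_left]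
  have hz : ∀ k, pathPos s (k ^ 2) = z k := fun k => by
    induction k with
    | zero => simp [pathPos, z]
    | succ k ih =>
      rw [show (k + 1) ^ 2 = k ^ 2 + (2 * k + 1) by ring, pathPos_add, ih, pathPos_congr (hs k)]
  exact ⟨s, fun k i hi => by rw [hs k i hi, hz]⟩

lemma exists_closedCount_block_eq [NeZero d] (ω : ConfigD d) :
    ∃ s : ℕ → Fin d, ∀ k, closedCount ω s ((k + 1) ^ 2) =
      closedCount ω s (k ^ 2) + Ymax d (2 * k + 1) (seenFrom (pathPos s (k ^ 2)) ω) := by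
  choose b hb using fun k z => exists_closedCount_eq_Ymax (2 * k + 1) (seenFrom z ω)
  obtain ⟨s, hs⟩ := exists_steps_eq_block b
  refine ⟨s, fun k => ?_⟩
  rw [show (k + 1) ^ 2 = k ^ 2 + (2 * k + 1) by ring, closedCount_add,
    closedCount_congr _ (hs k), hb]

lemma pathPos_mem_siteBox (s : ℕ → Fin d) {m n : ℕ} (h : m < n) : pathPos s m ∈ siteBox d n := by
  have hs := pathPos_mem_Icc s m
  simp only [siteBox, Fintype.mem_piFinset, Finset.mem_Ico]
  exact fun j => ⟨hs.1 j, (hs.2 j).trans_lt (Nat.cast_lt.2 h)⟩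

namespace IsTypical

lemma tendsto_Ymax_div (h : IsTypical γ ω) :
    Tendsto (fun n : ℕ => (Ymax d n ω : ℝ) / n) atTop (nhds γ) := by
  refine Metric.tendsto_nhds.2 fun ε hε => ?_
  filter_upwards [h ε hε, eventually_gt_atTop 0] with n hn hpos
  have hzero : (0 : Fin d → ℤ) ∈ siteBox d (n ^ 2) := by simp [siteBox, hpos]
  simpa [seenFrom, Real.dist_eq] using hn 0 hzero

lemma exists_mul_le_closedCount_sq [NeZero d] (h : IsTypical γ ω) (hρ : ρ < γ) :
    ∃ s : ℕ → Fin d, ∃ K : ℕ, ∀ k, K ≤ k →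
      ρ * ((k : ℝ) ^ 2 - (K : ℝ) ^ 2) ≤ closedCount ω s (k ^ 2) := by
  obtain ⟨s, hs⟩ := exists_closedCount_block_eq ω
  obtain ⟨K, hK⟩ := eventually_atTop.1 (h (γ - ρ) (sub_pos.2 hρ))
  refine ⟨s, K, fun k hk => ?_⟩
  induction k, hk using Nat.le_induction with
  | base => simp
  | succ k hk ih =>
    have hblock := hK (2 * k + 1) (by omega) _
      (pathPos_mem_siteBox s (show k ^ 2 < (2 * k + 1) ^ 2 by gcongr; omega))
    have hlen : (0 : ℝ) < (2 * k + 1 : ℕ) := by positivity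
    have hY : ρ * (2 * k + 1 : ℕ) ≤ Ymax d (2 * k + 1) (seenFrom (pathPos s (k ^ 2)) ω) :=
      ((lt_div_iff₀ hlen).1 (by linarith [(abs_lt.1 hblock).1])).le
    rw [hs]
    push_cast at hY ⊢
    linarith

lemma mem_RhoPerc [NeZero d] (h : IsTypical γ ω) (hρ : ρ < γ) : ω ∈ RhoPerc ρ := by
  obtain ⟨s, K, hs⟩ := h.exists_mul_le_closedCount_sq hρ
  have hlim : Tendsto (fun n : ℕ => ρ * ((n.sqrt : ℝ) ^ 2 / n - (K : ℝ) ^ 2 / n)) atTop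
      (nhds ρ) := by
    simpa using (tendsto_natSqrt_sq_div.sub
      (tendsto_natCast_atTop_atTop.const_div_atTop ((K : ℝ) ^ 2))).const_mul ρ
  refine mem_RhoPerc_iff.2 ⟨s, ?_⟩
  conv_lhs => rw [← hlim.liminf_eq]
  refine liminf_le_liminf ?_ hlim.isBoundedUnder_ge
    (isBoundedUnder_of ⟨1, fun n => (closedCount_div_mem_Icc ω s n).2⟩).isCoboundedUnder_ge
  filter_upwards [eventually_ge_atTop (K ^ 2)] with n hn
  calc ρ * ((n.sqrt : ℝ) ^ 2 / n - (K : ℝ) ^ 2 / n)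
      = ρ * ((n.sqrt : ℝ) ^ 2 - (K : ℝ) ^ 2) / n := by rw [← sub_div, mul_div_assoc]
    _ ≤ (closedCount ω s (n.sqrt ^ 2) : ℝ) / n := by
        gcongr
        exact hs n.sqrt (Nat.le_sqrt'.2 hn)
    _ ≤ (closedCount ω s n : ℝ) / n := by
        gcongr
        exact closedCount_mono ω s (Nat.sqrt_le' n)

end IsTypical

end Percolation

section AlmostSure

variable {d : ℕ} {μ : Measure (ConfigD d)} {γ : ℝ}

lemma le_of_measure_RhoPerc_eq_one
    (h : ∀ᵐ ω ∂μ, Tendsto (fun n : ℕ => (Ymax d n ω : ℝ) / n) atTop (nhds γ)) {ρ : ℝ}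
    (hρ : μ (RhoPerc ρ) = 1) : ρ ≤ γ := by
  have hmeet : ∃ᵐ ω ∂μ, ω ∈ RhoPerc (d := d) ρ :=
    frequently_ae_mem_iff.2 (hρ.symm ▸ one_ne_zero)
  obtain ⟨ω, hmem, hω⟩ := (hmeet.and_eventually h).exists
  exact le_of_mem_RhoPerc_of_tendsto hmem hω

lemma tendsto_integral_abs_Ymax_div_sub [IsFiniteMeasure μ]
    (h : ∀ᵐ ω ∂μ, Tendsto (fun n : ℕ => (Ymax d n ω : ℝ) / n) atTop (nhds γ)) :
    Tendsto (fun n : ℕ => ∫ ω, |(Ymax d n ω : ℝ) / n - γ| ∂μ) atTop (nhds 0) := by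
  have hlim := tendsto_integral_of_dominated_convergence (μ := μ) (f := fun _ => 0)
    (F := fun n ω => |(Ymax d n ω : ℝ) / n - γ|) (fun _ => 1 + |γ|)
    (fun n => (((measurable_cast_Ymax n).div_const _).sub_const γ).norm.aestronglyMeasurable)
    (integrable_const _) (fun n => ae_of_all _ fun ω => ?_) ?_
  · simpa using hlim
  · rw [Real.norm_eq_abs, abs_abs]
    refine (abs_sub _ _).trans (add_le_add ?_ le_rfl)
    rw [abs_of_nonneg (by positivity)]
    exact Ymax_div_le_one n ω
  · filter_upwards [h] with ω hω
    simpa using (hω.sub_const γ).abs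

variable [NeZero d] [IsProbabilityMeasure μ]

lemma measure_RhoPerc_eq_one_of_lt (h : ∀ᵐ ω ∂μ, IsTypical γ ω) {ρ : ℝ} (hρ : ρ < γ) :
    μ (RhoPerc ρ) = 1 := by
  have hmem : ∀ᵐ ω ∂μ, ω ∈ RhoPerc (d := d) ρ := h.mono fun ω hω => hω.mem_RhoPerc hρ
  exact (measure_congr (eventuallyEq_univ.2 hmem)).trans measure_univ

lemma sSup_measure_RhoPerc_eq_one (h : ∀ᵐ ω ∂μ, IsTypical γ ω) :
    sSup {ρ : ℝ | μ (RhoPerc ρ) = 1} = γ := by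
  refine csSup_eq_of_forall_le_of_forall_lt_exists_gt
    ⟨γ - 1, measure_RhoPerc_eq_one_of_lt h (sub_one_lt γ)⟩
    (fun ρ hρ => le_of_measure_RhoPerc_eq_one (h.mono fun _ hω => hω.tendsto_Ymax_div) hρ)
    fun w hw => ?_
  obtain ⟨ρ, hwρ, hρ⟩ := exists_between hw
  exact ⟨ρ, measure_RhoPerc_eq_one_of_lt h hρ, hwρ⟩

end AlmostSure

/-- Under `P_{1−q}`, the normalized maximal number of closed sites on
oriented paths, `Y_{0,n}/n`, converges almost surely and in `L¹` to a deterministic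
constant `γ(q)`, and `γ(q) = ρ_c(q)`. -/
theorem Ymax_limit_eq_rhoC
    {d : ℕ} (hd : 1 ≤ d) (q : ℝ) (hq : q ∈ Set.Ioo (0 : ℝ) 1)
    (P : ℝ → Measure (ConfigD d)) (hP : ∀ p ∈ Set.Icc (0 : ℝ) 1, IsBernoulli p (P p)) :
    ∃ γ : ℝ,
      (∀ᵐ ω ∂(P (1 - q)),
        Tendsto (fun n : ℕ => (Ymax d n ω : ℝ) / n) atTop (nhds γ)) ∧
      Tendsto (fun n : ℕ => ∫ ω, |(Ymax d n ω : ℝ) / n - γ| ∂(P (1 - q))) atTop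
        (nhds 0) ∧
      γ = rhoC P q := by
  have : NeZero d := ⟨by omega⟩
  obtain ⟨ν, hν, hPν⟩ :=
    (hP (1 - q) ⟨by linarith [hq.2], by linarith [hq.1]⟩).exists_eq_infinitePi
  obtain ⟨γ, hγ⟩ := exists_ae_isTypical (d := d) ν
  have hlim := hγ.mono fun _ hω => hω.tendsto_Ymax_div
  rw [rhoC, hPν]
  exact ⟨γ, hlim, tendsto_integral_abs_Ymax_div_sub hlim, (sSup_measure_RhoPerc_eq_one hγ).symm⟩
end
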